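/- Let n > 2. Assume f satisfies (f1), (f2), (f5): s ↦ s·f'(s)/f(s) is nonincreasing on [β,∞), and (f6): β·f'(β)/f(β) ≤ n/(n−2). Then the problem u''(r) + ((n−1)/r)u'(r) + f(u(r)) = 0 on (0,∞), u'(0) = 0, lim_{r→∞} u(r) = 0, has at most one solution u with u(0) > 0 having exactly one sign change in (0,∞); i.e., if u₁ and u₂ are two such solutions, then u₁(0) = u₂(0) and u₁ ≡ u₂. -/

import Mathlib

open Set Filter MeasureTheory

namespace Paper

noncomputable section

/-- `F s = ∫₀ˢ f t dt`. -/
def Fint (f : ℝ → ℝ) (s : ℝ) : ℝ := ∫ t in (0:ℝ)..s, f t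

/-- Hypothesis (f1): `f` is odd, `f 0 = 0`, there are `β > b > 0` with `f > 0` on `(b,∞)`,
`f ≤ 0`, `f ≢ 0` on `[0,b]`, and `F β = 0`. -/
def Hf1 (f : ℝ → ℝ) (b β : ℝ) : Prop :=
  (∀ s, f (-s) = -f s) ∧ f 0 = 0 ∧ 0 < b ∧ b < β ∧
    (∀ s, b < s → 0 < f s) ∧ (∀ s ∈ Icc (0:ℝ) b, f s ≤ 0) ∧
    (∃ s ∈ Icc (0:ℝ) b, f s ≠ 0) ∧ Fint f β = 0

/-- Hypothesis (f2): `f` continuous on `[0,∞)`, C¹ on `(0,∞)`, `f' ∈ L¹(0,1)`. -/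
def Hf2 (f : ℝ → ℝ) : Prop :=
  ContinuousOn f (Ici 0) ∧ (∀ s : ℝ, 0 < s → DifferentiableAt ℝ f s) ∧
    ContinuousOn (deriv f) (Ioi 0) ∧ IntegrableOn (deriv f) (Ioo 0 1)

/-- Hypothesis (f3): `f s ≥ f' s * (s - β)` for `s ≥ β`. -/
def Hf3 (f : ℝ → ℝ) (β : ℝ) : Prop := ∀ s, β ≤ s → deriv f s * (s - β) ≤ f s

/-- Hypothesis (f4): `(F/f)' s ≥ (n-2)/(2n)` for `s > β`. -/
def Hf4 (n : ℕ) (f : ℝ → ℝ) (β : ℝ) : Prop :=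
  ∀ s, β < s → ((n : ℝ) - 2) / (2 * (n : ℝ)) ≤ deriv (fun t => Fint f t / f t) s

/-- Hypothesis (f4'): `(F/f)' s ≥ (n-2)/2` for `s > β`. -/
def Hf4' (n : ℕ) (f : ℝ → ℝ) (β : ℝ) : Prop :=
  ∀ s, β < s → ((n : ℝ) - 2) / 2 ≤ deriv (fun t => Fint f t / f t) s

/-- Hypothesis (f5): `s ↦ s f' s / f s` is nonincreasing on `[β,∞)`. -/
def Hf5 (f : ℝ → ℝ) (β : ℝ) : Prop := AntitoneOn (fun s => s * deriv f s / f s) (Ici β)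

/-- Hypothesis (f6): `β f' β / f β ≤ n/(n-2)`. -/
def Hf6 (n : ℕ) (f : ℝ → ℝ) (β : ℝ) : Prop := β * deriv f β / f β ≤ (n : ℝ) / ((n : ℝ) - 2)

/-- Hypothesis (f1'): `f 0 = 0` and `s f s > 0` for `s > 0`. -/
def Hf1' (f : ℝ → ℝ) : Prop := f 0 = 0 ∧ ∀ s : ℝ, 0 < s → 0 < s * f s

/-- Hypothesis (f3'): `f s ≥ s f' s` for `s > 0`, with strict inequality at points
arbitrarily close to `0`. -/
def Hf3' (f : ℝ → ℝ) : Prop :=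
  (∀ s : ℝ, 0 < s → s * deriv f s ≤ f s) ∧
    ∀ ε : ℝ, 0 < ε → ∃ s ∈ Ioo (0:ℝ) ε, s * deriv f s < f s

/-- `v` is a C² solution of (E) on `(0,∞)`, continuous on `[0,∞)`,
with `v 0 = α` and `v' 0 = 0`. -/
def IVPsol (n : ℕ) (f : ℝ → ℝ) (α : ℝ) (v : ℝ → ℝ) : Prop :=
  v 0 = α ∧ deriv v 0 = 0 ∧ ContinuousOn v (Ici 0) ∧
    (∀ r : ℝ, 0 < r → DifferentiableAt ℝ v r ∧ DifferentiableAt ℝ (deriv v) r) ∧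
    (∀ r : ℝ, 0 < r → deriv (deriv v) r + ((n : ℝ) - 1) / r * deriv v r + f (v r) = 0)

/-- The family `α ↦ u α` of solutions of the IVP, with `u α r` and `u' α r`
continuous in `(α, r)`. -/
def Family (n : ℕ) (f : ℝ → ℝ) (u : ℝ → ℝ → ℝ) : Prop :=
  (∀ α : ℝ, 0 < α → IVPsol n f α (u α)) ∧
    ContinuousOn (fun p : ℝ × ℝ => u p.1 p.2) (Ioi 0 ×ˢ Ici 0) ∧
    ContinuousOn (fun p : ℝ × ℝ => deriv (u p.1) p.2) (Ioi 0 ×ˢ Ici 0)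

/-- The set whose supremum is `Z_k α`, given `T = T_{k-1} α`. -/
def ZsetAux (u : ℝ → ℝ → ℝ) (k : ℕ) (T α : ℝ) : Set ℝ :=
  {r | T < r ∧ ∀ s ∈ Ioo T r, (-1 : ℝ) ^ k * u α s < 0 ∧ 0 < (-1 : ℝ) ^ k * deriv (u α) s}

/-- The pair `(Z_k, T_k)`, with `T₀ = 0`;
`Z_k α = sup {r > T_{k-1} α | (-1)^k u < 0, (-1)^k u' > 0 on (T_{k-1} α, r)}` and
`T_k α = inf {r > Z_k α | u'(r, α) = 0}`. -/
def ZT (u : ℝ → ℝ → ℝ) : ℕ → (ℝ → ℝ) × (ℝ → ℝ)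
  | 0 => (fun _ => 0, fun _ => 0)
  | k + 1 =>
    let Z : ℝ → ℝ := fun α => sSup (ZsetAux u (k + 1) ((ZT u k).2 α) α)
    (Z, fun α => sInf {r | Z α < r ∧ deriv (u α) r = 0})

/-- `Z_k α` (as a real number; the genuine value when the defining set is bounded above). -/
def Zk (u : ℝ → ℝ → ℝ) (k : ℕ) (α : ℝ) : ℝ := (ZT u k).1 α

/-- `T_k α`, with `T₀ = 0`. -/
def Tk (u : ℝ → ℝ → ℝ) (k : ℕ) (α : ℝ) : ℝ := (ZT u k).2 α

/-- The defining set of `Z_k α`; `Z_k α = ∞` iff this set is unbounded above. -/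
def ZsetK (u : ℝ → ℝ → ℝ) (k : ℕ) (α : ℝ) : Set ℝ := ZsetAux u k (Tk u (k - 1) α) α

open Classical in
/-- The value of `u (·, α)` at `Z_k α`, as a limit `r → ∞` when `Z_k α = ∞`. -/
def uAtZ (u : ℝ → ℝ → ℝ) (k : ℕ) (α : ℝ) : ℝ :=
  if BddAbove (ZsetK u k α) then u α (Zk u k α) else limUnder atTop (u α)

open Classical in
/-- The value of `u' (·, α)` at `Z_k α`, as a limit `r → ∞` when `Z_k α = ∞`. -/
def duAtZ (u : ℝ → ℝ → ℝ) (k : ℕ) (α : ℝ) : ℝ :=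
  if BddAbove (ZsetK u k α) then deriv (u α) (Zk u k α) else limUnder atTop (deriv (u α))

open Classical in
/-- `Z_k α` as an extended real number. -/
def ZkE (u : ℝ → ℝ → ℝ) (k : ℕ) (α : ℝ) : WithTop ℝ :=
  if BddAbove (ZsetK u k α) then (Zk u k α : WithTop ℝ) else ⊤

/-- Membership in `F̃_k` (for `α ∈ N_{k-1}`): `(-1)^k u' (r, α) < 0` for all `r > Z_{k-1} α`. -/
def Ftil (u : ℝ → ℝ → ℝ) (k : ℕ) (α : ℝ) : Prop :=
  ∀ r, Zk u (k - 1) α < r → (-1 : ℝ) ^ k * deriv (u α) r < 0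

/-- The sets `N_k` (with `N₀ := (0,∞)`). -/
def Nk (u : ℝ → ℝ → ℝ) : ℕ → Set ℝ
  | 0 => Ioi 0
  | 1 => {α | 0 < α ∧ uAtZ u 1 α = 0 ∧ duAtZ u 1 α < 0}
  | k + 2 => {α | α ∈ Nk u (k + 1) ∧ ¬Ftil u (k + 2) α ∧ uAtZ u (k + 2) α = 0 ∧
      0 < (-1 : ℝ) ^ (k + 2) * duAtZ u (k + 2) α}

/-- The sets `G_k`. -/
def Gk (u : ℝ → ℝ → ℝ) : ℕ → Set ℝ
  | 0 => ∅
  | 1 => {α | 0 < α ∧ uAtZ u 1 α = 0 ∧ duAtZ u 1 α = 0}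
  | k + 2 => {α | α ∈ Nk u (k + 1) ∧ ¬Ftil u (k + 2) α ∧ uAtZ u (k + 2) α = 0 ∧
      duAtZ u (k + 2) α = 0}

/-- The set `F̃_k` (for `k ≥ 2`). -/
def FtilSet (u : ℝ → ℝ → ℝ) (k : ℕ) : Set ℝ := {α | α ∈ Nk u (k - 1) ∧ Ftil u k α}

/-- The set `F_k` (for `k ≥ 2`). -/
def Fk (u : ℝ → ℝ → ℝ) (k : ℕ) : Set ℝ :=
  {α | α ∈ Nk u (k - 1) ∧ ¬Ftil u k α ∧ (-1 : ℝ) ^ k * uAtZ u k α < 0}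

/-- The sets `P_k`. -/
def Pk (u : ℝ → ℝ → ℝ) : ℕ → Set ℝ
  | 0 => ∅
  | 1 => {α | 0 < α ∧ 0 < uAtZ u 1 α}
  | k + 2 => FtilSet u (k + 2) ∪ Fk u (k + 2)

/-- The set of extremal points (zeros of `u' (·, α)`) in `[0, A]`. -/
def ExtSet (u : ℝ → ℝ → ℝ) (α A : ℝ) : Set ℝ := {r | r ∈ Icc 0 A ∧ deriv (u α) r = 0}

/-- The conclusion of the δ₁-lemma (Lemma 4.1): every solution with initial value in
`(α*-δ₁, α*+δ₁)` has exactly `k` extremal points in `[0, T_{k-1}(α*) + a]`, with minimum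
values `< -β` and maximum values `> β`; moreover any two such solutions intersect between
any two of their consecutive extremal points, and in `(T_{k-1}(α*), Z_k(α*))`. -/
def DeltaOneLemma (f : ℝ → ℝ) (β : ℝ) (u : ℝ → ℝ → ℝ) (k : ℕ) (αs a δ₁ : ℝ) : Prop :=
  0 < a ∧ 0 < δ₁ ∧
    (∀ α ∈ Ioo (αs - δ₁) (αs + δ₁),
      (ExtSet u α (Tk u (k - 1) αs + a)).Finite ∧
        (ExtSet u α (Tk u (k - 1) αs + a)).ncard = k ∧
        ∀ r ∈ ExtSet u α (Tk u (k - 1) αs + a),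
          (IsLocalMin (u α) r → u α r < -β) ∧ (IsLocalMax (u α) r → β < u α r)) ∧
    ∀ α₁ ∈ Ioo (αs - δ₁) (αs + δ₁), ∀ α₂ ∈ Ioo (αs - δ₁) (αs + δ₁), α₁ < α₂ →
      (∀ i : ℕ, 1 ≤ i → i ≤ k - 1 →
        ∃ t, max (Tk u (i - 1) α₁) (Tk u (i - 1) α₂) < t ∧
          t < min (Tk u i α₁) (Tk u i α₂) ∧ u α₁ t = u α₂ t) ∧
      ∃ t, Tk u (k - 1) αs < t ∧ (BddAbove (ZsetK u k αs) → t < Zk u k αs) ∧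
        u α₁ t = u α₂ t

/-- `ρ` is the inverse of the monotone branch of `v` on `[t₁, t₂]`, whose set of values
is `[m, M]`. -/
def InvBranch (v ρ : ℝ → ℝ) (t₁ t₂ m M : ℝ) : Prop :=
  (∀ s ∈ Icc m M, ρ s ∈ Icc t₁ t₂ ∧ v (ρ s) = s) ∧
    ∀ s ∈ Ioo m M, HasDerivAt ρ (1 / deriv v (ρ s)) s

/-- `ρ` inverts a decreasing branch of `v` over the value interval `[m, M]`, along which
`(v')² + 2F > 0`. -/
def DecBranchInv (f : ℝ → ℝ) (v ρ : ℝ → ℝ) (m M : ℝ) : Prop :=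
  ∀ s ∈ Icc m M, 0 ≤ ρ s ∧ v (ρ s) = s ∧ deriv v (ρ s) < 0 ∧
    HasDerivAt ρ (1 / deriv v (ρ s)) s ∧ 0 < (deriv v (ρ s)) ^ 2 + 2 * Fint f s

/-- The functional `Q(s) = -4 (F/f)(s) r/r' - r²/(r')² - 2 r² F(s) + H(s)` computed along
the branch inverse `ρ`. -/
def Qfun (f H ρ : ℝ → ℝ) (s : ℝ) : ℝ :=
  -4 * (Fint f s / f s) * (ρ s / deriv ρ s) - (ρ s) ^ 2 / (deriv ρ s) ^ 2 -
    2 * (ρ s) ^ 2 * Fint f s + H s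

/-- The functional `P(s) = -2n (F/f)(s) r^{n-1}/r' - r^n/(r')² - 2 r^n F(s)`. -/
def Pfun (n : ℕ) (f : ℝ → ℝ) (ρ : ℝ → ℝ) (s : ℝ) : ℝ :=
  -(2 * (n : ℝ)) * (Fint f s / f s) * (ρ s ^ (n - 1) / deriv ρ s) -
    ρ s ^ n / (deriv ρ s) ^ 2 - 2 * ρ s ^ n * Fint f s

/-- The functional `W(s) = r(s) √((u'(r(s)))² + 2 F(s))`. -/
def Wfun (f v ρ : ℝ → ℝ) (s : ℝ) : ℝ :=
  ρ s * Real.sqrt ((deriv v (ρ s)) ^ 2 + 2 * Fint f s)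

/-- The functional `W̃(s) = r(s)^{n-1} √((u'(r(s)))² + 2 F(s))`. -/
def Wtil (n : ℕ) (f : ℝ → ℝ) (v ρ : ℝ → ℝ) (s : ℝ) : ℝ :=
  ρ s ^ (n - 1) * Real.sqrt ((deriv v (ρ s)) ^ 2 + 2 * Fint f s)

/-- `v` changes sign at `z ∈ (0,∞)`: `v z = 0` and `v` takes both signs in every
neighborhood of `z` (within `(0,∞)`). -/
def SignChange (v : ℝ → ℝ) (z : ℝ) : Prop :=
  v z = 0 ∧ ∀ ε : ℝ, 0 < ε →
    (∃ x ∈ Ioo (z - ε) (z + ε) ∩ Ioi 0, 0 < v x) ∧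
    (∃ x ∈ Ioo (z - ε) (z + ε) ∩ Ioi 0, v x < 0)

/-- `v` has exactly `m` sign changes in `(0,∞)`. -/
def ExactSignChanges (v : ℝ → ℝ) (m : ℕ) : Prop :=
  {z | 0 < z ∧ SignChange v z}.Finite ∧ {z | 0 < z ∧ SignChange v z}.ncard = m

/-- Bound state: a C² solution of (E) on `(0,∞)` with `v' 0 = 0` and `v r → 0` as `r → ∞`. -/
def BoundState (n : ℕ) (f : ℝ → ℝ) (v : ℝ → ℝ) : Prop :=
  ContinuousOn v (Ici 0) ∧
    (∀ r : ℝ, 0 < r → DifferentiableAt ℝ v r ∧ DifferentiableAt ℝ (deriv v) r) ∧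
    (∀ r : ℝ, 0 < r → deriv (deriv v) r + ((n : ℝ) - 1) / r * deriv v r + f (v r) = 0) ∧
    deriv v 0 = 0 ∧ Tendsto v atTop (nhds 0)

/-- Solution of the Dirichlet problem on the ball of radius `R`. -/
def DirichletSol (n : ℕ) (f : ℝ → ℝ) (R : ℝ) (v : ℝ → ℝ) : Prop :=
  ContinuousOn v (Icc 0 R) ∧
    (∀ r ∈ Ioo (0:ℝ) R, DifferentiableAt ℝ v r ∧ DifferentiableAt ℝ (deriv v) r) ∧
    (∀ r ∈ Ioo (0:ℝ) R, deriv (deriv v) r + ((n : ℝ) - 1) / r * deriv v r + f (v r) = 0) ∧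
    deriv v 0 = 0 ∧ v R = 0

end
end Paper

open Paper Set Filter MeasureTheory

/-!
Cut each solution at its critical points and invert it on each monotone piece, so that the radius
`r` and the slope `q = |u'|` become functions of the value `s` of the solution. Let `α₁ < α₂` be the
initial values of two solutions with one sign change.

* On the first branch above `β`, use `η = r q / s = -r u' / u` as independent variable. Then
  `κ = r² f(u) / u` solves a scalar equation in which `f` enters only through `K = s f' / f`, and
  monotonicity of `K` together with `K ≤ n / (n - 2)` makes `κ` comparable. At the value `β`, the
  second solution has the larger `r q` and `q`, and at least as large a flux `r^{n-1} q`.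
* Between `β` and `-β` one has `F ≤ 0`, and the differences of `r √(u'² + 2F)` and of
  `r^{n-1} √(u'² + 2F)` are monotone, so the ordering survives.
* Near the minimum, a Pohozaev-type functional compares the two branches ending and beginning there,
  and gives back the ordering of `q` and of `r q` at the value `-β` on the way up.
* After that, `r √(u'² + 2F)` of the second solution exceeds that of the first by at least a fixed
  positive amount. But for a decaying solution it tends to `0`, because `n > 2`.

Hence `α₁ = α₂`. The initial value problem is uniquely solvable along decaying solutions: at a
noncritical point the system for `(u, u'² + 2F(u))` is locally Lipschitz because `F` is `C¹`, and a
critical point either has `|u| > β`, where `f` is locally Lipschitz, or lies where the solution has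
died out.
-/

namespace RadialODE

open scoped Topology

/-! ### One-variable calculus -/

theorem le_of_hasDerivAt_nonneg {X X' : ℝ → ℝ} {a c : ℝ} (hac : a ≤ c)
    (hX : ∀ s ∈ Icc a c, HasDerivAt X (X' s) s) (h : ∀ s ∈ Ioo a c, 0 ≤ X' s) : X a ≤ X c := by
  rw [← interior_Icc] at h
  exact monotoneOn_of_hasDerivWithinAt_nonneg (convex_Icc a c) (HasDerivAt.continuousOn hX)
    (fun s hs => (hX s (interior_subset hs)).hasDerivWithinAt) h
    (left_mem_Icc.2 hac) (right_mem_Icc.2 hac) hac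

theorem lt_of_hasDerivAt_pos {X X' : ℝ → ℝ} {a c : ℝ} (hac : a < c)
    (hX : ∀ s ∈ Icc a c, HasDerivAt X (X' s) s) (h : ∀ s ∈ Ioo a c, 0 < X' s) : X a < X c := by
  rw [← interior_Icc] at h
  exact strictMonoOn_of_hasDerivWithinAt_pos (convex_Icc a c) (HasDerivAt.continuousOn hX)
    (fun s hs => (hX s (interior_subset hs)).hasDerivWithinAt) h
    (left_mem_Icc.2 hac.le) (right_mem_Icc.2 hac.le) hac

theorem le_of_hasDerivAt_nonpos {X X' : ℝ → ℝ} {a c : ℝ} (hac : a ≤ c)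
    (hX : ∀ s ∈ Icc a c, HasDerivAt X (X' s) s) (h : ∀ s ∈ Ioo a c, X' s ≤ 0) : X c ≤ X a :=
  neg_le_neg_iff.1 <| le_of_hasDerivAt_nonneg (X := -X) hac (fun s hs => (hX s hs).neg)
    fun s hs => neg_nonneg.2 (h s hs)

theorem lt_of_hasDerivAt_neg {X X' : ℝ → ℝ} {a c : ℝ} (hac : a < c)
    (hX : ∀ s ∈ Icc a c, HasDerivAt X (X' s) s) (h : ∀ s ∈ Ioo a c, X' s < 0) : X c < X a :=
  neg_lt_neg_iff.1 <| lt_of_hasDerivAt_pos (X := -X) hac (fun s hs => (hX s hs).neg)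
    fun s hs => neg_pos.2 (h s hs)

theorem lt_of_hasDerivAt_pos_of_tendsto {X X' : ℝ → ℝ} {a c L : ℝ} (hac : a < c)
    (hX : ∀ s ∈ Ico a c, HasDerivAt X (X' s) s) (h : ∀ s ∈ Ioo a c, 0 < X' s)
    (hlim : Tendsto X (𝓝[<] c) (𝓝 L)) : X a < L := by
  have hlt : ∀ {s t : ℝ}, a ≤ s → s < t → t < c → X s < X t := fun has hst htc =>
    lt_of_hasDerivAt_pos hst (fun y hy => hX y ⟨has.trans hy.1, hy.2.trans_lt htc⟩)
      fun y hy => h y ⟨has.trans_lt hy.1, hy.2.trans htc⟩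
  obtain ⟨b, hab, hbc⟩ := exists_between hac
  refine (hlt le_rfl hab hbc).trans_le (ge_of_tendsto hlim ?_)
  filter_upwards [Ioo_mem_nhdsLT hbc] with t ht using (hlt hab.le ht.1 ht.2).le

theorem lt_of_hasDerivAt_neg_of_tendsto {X X' : ℝ → ℝ} {a c L : ℝ} (hac : a < c)
    (hX : ∀ s ∈ Ico a c, HasDerivAt X (X' s) s) (h : ∀ s ∈ Ioo a c, X' s < 0)
    (hlim : Tendsto X (𝓝[<] c) (𝓝 L)) : L < X a :=
  neg_lt_neg_iff.1 <| lt_of_hasDerivAt_pos_of_tendsto (X := -X) hac (fun s hs => (hX s hs).neg)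
    (fun s hs => neg_pos.2 (h s hs)) hlim.neg

theorem deriv_nonneg_of_forall_Ioo_ge {h : ℝ → ℝ} {h' a c : ℝ} (hac : a < c)
    (hd : HasDerivAt h h' a) (hle : ∀ s ∈ Ioo a c, h a ≤ h s) : 0 ≤ h' := by
  refine ge_of_tendsto
    (hd.tendsto_slope.mono_left (nhdsWithin_mono a fun s (hs : s ∈ Ioi a) => hs.ne')) ?_
  filter_upwards [Ioo_mem_nhdsGT hac] with s hs
  rw [slope_def_field]
  exact div_nonneg (sub_nonneg.2 (hle s hs)) (sub_nonneg.2 hs.1.le)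

theorem deriv_nonpos_of_forall_Ioo_ge {h : ℝ → ℝ} {h' a c : ℝ} (hac : a < c)
    (hd : HasDerivAt h h' c) (hle : ∀ s ∈ Ioo a c, h c ≤ h s) : h' ≤ 0 := by
  refine le_of_tendsto
    (hd.tendsto_slope.mono_left (nhdsWithin_mono c fun s (hs : s ∈ Iio c) => hs.ne)) ?_
  filter_upwards [Ioo_mem_nhdsLT hac] with s hs
  rw [slope_def_field]
  exact div_nonpos_of_nonneg_of_nonpos (sub_nonneg.2 (hle s hs)) (sub_nonpos.2 hs.2.le)

theorem exists_first_zero {h : ℝ → ℝ} {a c : ℝ} (hac : a ≤ c) (hcont : ContinuousOn h (Icc a c))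
    (ha : 0 < h a) (hc : h c ≤ 0) : ∃ s₀ ∈ Ioc a c, h s₀ = 0 ∧ ∀ s ∈ Ico a s₀, 0 < h s := by
  obtain ⟨z, hz, hz0⟩ := intermediate_value_Icc' hac hcont ⟨hc, ha.le⟩
  obtain ⟨s₀, ⟨hs₀, hs₀0⟩, hmin⟩ := (isCompact_Icc.of_isClosed_subset
    (hcont.preimage_isClosed_of_isClosed isClosed_Icc isClosed_singleton)
    inter_subset_left).exists_isLeast ⟨z, hz, hz0⟩
  refine ⟨s₀, ⟨hs₀.1.lt_of_ne ?_, hs₀.2⟩, hs₀0, fun s hs => ?_⟩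
  · rintro rfl
    exact ha.ne' hs₀0
  · by_contra! hs0
    obtain ⟨y, hy, hy0⟩ := intermediate_value_Icc' hs.1
      (hcont.mono (Icc_subset_Icc_right (hs.2.le.trans hs₀.2))) ⟨hs0, ha.le⟩
    exact (hmin ⟨⟨hy.1, hy.2.trans (hs.2.le.trans hs₀.2)⟩, hy0⟩).not_gt (hy.2.trans_lt hs.2)

theorem exists_last_zero {h : ℝ → ℝ} {a c : ℝ} (hac : a < c) (hcont : ContinuousOn h (Ico a c))
    (ha : h a ≤ 0) (hc : ∀ᶠ s in 𝓝[<] c, 0 < h s) :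
    ∃ s₀ ∈ Ico a c, h s₀ = 0 ∧ ∀ s ∈ Ioo s₀ c, 0 < h s := by
  obtain ⟨d, hd, hdpos⟩ := (mem_nhdsLT_iff_exists_Ioo_subset' hac).1 hc
  obtain ⟨e, he, hec⟩ := exists_between (max_lt hac hd)
  obtain ⟨hae, hde⟩ := max_lt_iff.1 he
  obtain ⟨t, ht, ht0, hpos⟩ := exists_first_zero (h := fun s => h (-s)) (neg_le_neg hae.le)
    (hcont.comp continuous_neg.continuousOn fun s hs =>
      ⟨le_neg.1 hs.2, (neg_le.1 hs.1).trans_lt hec⟩)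
    (by simpa using hdpos ⟨hde, hec⟩) (by simpa using ha)
  refine ⟨-t, ⟨le_neg.1 ht.2, (neg_lt.1 ht.1).trans hec⟩, ht0, fun s hs => ?_⟩
  rcases le_or_gt s e with hse | hes
  · simpa using hpos (-s) ⟨neg_le_neg hse, neg_lt.1 hs.1⟩
  · exact hdpos ⟨hde.trans hes, hs.2⟩

theorem le_of_hasDerivAt_nonneg_of_pos {X X' : ℝ → ℝ} {a c : ℝ} (hac : a ≤ c)
    (hX : ∀ s ∈ Icc a c, HasDerivAt X (X' s) s)
    (h : ∀ s ∈ Ioo a c, 0 < X s → 0 ≤ X' s) (ha : 0 < X a) : X a ≤ X c := by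
  have hpos : ∀ d ∈ Icc a c, 0 < X d := by
    intro d hd
    by_contra! hXd
    obtain ⟨s₀, hs₀, hXs₀, hlt⟩ := exists_first_zero hd.1
      (HasDerivAt.continuousOn fun s hs => hX s ⟨hs.1, hs.2.trans hd.2⟩) ha hXd
    have hs₀c : s₀ ≤ c := hs₀.2.trans hd.2
    have := le_of_hasDerivAt_nonneg hs₀.1.le (fun s hs => hX s ⟨hs.1, hs.2.trans hs₀c⟩)
      fun s hs => h s ⟨hs.1, hs.2.trans_le hs₀c⟩ (hlt s ⟨hs.1.le, hs.2⟩)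
    linarith
  exact le_of_hasDerivAt_nonneg hac hX fun s hs => h s hs (hpos s (Ioo_subset_Icc_self hs))

theorem nonpos_of_hasDerivAt_nonpos_of_pos {X X' : ℝ → ℝ} {a c : ℝ} (hac : a < c)
    (hX : ∀ s ∈ Ioc a c, HasDerivAt X (X' s) s) (h : ∀ s ∈ Ioo a c, 0 < X s → X' s ≤ 0)
    (hlim : Tendsto X (𝓝[>] a) (𝓝 0)) : X c ≤ 0 := by
  by_contra! hc
  have hle : ∀ x ∈ Ioo a c, X c ≤ X x := by
    intro x hx
    have hreflect := le_of_hasDerivAt_nonneg_of_pos (X := fun y => X (-y)) (X' := fun y => -X' (-y))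
      (neg_le_neg hx.2.le)
      (fun y hy => by
        simpa [Function.comp_def] using
          (hX (-y) ⟨hx.1.trans_le (le_neg.1 hy.2), neg_le.1 hy.1⟩).comp y (hasDerivAt_neg y))
      (fun y hy hp => neg_nonneg.2 (h (-y) ⟨hx.1.trans (lt_neg.1 hy.2), neg_lt.1 hy.1⟩ hp))
      (by simpa using hc)
    simpa using hreflect
  refine hc.not_ge (ge_of_tendsto hlim ?_)
  filter_upwards [Ioo_mem_nhdsGT hac] with x hx using hle x hx

theorem eq_zero_of_deriv_le_mul {N N' : ℝ → ℝ} {a c C : ℝ}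
    (hN : ∀ s ∈ Ioo a c, HasDerivAt N (N' s) s) (h : ∀ s ∈ Ioo a c, N' s ≤ C * N s)
    (h0 : ∀ s ∈ Ioo a c, 0 ≤ N s) (hlim : Tendsto N (𝓝[>] a) (𝓝 0)) :
    ∀ s ∈ Ioo a c, N s = 0 := by
  intro s hs
  have hle : ∀ x ∈ Ioo a s, N s * Real.exp (-C * s) ≤ N x * Real.exp (-C * x) := by
    intro x hx
    refine le_of_hasDerivAt_nonpos (X := fun y => N y * Real.exp (-C * y)) hx.2.le
      (fun y hy => (hN y ⟨hx.1.trans_le hy.1, hy.2.trans_lt hs.2⟩).mul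
        ((hasDerivAt_id y).const_mul (-C)).exp) fun y hy => ?_
    have := h y ⟨hx.1.trans hy.1, hy.2.trans hs.2⟩
    have := Real.exp_pos (-C * y)
    simp only [id]
    nlinarith
  have hlim' : Tendsto (fun x => N x * Real.exp (-C * x)) (𝓝[>] a) (𝓝 0) := by
    simpa using hlim.mul ((Continuous.tendsto
      (f := fun x => Real.exp (-C * x)) (by fun_prop) a).mono_left nhdsWithin_le_nhds)
  have hNs : N s * Real.exp (-C * s) ≤ 0 := by
    refine ge_of_tendsto hlim' ?_
    filter_upwards [Ioo_mem_nhdsGT hs.1] with x hx using hle x hx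
  exact (nonpos_of_mul_nonpos_left hNs (Real.exp_pos _)).antisymm (h0 s hs)

theorem abs_inv_sub_inv_le {x y δ : ℝ} (hδ : 0 < δ) (hx : δ ≤ x) (hy : δ ≤ y) :
    |x⁻¹ - y⁻¹| ≤ |x - y| / δ ^ 2 := by
  have hx0 : 0 < x := hδ.trans_le hx
  have hy0 : 0 < y := hδ.trans_le hy
  rw [inv_sub_inv hx0.ne' hy0.ne', abs_div, abs_sub_comm, abs_of_pos (mul_pos hx0 hy0),
    sq]
  gcongr

theorem norm_inv_sub_inv_prod_le {σ k φ B δ x₁ x₂ y₁ y₂ : ℝ} (hδ : 0 < δ) (hk : 0 ≤ k)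
    (hφ : |φ| ≤ B) (hx₁ : δ ≤ x₁) (hx₂ : δ ≤ x₂) (hy₁ : δ ≤ y₁) (hy₂ : δ ≤ y₂) :
    ‖(-σ * (y₁⁻¹ - y₂⁻¹), σ * k * (x₁⁻¹ - x₂⁻¹) - φ * (y₁⁻¹ - y₂⁻¹))‖
      ≤ (|σ| + |σ| * k + B) / δ ^ 2 * ‖(x₁ - x₂, y₁ - y₂)‖ := by
  have hx : |x₁ - x₂| ≤ ‖(x₁ - x₂, y₁ - y₂)‖ := norm_fst_le (x₁ - x₂, y₁ - y₂)
  have hy : |y₁ - y₂| ≤ ‖(x₁ - x₂, y₁ - y₂)‖ := norm_snd_le (x₁ - x₂, y₁ - y₂)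
  generalize ‖(x₁ - x₂, y₁ - y₂)‖ = w at hx hy ⊢
  have hX : |x₁⁻¹ - x₂⁻¹| ≤ w / δ ^ 2 := (abs_inv_sub_inv_le hδ hx₁ hx₂).trans (by gcongr)
  have hY : |y₁⁻¹ - y₂⁻¹| ≤ w / δ ^ 2 := (abs_inv_sub_inv_le hδ hy₁ hy₂).trans (by gcongr)
  have hw : 0 ≤ w / δ ^ 2 := (abs_nonneg _).trans hX
  have hB : 0 ≤ B := (abs_nonneg _).trans hφ
  have hσk : 0 ≤ |σ| * k := by positivity
  rw [div_mul_eq_mul_div, mul_div_assoc]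
  refine max_le ?_ ?_
  · calc ‖-σ * (y₁⁻¹ - y₂⁻¹)‖ = |σ| * |y₁⁻¹ - y₂⁻¹| := by rw [norm_mul, norm_neg]; rfl
      _ ≤ |σ| * (w / δ ^ 2) := by gcongr
      _ ≤ (|σ| + |σ| * k + B) * (w / δ ^ 2) := by gcongr; linarith
  · calc ‖σ * k * (x₁⁻¹ - x₂⁻¹) - φ * (y₁⁻¹ - y₂⁻¹)‖
        ≤ |σ| * k * |x₁⁻¹ - x₂⁻¹| + |φ| * |y₁⁻¹ - y₂⁻¹| := by
          refine (norm_sub_le _ _).trans_eq ?_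
          simp only [Real.norm_eq_abs, abs_mul, abs_of_nonneg hk]
      _ ≤ |σ| * k * (w / δ ^ 2) + B * (w / δ ^ 2) := by gcongr
      _ ≤ (|σ| + |σ| * k + B) * (w / δ ^ 2) := by linarith [mul_nonneg (abs_nonneg σ) hw]

/-- A function dominating `c log x` near `0` has no finite limit there unless `c ≤ 0`. -/
theorem nonpos_of_le_mul_deriv {u u' : ℝ → ℝ} {c d L : ℝ} (hd : 0 < d)
    (hu : ∀ x ∈ Ioc 0 d, HasDerivAt u (u' x) x) (hle : ∀ x ∈ Ioo 0 d, c ≤ x * u' x)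
    (hlim : Tendsto u (𝓝[>] 0) (𝓝 L)) : c ≤ 0 := by
  by_contra! hc
  have hmono : ∀ x ∈ Ioo 0 d, u x - c * Real.log x ≤ u d - c * Real.log d := fun x hx =>
    le_of_hasDerivAt_nonneg hx.2.le (fun t ht => (hu t ⟨hx.1.trans_le ht.1, ht.2⟩).sub
      ((Real.hasDerivAt_log (hx.1.trans_le ht.1).ne').const_mul c)) fun t ht => by
        have ht0 := hx.1.trans ht.1
        rw [sub_nonneg, ← div_eq_mul_inv, div_le_iff₀' ht0]
        exact hle t ⟨ht0, ht.2⟩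
  have hbot : Tendsto (fun x => u x - c * Real.log x) (𝓝[>] 0) atTop := by
    simpa only [sub_eq_add_neg, neg_mul] using
      hlim.add_atTop (Real.tendsto_log_nhdsGT_zero.const_mul_atBot_of_neg (neg_neg_of_pos hc))
  obtain ⟨x, hlt, hx⟩ :=
    ((hbot.eventually_gt_atTop (u d - c * Real.log d)).and (Ioo_mem_nhdsGT hd)).exists
  exact hlt.not_ge (hmono x hx)

/-! ### The nonlinearity -/

/-- The elasticity `K(s) = s f'(s) / f(s)`, whose monotonicity is the paper's hypothesis (f5). -/
noncomputable def elasticity (f : ℝ → ℝ) (s : ℝ) : ℝ := s * deriv f s / f s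

/-- The quantity `2n (F/f)' - (n - 2)` of the paper's hypothesis (f4), in dimension
`n = m + 2` and with the quotient rule carried out. -/
noncomputable def growth (m : ℕ) (f : ℝ → ℝ) (s : ℝ) : ℝ :=
  2 * ((m : ℝ) + 2) * ((f s * f s - Fint f s * deriv f s) / f s ^ 2) - m

/-- The class of nonlinearities the argument applies to, in dimension `m + 2`: (f5) and (f6),
with (f1) and (f2) entering through `F ≤ 0` on `[0, β]`, `F(β) = 0`, and positivity and
differentiability of `f` on `[β, ∞)`. -/
structure Nonlinearity (m : ℕ) (f : ℝ → ℝ) (β : ℝ) : Prop where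
  m_pos : 0 < m
  β_pos : 0 < β
  continuous : Continuous f
  odd : ∀ s, f (-s) = -f s
  pos : ∀ s, β ≤ s → 0 < f s
  Fint_nonpos : ∀ s ∈ Icc 0 β, Fint f s ≤ 0
  Fint_beta : Fint f β = 0
  differentiableAt : ∀ s, β ≤ s → DifferentiableAt ℝ f s
  antitoneOn_elasticity : AntitoneOn (elasticity f) (Ici β)
  elasticity_beta_le : elasticity f β ≤ (m + 2) / m

theorem hasDerivAt_Fint {f : ℝ → ℝ} (hf : Continuous f) (s : ℝ) : HasDerivAt (Fint f) (f s) s :=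
  intervalIntegral.integral_hasDerivAt_right (hf.intervalIntegrable _ _)
    (hf.stronglyMeasurableAtFilter _ _) hf.continuousAt

theorem Fint_zero (f : ℝ → ℝ) : Fint f 0 = 0 :=
  intervalIntegral.integral_same

theorem Fint_neg {f : ℝ → ℝ} (hodd : ∀ s, f (-s) = -f s) (s : ℝ) : Fint f (-s) = Fint f s := by
  have h : ∫ x in (0 : ℝ)..s, f (-x) = ∫ x in -s..(0 : ℝ), f x := by simp
  rw [Fint, Fint, intervalIntegral.integral_symm, ← h]
  simp [hodd]

theorem Fint_nonpos_of_Hf1 {f : ℝ → ℝ} {b β : ℝ} (hf : Continuous f) (h1 : Hf1 f b β) :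
    ∀ s ∈ Icc 0 β, Fint f s ≤ 0 := by
  obtain ⟨-, -, -, -, hpos, hnonpos, -, hFβ⟩ := h1
  intro s hs
  rcases le_total s b with hsb | hbs
  · calc Fint f s ≤ Fint f 0 := le_of_hasDerivAt_nonpos hs.1 (fun x _ => hasDerivAt_Fint hf x)
          fun x hx => hnonpos x ⟨hx.1.le, hx.2.le.trans hsb⟩
      _ = 0 := Fint_zero f
  · calc Fint f s ≤ Fint f β := le_of_hasDerivAt_nonneg hs.2 (fun x _ => hasDerivAt_Fint hf x)
          fun x hx => (hpos x (hbs.trans_lt hx.1)).le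
      _ = 0 := hFβ

theorem Nonlinearity.of_hypotheses {m : ℕ} {f : ℝ → ℝ} {b β : ℝ} (hm : 0 < m)
    (hf : Continuous f) (h1 : Hf1 f b β) (h2 : Hf2 f) (h5 : Hf5 f β) (h6 : Hf6 (m + 2) f β) :
    Nonlinearity m f β := by
  have hFint := Fint_nonpos_of_Hf1 hf h1
  obtain ⟨hodd, -, hb, hbβ, hpos, -, -, hFβ⟩ := h1
  exact {
    m_pos := hm
    β_pos := hb.trans hbβ
    continuous := hf
    odd := hodd
    pos := fun s hs => hpos s (hbβ.trans_le hs)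
    Fint_nonpos := hFint
    Fint_beta := hFβ
    differentiableAt := fun s hs => h2.2.1 s ((hb.trans hbβ).trans_le hs)
    antitoneOn_elasticity := h5
    elasticity_beta_le := by simpa [Hf6, elasticity] using h6 }

namespace Nonlinearity

variable {m : ℕ} {f : ℝ → ℝ} {β : ℝ} (H : Nonlinearity m f β)
include H

theorem hasDerivAt {s : ℝ} (hs : β ≤ s) : HasDerivAt f (deriv f s) s :=
  (H.differentiableAt s hs).hasDerivAt

theorem Fint_nonpos_of_mem_Icc {s : ℝ} (hs : s ∈ Icc (-β) β) : Fint f s ≤ 0 := by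
  rcases le_total 0 s with h | h
  · exact H.Fint_nonpos s ⟨h, hs.2⟩
  · rw [← Fint_neg H.odd]
    exact H.Fint_nonpos _ ⟨neg_nonneg.2 h, neg_le.1 hs.1⟩

theorem Fint_pos {s : ℝ} (hs : β < s) : 0 < Fint f s :=
  H.Fint_beta.symm.trans_lt <| lt_of_hasDerivAt_pos hs
    (fun x _ => hasDerivAt_Fint H.continuous x) fun x hx => H.pos x hx.1.le

theorem Fint_nonneg {s : ℝ} (hs : β ≤ s) : 0 ≤ Fint f s := by
  rcases hs.eq_or_lt with rfl | h
  · exact H.Fint_beta.ge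
  · exact (H.Fint_pos h).le

theorem elasticity_le {s : ℝ} (hs : β ≤ s) : elasticity f s ≤ (m + 2) / m :=
  (H.antitoneOn_elasticity self_mem_Ici hs hs).trans H.elasticity_beta_le

theorem deriv_eq {s : ℝ} (hs : β ≤ s) : deriv f s = elasticity f s * f s / s := by
  have := (H.pos s hs).ne'
  have := (H.β_pos.trans_le hs).ne'
  rw [elasticity]
  field_simp

theorem one_add_elasticity_mul_Fint_le {s : ℝ} (hs : β ≤ s) :
    (1 + elasticity f s) * Fint f s ≤ s * f s := by
  have hmono := le_of_hasDerivAt_nonneg (X := fun t => t * f t - (1 + elasticity f s) * Fint f t) hs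
    (fun t ht => ((hasDerivAt_id t).mul (H.hasDerivAt ht.1)).sub
      ((hasDerivAt_Fint H.continuous t).const_mul (1 + elasticity f s))) (by
    intro t ht
    have h := H.antitoneOn_elasticity ht.1.le hs ht.2.le
    rw [elasticity.eq_def f t, le_div_iff₀ (H.pos t ht.1.le)] at h
    simp only [id]
    linarith)
  simp only [H.Fint_beta, mul_zero, sub_zero] at hmono
  linarith [mul_pos H.β_pos (H.pos β le_rfl)]

theorem growth_pos {s : ℝ} (hs : β ≤ s) : 0 < growth m f s := by
  have hm : (0 : ℝ) < m := by exact_mod_cast H.m_pos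
  have hs0 : 0 < s := H.β_pos.trans_le hs
  have hfs := H.pos s hs
  have hsf : 0 < s * f s := mul_pos hs0 hfs
  have hFs := H.Fint_nonneg hs
  have hint := H.one_add_elasticity_mul_Fint_le hs
  have hk : elasticity f s * m ≤ m + 2 := (le_div_iff₀ hm).1 (H.elasticity_le hs)
  rw [growth, H.deriv_eq hs]
  generalize elasticity f s = k at hint hk ⊢
  have e : 2 * ((m : ℝ) + 2) * ((f s * f s - Fint f s * (k * f s / s)) / f s ^ 2) - m
      = (2 * (m + 2) * (s * f s - k * Fint f s) - m * (s * f s)) / (s * f s) := by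
    field_simp
  rw [e]
  refine div_pos ?_ hsf
  rcases le_or_gt k 0 with hk0 | hk0
  · nlinarith [mul_nonneg (neg_nonneg.2 hk0) hFs]
  · have hkF : k * ((1 + k) * Fint f s) ≤ k * (s * f s) := by gcongr
    refine pos_of_mul_pos_right (a := 1 + k) ?_ (by linarith)
    nlinarith

theorem exists_lipschitzOnWith (c : ℝ) : ∃ C, LipschitzOnWith C f (Icc β c) := by
  obtain ⟨M, hM⟩ := isCompact_Icc.exists_bound_of_continuousOn (s := Icc β c)
    H.continuous.continuousOn
  have hbound : ∀ s ∈ Icc β c,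
      ‖deriv f s‖₊ ≤ ((|elasticity f β| + |elasticity f c|) * M / β).toNNReal := by
    intro s hs
    have hβ := H.β_pos
    have hK : |elasticity f s| ≤ |elasticity f β| + |elasticity f c| := by
      have h₁ := H.antitoneOn_elasticity self_mem_Ici hs.1 hs.1
      have h₂ := H.antitoneOn_elasticity hs.1 (hs.1.trans hs.2) hs.2
      grind
    rw [← NNReal.coe_le_coe, coe_nnnorm, H.deriv_eq hs.1, norm_div, norm_mul, Real.norm_eq_abs s,
      abs_of_pos (hβ.trans_le hs.1)]
    refine le_trans ?_ (Real.le_coe_toNNReal _)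
    have := (norm_nonneg _).trans (hM s hs)
    gcongr
    exacts [hK, hM s hs, hs.1]
  exact ⟨_, (convex_Icc β c).lipschitzOnWith_of_nnnorm_deriv_le
    (fun s hs => H.differentiableAt s hs.1) hbound⟩

end Nonlinearity

/-! ### Monotone branches -/

/-- A monotone branch of a solution in dimension `m + 2`, parametrized by its value `s`: `r` is the
radius and `q` the modulus of the derivative. The sign `σ` is `1` on a decreasing branch and `-1` on
an increasing one. -/
structure Branch (m : ℕ) (f : ℝ → ℝ) (σ : ℝ) (r q : ℝ → ℝ) (J : Set ℝ) : Prop where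
  r_pos : ∀ s ∈ J, 0 < r s
  q_pos : ∀ s ∈ J, 0 < q s
  hasDerivAt_r : ∀ s ∈ J, HasDerivAt r (-σ / q s) s
  hasDerivAt_q : ∀ s ∈ J, HasDerivAt q (σ * ((m + 1) / r s) - f s / q s) s

/-- The energy `u'² + 2 F(u)` as a function of the value. -/
noncomputable def energy (f q : ℝ → ℝ) (s : ℝ) : ℝ := q s ^ 2 + 2 * Fint f s

/-- The flux `r^{n-1} |u'|` as a function of the value, with `n = m + 2`. -/
noncomputable def flux (m : ℕ) (r q : ℝ → ℝ) (s : ℝ) : ℝ := r s ^ (m + 1) * q s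

/-- The Pohozaev-type functional `σ 2n (F/f) r^{n-1} |u'| - r^n (u'² + 2F)` of a branch of sign `σ`,
with `n = m + 2`. -/
noncomputable def pohozaev (m : ℕ) (f : ℝ → ℝ) (σ : ℝ) (r q : ℝ → ℝ) (s : ℝ) : ℝ :=
  σ * (2 * (m + 2)) * (Fint f s / f s * flux m r q s) - r s ^ (m + 2) * energy f q s

theorem flux_pos {m : ℕ} {r q : ℝ → ℝ} {s : ℝ} (hr : 0 < r s) (hq : 0 < q s) :
    0 < flux m r q s :=
  mul_pos (pow_pos hr _) hq

theorem energy_lt_energy {f q₁ q₂ : ℝ → ℝ} {s : ℝ} (hq₁ : 0 < q₁ s) (hlt : q₁ s < q₂ s) :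
    energy f q₁ s < energy f q₂ s := by
  unfold energy
  gcongr

theorem sqrt_energy_eq {f q : ℝ → ℝ} {s : ℝ} (hF : Fint f s = 0) (hq : 0 < q s) :
    √(energy f q s) = q s := by
  rw [energy, hF, mul_zero, add_zero, Real.sqrt_sq hq.le]

theorem pohozaev_of_Fint_eq_zero {m : ℕ} {f : ℝ → ℝ} {s : ℝ} (hF : Fint f s = 0) (σ : ℝ)
    (r q : ℝ → ℝ) : pohozaev m f σ r q s = -(flux m r q s * (r s * q s)) := by
  unfold pohozaev energy flux
  rw [hF]
  ring

namespace Branch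

variable {m : ℕ} {f r q r₁ q₁ r₂ q₂ : ℝ → ℝ} {σ s a c : ℝ} {J J' : Set ℝ}

theorem mono (h : Branch m f σ r q J) (hJ : J' ⊆ J) : Branch m f σ r q J' :=
  ⟨fun s hs => h.r_pos s (hJ hs), fun s hs => h.q_pos s (hJ hs),
    fun s hs => h.hasDerivAt_r s (hJ hs), fun s hs => h.hasDerivAt_q s (hJ hs)⟩

theorem mul_pos (h : Branch m f σ r q J) (hs : s ∈ J) : 0 < r s * q s :=
  _root_.mul_pos (h.r_pos s hs) (h.q_pos s hs)

theorem flux_pos (h : Branch m f σ r q J) (hs : s ∈ J) : 0 < flux m r q s :=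
  RadialODE.flux_pos (h.r_pos s hs) (h.q_pos s hs)

theorem continuousOn_r (h : Branch m f σ r q J) : ContinuousOn r J :=
  HasDerivAt.continuousOn h.hasDerivAt_r

theorem continuousOn_q (h : Branch m f σ r q J) : ContinuousOn q J :=
  HasDerivAt.continuousOn h.hasDerivAt_q

theorem hasDerivAt_sq (h : Branch m f σ r q J) (hs : s ∈ J) :
    HasDerivAt (fun s => q s ^ 2) (σ * (2 * (m + 1) * (q s / r s)) - 2 * f s) s := by
  have := h.q_pos s hs
  have := h.r_pos s hs
  refine ((h.hasDerivAt_q s hs).pow 2).congr_deriv ?_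
  field_simp
  ring

theorem hasDerivAt_mul (h : Branch m f σ r q J) (hs : s ∈ J) :
    HasDerivAt (fun s => r s * q s) (σ * m - r s * f s / q s) s := by
  have := h.q_pos s hs
  have := h.r_pos s hs
  refine ((h.hasDerivAt_r s hs).mul (h.hasDerivAt_q s hs)).congr_deriv ?_
  field_simp
  ring

theorem hasDerivAt_log_r (h : Branch m f σ r q J) (hs : s ∈ J) :
    HasDerivAt (fun s => Real.log (r s)) (-σ * (1 / (r s * q s))) s := by
  have := h.q_pos s hs
  have := h.r_pos s hs
  refine ((h.hasDerivAt_r s hs).log this.ne').congr_deriv ?_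
  field_simp

theorem hasDerivAt_energy (h : Branch m f σ r q J) (hf : Continuous f) (hs : s ∈ J) :
    HasDerivAt (energy f q) (σ * (2 * (m + 1) * (q s / r s))) s :=
  ((h.hasDerivAt_sq hs).add ((hasDerivAt_Fint hf s).const_mul 2)).congr_deriv (by ring)

theorem hasDerivAt_flux (h : Branch m f σ r q J) (hs : s ∈ J) :
    HasDerivAt (flux m r q) (-(r s ^ (m + 1) * f s / q s)) s := by
  have := h.r_pos s hs
  have := h.q_pos s hs
  refine (((h.hasDerivAt_r s hs).pow (m + 1)).mul (h.hasDerivAt_q s hs)).congr_deriv ?_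
  simp only [Nat.add_sub_cancel, Pi.pow_apply]
  push_cast
  field_simp
  ring

theorem hasDerivAt_flux_div {σ₁ σ₂ : ℝ} (h₁ : Branch m f σ₁ r₁ q₁ J)
    (h₂ : Branch m f σ₂ r₂ q₂ J) (hs : s ∈ J) :
    HasDerivAt (fun s => flux m r₁ q₁ s / flux m r₂ q₂ s)
      (-(flux m r₁ q₁ s / flux m r₂ q₂ s * (f s / q₁ s ^ 2 - f s / q₂ s ^ 2))) s := by
  have := h₁.r_pos s hs
  have := h₁.q_pos s hs
  have := h₂.r_pos s hs
  have := h₂.q_pos s hs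
  refine ((h₁.hasDerivAt_flux hs).div (h₂.hasDerivAt_flux hs) (h₂.flux_pos hs).ne').congr_deriv ?_
  unfold flux
  field_simp
  ring

theorem deriv_flux_div_neg {σ₁ σ₂ : ℝ} (h₁ : Branch m f σ₁ r₁ q₁ J)
    (h₂ : Branch m f σ₂ r₂ q₂ J) (hs : s ∈ J) (hfs : 0 < f s) (hq : q₁ s < q₂ s) :
    -(flux m r₁ q₁ s / flux m r₂ q₂ s * (f s / q₁ s ^ 2 - f s / q₂ s ^ 2)) < 0 := by
  have hq₁ := h₁.q_pos s hs
  have hlt : f s / q₂ s ^ 2 < f s / q₁ s ^ 2 := by gcongr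
  exact neg_neg_of_pos
    (_root_.mul_pos (div_pos (h₁.flux_pos hs) (h₂.flux_pos hs)) (sub_pos.2 hlt))

theorem hasDerivAt_mul_sqrt_energy (h : Branch m f σ r q J) (hf : Continuous f) (hs : s ∈ J)
    (he : 0 < energy f q s) :
    HasDerivAt (fun s => r s * √(energy f q s))
      (σ * ((m + 1) * (q s / √(energy f q s)) - √(energy f q s) / q s)) s := by
  have := h.r_pos s hs
  have := h.q_pos s hs
  have := Real.sqrt_pos.2 he
  refine ((h.hasDerivAt_r s hs).mul ((h.hasDerivAt_energy hf hs).sqrt he.ne')).congr_deriv ?_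
  field_simp
  ring

theorem hasDerivAt_pow_mul_sqrt_energy (h : Branch m f σ r q J) (hf : Continuous f) (hs : s ∈ J)
    (he : 0 < energy f q s) :
    HasDerivAt (fun s => r s ^ (m + 1) * √(energy f q s))
      (σ * ((m + 1) * r s ^ m * (-2 * Fint f s) / (q s * √(energy f q s)))) s := by
  have := h.r_pos s hs
  have := h.q_pos s hs
  have := Real.sqrt_pos.2 he
  refine (((h.hasDerivAt_r s hs).pow (m + 1)).mul
    ((h.hasDerivAt_energy hf hs).sqrt he.ne')).congr_deriv ?_
  have hsq : √(energy f q s) ^ 2 = q s ^ 2 + 2 * Fint f s := Real.sq_sqrt he.le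
  simp only [Nat.add_sub_cancel, Pi.pow_apply]
  push_cast
  field_simp
  rw [hsq]
  ring

theorem hasDerivAt_pohozaev (h : Branch m f σ r q J) (hf : Continuous f) (hs : s ∈ J)
    (hd : DifferentiableAt ℝ f s) (hfs : f s ≠ 0) :
    HasDerivAt (pohozaev m f σ r q) (σ * (growth m f s * flux m r q s)) s := by
  have := h.r_pos s hs
  have := h.q_pos s hs
  refine (((((hasDerivAt_Fint hf s).div hd.hasDerivAt hfs).mul (h.hasDerivAt_flux hs)).const_mul
    (σ * (2 * ((m : ℝ) + 2)))).sub
    (((h.hasDerivAt_r s hs).pow (m + 2)).mul (h.hasDerivAt_energy hf hs))).congr_deriv ?_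
  simp only [Pi.pow_apply, Pi.div_apply, show m + 2 - 1 = m + 1 from rfl]
  unfold growth flux energy
  push_cast
  field_simp
  ring

theorem exists_pos_le (h : Branch m f σ r q (Icc a c)) :
    ∃ δ > 0, ∀ s ∈ Icc a c, δ ≤ r s ∧ δ ≤ q s := by
  obtain ⟨δr, hδr, hr⟩ := isCompact_Icc.exists_forall_le' h.continuousOn_r h.r_pos
  obtain ⟨δq, hδq, hq⟩ := isCompact_Icc.exists_forall_le' h.continuousOn_q h.q_pos
  exact ⟨min δr δq, lt_min hδr hδq, fun s hs =>
    ⟨(min_le_left _ _).trans (hr s hs), (min_le_right _ _).trans (hq s hs)⟩⟩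

theorem eq_of_eq_left (hf : Continuous f) (h₁ : Branch m f σ r₁ q₁ (Icc a c))
    (h₂ : Branch m f σ r₂ q₂ (Icc a c)) (hr : r₁ a = r₂ a) (hq : q₁ a = q₂ a) :
    ∀ s ∈ Icc a c, r₁ s = r₂ s ∧ q₁ s = q₂ s := by
  obtain ⟨δ₁, hδ₁, hle₁⟩ := h₁.exists_pos_le
  obtain ⟨δ₂, hδ₂, hle₂⟩ := h₂.exists_pos_le
  obtain ⟨B, hB⟩ := (isCompact_Icc (a := a) (b := c)).exists_bound_of_continuousOn hf.continuousOn
  have hderiv : ∀ t ∈ Icc a c, HasDerivAt (fun t => (r₁ t - r₂ t, q₁ t - q₂ t))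
      (-σ * ((q₁ t)⁻¹ - (q₂ t)⁻¹),
        σ * (m + 1) * ((r₁ t)⁻¹ - (r₂ t)⁻¹) - f t * ((q₁ t)⁻¹ - (q₂ t)⁻¹)) t := fun t ht =>
    (((h₁.hasDerivAt_r t ht).sub (h₂.hasDerivAt_r t ht)).congr_deriv (by ring)).prodMk
      (((h₁.hasDerivAt_q t ht).sub (h₂.hasDerivAt_q t ht)).congr_deriv (by ring))
  have hzero := eq_zero_of_abs_deriv_le_mul_abs_self_of_eq_zero_right
    (HasDerivAt.continuousOn hderiv)
    (fun t ht => (hderiv t (Ico_subset_Icc_self ht)).hasDerivWithinAt) (by simp [hr, hq])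
    fun t ht => by
      have ht' := Ico_subset_Icc_self ht
      exact norm_inv_sub_inv_prod_le (lt_min hδ₁ hδ₂) (by positivity) (hB t ht')
        ((min_le_left _ _).trans (hle₁ t ht').1) ((min_le_right _ _).trans (hle₂ t ht').1)
        ((min_le_left _ _).trans (hle₁ t ht').2) ((min_le_right _ _).trans (hle₂ t ht').2)
  intro s hs
  simpa [sub_eq_zero] using hzero s hs

theorem q_lt_q (h₁ : Branch m f 1 r₁ q₁ (Ico a c)) (h₂ : Branch m f 1 r₂ q₂ (Ico a c))
    (hend : ∀ᶠ s in 𝓝[<] c, q₁ s < q₂ s)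
    (hr : ∀ s₀ ∈ Ico a c, q₁ s₀ = q₂ s₀ → (∀ s ∈ Ioo s₀ c, q₁ s < q₂ s) → r₁ s₀ < r₂ s₀) :
    ∀ s ∈ Ico a c, q₁ s < q₂ s := by
  intro s hs
  by_contra! hle
  have hsub : Ico s c ⊆ Ico a c := Ico_subset_Ico_left hs.1
  obtain ⟨s₀, hs₀, h0, hpos⟩ := exists_last_zero hs.2
    ((h₂.continuousOn_q.sub h₁.continuousOn_q).mono hsub) (sub_nonpos.2 hle)
    (hend.mono fun t => sub_pos.2)
  have hs₀' := hsub hs₀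
  have hq : q₁ s₀ = q₂ s₀ := (sub_eq_zero.1 h0).symm
  have hlt := hr s₀ hs₀' hq fun t ht => sub_pos.1 (hpos t ht)
  have hd := deriv_nonneg_of_forall_Ioo_ge hs₀.2
    ((h₂.hasDerivAt_q s₀ hs₀').sub (h₁.hasDerivAt_q s₀ hs₀'))
    fun t ht => h0.trans_le (hpos t ht).le
  have : ((m : ℝ) + 1) / r₂ s₀ < (m + 1) / r₁ s₀ :=
    div_lt_div_of_pos_left (by positivity) (h₁.r_pos s₀ hs₀') hlt
  rw [hq] at hd
  linarith

theorem r_lt_r (h₁ : Branch m f 1 r₁ q₁ (Ico a c)) (h₂ : Branch m f 1 r₂ q₂ (Ico a c))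
    (hy : ∀ s ∈ Ioo a c, r₁ s * q₁ s < r₂ s * q₂ s) (ha : r₁ a ≤ r₂ a) :
    ∀ s ∈ Ioo a c, r₁ s < r₂ s := by
  intro s hs
  have hsub : Icc a s ⊆ Ico a c := Icc_subset_Ico_right hs.2
  have ha' : a ∈ Ico a c := hsub (left_mem_Icc.2 hs.1.le)
  have hs' : s ∈ Ico a c := hsub (right_mem_Icc.2 hs.1.le)
  have hlog := lt_of_hasDerivAt_pos hs.1 (fun t ht =>
    (h₂.hasDerivAt_log_r (hsub ht)).sub (h₁.hasDerivAt_log_r (hsub ht))) (by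
    intro t ht
    have := one_div_lt_one_div_of_lt (h₁.mul_pos (hsub (Ioo_subset_Icc_self ht)))
      (hy t ⟨ht.1, ht.2.trans hs.2⟩)
    linarith)
  have hloga := Real.log_le_log (h₁.r_pos a ha') ha
  refine (Real.log_lt_log_iff (h₁.r_pos s hs') (h₂.r_pos s hs')).1 ?_
  simp only [Pi.sub_apply] at hlog
  linarith

end Branch

/-! ### Inverses of decreasing functions -/

theorem le_of_forall_Ioo_le {X Y : ℝ → ℝ} {a c : ℝ} (hac : a < c) (hX : ContinuousAt X a)
    (hY : ContinuousAt Y a) (h : ∀ s ∈ Ioo a c, X s ≤ Y s) : X a ≤ Y a :=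
  le_of_tendsto_of_tendsto (hX.tendsto.mono_left nhdsWithin_le_nhds)
    (hY.tendsto.mono_left nhdsWithin_le_nhds)
    (mem_of_superset (Ioo_mem_nhdsGT hac) h)

theorem image_mem_nhds_of_strictAntiOn {h : ℝ → ℝ} {I : Set ℝ} {s : ℝ} (hI : I ∈ 𝓝 s)
    (hIc : I.OrdConnected) (hcont : ContinuousOn h I) (hanti : StrictAntiOn h I) :
    h '' I ∈ 𝓝 (h s) := by
  have hs : s ∈ I := mem_of_mem_nhds hI
  obtain ⟨l, u, ⟨hls, hsu⟩, hsub⟩ := mem_nhds_iff_exists_Ioo_subset.1 hI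
  obtain ⟨x, hlx, hxs⟩ := exists_between hls
  obtain ⟨z, hsz, hzu⟩ := exists_between hsu
  have hx : x ∈ I := hsub ⟨hlx, hxs.trans hsu⟩
  have hz : z ∈ I := hsub ⟨hls.trans hsz, hzu⟩
  refine mem_of_superset (Icc_mem_nhds (hanti hs hz hsz) (hanti hx hs hxs)) ?_
  exact (hIc.isPreconnected.image h hcont).ordConnected.out (mem_image_of_mem h hz)
    (mem_image_of_mem h hx)

theorem exists_inverse {h h' : ℝ → ℝ} {I : Set ℝ} (hI : IsOpen I) (hIc : I.OrdConnected)
    (hd : ∀ s ∈ I, HasDerivAt h (h' s) s) (hneg : ∀ s ∈ I, h' s < 0) :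
    ∃ S : ℝ → ℝ, ∀ s ∈ I, S (h s) = s ∧ HasDerivAt S (h' s)⁻¹ (h s) := by
  have hcont : ContinuousOn h I := HasDerivAt.continuousOn hd
  have hanti : StrictAntiOn h I := strictAntiOn_of_hasDerivWithinAt_neg hIc.convex hcont
    (fun s hs => (hd s (interior_subset hs)).hasDerivWithinAt)
    (fun s hs => hneg s (interior_subset hs))
  set S := Function.invFunOn h I
  have hS : LeftInvOn S h I := hanti.injOn.leftInvOn_invFunOn
  have hSanti : StrictAntiOn S (h '' I) := by
    rintro _ ⟨x, hx, rfl⟩ _ ⟨y, hy, rfl⟩ hlt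
    rw [hS hx, hS hy]
    exact (hanti.lt_iff_gt hx hy).1 hlt
  refine ⟨S, fun s hs => ⟨hS hs, ?_⟩⟩
  have himage : h '' I ∈ 𝓝 (h s) :=
    image_mem_nhds_of_strictAntiOn (hI.mem_nhds hs) hIc hcont hanti
  have hScont : ContinuousAt S (h s) :=
    hSanti.dual_right.continuousAt_of_image_mem_nhds himage (by
      change S '' (h '' I) ∈ 𝓝 (S (h s))
      rw [hS.image_image, hS hs]
      exact hI.mem_nhds hs)
  refine HasDerivAt.of_local_left_inverse hScont (by simpa only [hS hs] using hd s hs)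
    (hneg s hs).ne ?_
  filter_upwards [himage]
  rintro _ ⟨x, hx, rfl⟩
  rw [hS hx]

theorem tendsto_inverse_nhdsLT {v S : ℝ → ℝ} {I : Set ℝ} {a M : ℝ}
    (hS : ∀ᶠ y in 𝓝[<] M, S y ∈ I ∧ v (S y) = y) (hv : StrictAntiOn v I)
    (hI : ∀ r ∈ I, a < r) (hd : ∀ d, a < d → ∃ c ∈ I, c < d) (hM : ∀ c ∈ I, v c < M) :
    Tendsto S (𝓝[<] M) (𝓝[>] a) := by
  refine tendsto_nhdsWithin_iff.2 ⟨tendsto_order.2 ⟨fun d hda => ?_, fun d hda => ?_⟩, ?_⟩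
  · filter_upwards [hS] with y hy using hda.trans (hI _ hy.1)
  · obtain ⟨c, hc, hcd⟩ := hd d hda
    filter_upwards [hS, Ioo_mem_nhdsLT (hM c hc)] with y hy hyc
    exact ((hv.lt_iff_gt hc hy.1).1 (hy.2.symm ▸ hyc.1)).trans hcd
  · filter_upwards [hS] with y hy using hI _ hy.1

theorem tendsto_inverse_nhdsGT {v S : ℝ → ℝ} {I : Set ℝ} {b L : ℝ}
    (hS : ∀ᶠ y in 𝓝[>] L, S y ∈ I ∧ v (S y) = y) (hv : StrictAntiOn v I)
    (hI : ∀ r ∈ I, r < b) (hd : ∀ d, d < b → ∃ c ∈ I, d < c) (hL : ∀ c ∈ I, L < v c) :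
    Tendsto S (𝓝[>] L) (𝓝[<] b) := by
  refine tendsto_nhdsWithin_iff.2 ⟨tendsto_order.2 ⟨fun d hda => ?_, fun d hda => ?_⟩, ?_⟩
  · obtain ⟨c, hc, hcd⟩ := hd d hda
    filter_upwards [hS, Ioo_mem_nhdsGT (hL c hc)] with y hy hyc
    exact hcd.trans ((hv.lt_iff_gt hy.1 hc).1 (hy.2.symm ▸ hyc.2))
  · filter_upwards [hS] with y hy using (hI _ hy.1).trans hda
  · filter_upwards [hS] with y hy using hI _ hy.1

/-! ### The branch starting at the center -/

/-- A decreasing branch over `[β, α)` that issues from the center with value `α`. -/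
structure StartBranch (m : ℕ) (f r q : ℝ → ℝ) (β α : ℝ) : Prop where
  branch : Branch m f 1 r q (Ico β α)
  lt : β < α
  tendsto_r : Tendsto r (𝓝[<] α) (𝓝 0)
  tendsto_q : Tendsto q (𝓝[<] α) (𝓝 0)
  tendsto_div : Tendsto (fun s => r s * f s / q s) (𝓝[<] α) (𝓝 (m + 2))

/-- The quantity `-r u'(r) / u(r)` as a function of the value. -/
noncomputable def eta (r q : ℝ → ℝ) (s : ℝ) : ℝ := r s * q s / s

/-- The quantity `r² f(u) / u` as a function of the value. -/
noncomputable def kappa (f r : ℝ → ℝ) (s : ℝ) : ℝ := r s ^ 2 * f s / s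

/-- The derivative of `eta` with respect to `log r`, divided by `eta`. -/
noncomputable def defect (m : ℕ) (f r q : ℝ → ℝ) (s : ℝ) : ℝ :=
  eta r q s - m + kappa f r s / eta r q s

/-- The equation satisfied on `(0, Y]` by `kappa` as a function `k` of the value of `eta`, together
with its initial condition at the center. The elasticity of the nonlinearity enters as the function
`K` of `eta`. -/
structure KappaCurve (m : ℕ) (K k : ℝ → ℝ) (Y : ℝ) : Prop where
  pos : ∀ y ∈ Ioc 0 Y, 0 < k y
  defect_pos : ∀ y ∈ Ioc 0 Y, 0 < y - m + k y / y
  hasDerivAt : ∀ y ∈ Ioc 0 Y,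
    HasDerivAt k (k y * (2 / y - (K y - 1)) / (y - m + k y / y)) y
  tendsto_div : Tendsto (fun y => k y / y) (𝓝[>] 0) (𝓝 (m + 2))

namespace KappaCurve

variable {m : ℕ} {K₁ k₁ K₂ k₂ : ℝ → ℝ} {Y Z : ℝ}

theorem mono (h : KappaCurve m K₁ k₁ Y) (hZ : Z ≤ Y) : KappaCurve m K₁ k₁ Z :=
  have hsub : Ioc 0 Z ⊆ Ioc 0 Y := Ioc_subset_Ioc_right hZ
  ⟨fun y hy => h.pos y (hsub hy), fun y hy => h.defect_pos y (hsub hy),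
    fun y hy => h.hasDerivAt y (hsub hy), h.tendsto_div⟩

theorem hasDerivAt_log (h : KappaCurve m K₁ k₁ Y) {y : ℝ} (hy : y ∈ Ioc 0 Y) :
    HasDerivAt (fun y => Real.log (k₁ y)) ((2 / y - (K₁ y - 1)) / (y - m + k₁ y / y)) y :=
  ((h.hasDerivAt y hy).log (h.pos y hy).ne').congr_deriv (by
    rw [mul_div_assoc, mul_div_cancel_left₀ _ (h.pos y hy).ne'])

theorem tendsto_zero (h : KappaCurve m K₁ k₁ Y) : Tendsto k₁ (𝓝[>] 0) (𝓝 0) := by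
  have hmul := (tendsto_nhdsWithin_of_tendsto_nhds tendsto_id :
    Tendsto id (𝓝[>] (0 : ℝ)) (𝓝 0)).mul h.tendsto_div
  rw [zero_mul] at hmul
  refine hmul.congr' ?_
  filter_upwards [self_mem_nhdsWithin] with y (hy : 0 < y) using mul_div_cancel₀ _ hy.ne'

theorem tendsto_log_sub_log (h₁ : KappaCurve m K₁ k₁ Y) (h₂ : KappaCurve m K₂ k₂ Y)
    (hY : 0 < Y) : Tendsto (fun y => Real.log (k₁ y) - Real.log (k₂ y)) (𝓝[>] 0) (𝓝 0) := by
  have hm : (m : ℝ) + 2 ≠ 0 := by positivity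
  have hlim := (h₁.tendsto_div.log hm).sub (h₂.tendsto_div.log hm)
  rw [sub_self] at hlim
  refine hlim.congr' ?_
  filter_upwards [Ioc_mem_nhdsGT hY] with y hy
  rw [Real.log_div (h₁.pos y hy).ne' hy.1.ne', Real.log_div (h₂.pos y hy).ne' hy.1.ne']
  ring

theorem defect_lt {y : ℝ} (hy : 0 < y) (hlt : k₂ y < k₁ y) :
    y - m + k₂ y / y < y - m + k₁ y / y := by
  gcongr

/-- As long as `k₂` is increasing, larger values of `k` have smaller logarithmic derivative. -/
theorem le_of_pos (h₁ : KappaCurve m K₁ k₁ Y) (h₂ : KappaCurve m K₂ k₂ Y) (hY : 0 < Y)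
    (hK : ∀ y ∈ Ioc 0 Y, K₂ y ≤ K₁ y) (hmono : MonotoneOn K₂ (Ioc 0 Y))
    (hpos : 0 < 2 / Y - (K₂ Y - 1)) : k₁ Y ≤ k₂ Y := by
  have hY' : Y ∈ Ioc 0 Y := right_mem_Ioc.2 hY
  have hlog := nonpos_of_hasDerivAt_nonpos_of_pos hY
    (fun y hy => (h₁.hasDerivAt_log hy).sub (h₂.hasDerivAt_log hy)) (fun y hy hlt => ?_)
    (h₁.tendsto_log_sub_log h₂ hY)
  · exact (Real.log_le_log_iff (h₁.pos Y hY') (h₂.pos Y hY')).1 (sub_nonpos.1 hlog)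
  have hy' : y ∈ Ioc 0 Y := Ioo_subset_Ioc_self hy
  have hk : k₂ y < k₁ y :=
    (Real.log_lt_log_iff (h₂.pos y hy') (h₁.pos y hy')).1 (sub_pos.1 hlt)
  have hN : 0 ≤ 2 / y - (K₂ y - 1) := by
    have := hmono hy' hY' hy.2.le
    have := div_lt_div_of_pos_left two_pos hy.1 hy.2
    linarith
  refine sub_nonpos.2 ?_
  calc (2 / y - (K₁ y - 1)) / (y - m + k₁ y / y)
      ≤ (2 / y - (K₂ y - 1)) / (y - m + k₁ y / y) :=
        div_le_div_of_nonneg_right (by linarith [hK y hy']) (h₁.defect_pos y hy').le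
    _ ≤ (2 / y - (K₂ y - 1)) / (y - m + k₂ y / y) :=
        div_le_div_of_nonneg_left hN (h₂.defect_pos y hy') (defect_lt hy.1 hk).le

/-- Once `k₂` stops increasing, `hle` forces `m ≤ y`, and then `k / (y - m + k / y)` is
nondecreasing in `k`. -/
theorem le (h₁ : KappaCurve m K₁ k₁ Y) (h₂ : KappaCurve m K₂ k₂ Y) (hY : 0 < Y) (hm : 0 < m)
    (hK : ∀ y ∈ Ioc 0 Y, K₂ y ≤ K₁ y) (hmono : MonotoneOn K₂ (Ioc 0 Y))
    (hle : ∀ y ∈ Ioc 0 Y, K₂ y ≤ (m + 2) / m) : k₁ Y ≤ k₂ Y := by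
  have hlim := h₁.tendsto_zero.sub h₂.tendsto_zero
  rw [sub_zero] at hlim
  refine sub_nonpos.1 (nonpos_of_hasDerivAt_nonpos_of_pos (X := k₁ - k₂) hY
    (fun y hy => (h₁.hasDerivAt y hy).sub (h₂.hasDerivAt y hy)) (fun y hy hlt => ?_) hlim)
  have hy' : y ∈ Ioc 0 Y := Ioo_subset_Ioc_self hy
  have hk : k₂ y < k₁ y := sub_pos.1 hlt
  have hD₁ := h₁.defect_pos y hy'
  have hD₂ := h₂.defect_pos y hy'
  have hN : 2 / y - (K₂ y - 1) ≤ 0 := by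
    by_contra! hN
    have hsub : Ioc 0 y ⊆ Ioc 0 Y := Ioc_subset_Ioc_right hy.2.le
    exact hk.not_ge ((h₁.mono hy.2.le).le_of_pos (h₂.mono hy.2.le) hy.1
      (fun x hx => hK x (hsub hx)) (hmono.mono hsub) hN)
  have hmy : (m : ℝ) ≤ y := by
    by_contra! hym
    have := div_lt_div_of_pos_left two_pos hy.1 hym
    have : ((m : ℝ) + 2) / m = 1 + 2 / m := by field_simp
    linarith [hle y hy']
  have hratio : k₂ y / (y - m + k₂ y / y) ≤ k₁ y / (y - m + k₁ y / y) := by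
    rw [div_le_div_iff₀ hD₂ hD₁]
    have : k₂ y * (k₁ y / y) = k₁ y * (k₂ y / y) := by ring
    linarith [mul_le_mul_of_nonneg_right hk.le (sub_nonneg.2 hmy)]
  rw [mul_div_right_comm, mul_div_right_comm, sub_nonpos]
  calc k₁ y / (y - m + k₁ y / y) * (2 / y - (K₁ y - 1))
      ≤ k₁ y / (y - m + k₁ y / y) * (2 / y - (K₂ y - 1)) :=
        mul_le_mul_of_nonneg_left (by linarith [hK y hy']) (div_pos (h₁.pos y hy') hD₁).le
    _ ≤ k₂ y / (y - m + k₂ y / y) * (2 / y - (K₂ y - 1)) :=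
        mul_le_mul_of_nonpos_right hratio hN

end KappaCurve

namespace StartBranch

variable {m : ℕ} {f r q r₁ q₁ r₂ q₂ : ℝ → ℝ} {β α α₁ α₂ s a : ℝ}

theorem eta_pos (H : Nonlinearity m f β) (h : StartBranch m f r q β α) (hs : s ∈ Ico β α) :
    0 < eta r q s :=
  div_pos (h.branch.mul_pos hs) (H.β_pos.trans_le hs.1)

theorem kappa_pos (H : Nonlinearity m f β) (h : StartBranch m f r q β α) (hs : s ∈ Ico β α) :
    0 < kappa f r s :=
  div_pos (mul_pos (pow_pos (h.branch.r_pos s hs) 2) (H.pos s hs.1)) (H.β_pos.trans_le hs.1)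

theorem kappa_div_eta (H : Nonlinearity m f β) (h : StartBranch m f r q β α)
    (hs : s ∈ Ico β α) : kappa f r s / eta r q s = r s * f s / q s := by
  have := h.branch.r_pos s hs
  have := H.β_pos.trans_le hs.1
  unfold kappa eta
  field_simp

theorem hasDerivAt_eta (H : Nonlinearity m f β) (h : StartBranch m f r q β α)
    (hs : s ∈ Ico β α) : HasDerivAt (eta r q) (-(defect m f r q s / s)) s := by
  have := h.branch.q_pos s hs
  have hs₀ := H.β_pos.trans_le hs.1
  refine ((h.branch.hasDerivAt_mul hs).div (hasDerivAt_id s) hs₀.ne').congr_deriv ?_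
  rw [defect, h.kappa_div_eta H hs, eta]
  simp only [id]
  field_simp
  ring

theorem hasDerivAt_kappa (H : Nonlinearity m f β) (h : StartBranch m f r q β α)
    (hs : s ∈ Ico β α) :
    HasDerivAt (kappa f r) (kappa f r s / s * (elasticity f s - 1 - 2 / eta r q s)) s := by
  have := h.branch.r_pos s hs
  have := h.branch.q_pos s hs
  have := H.pos s hs.1
  have hs₀ := H.β_pos.trans_le hs.1
  refine ((((h.branch.hasDerivAt_r s hs).pow 2).mul (H.hasDerivAt hs.1)).div
    (hasDerivAt_id s) hs₀.ne').congr_deriv ?_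
  unfold kappa eta elasticity
  simp only [id, Pi.mul_apply, Pi.pow_apply]
  field_simp
  ring

theorem hasDerivAt_defect (H : Nonlinearity m f β) (h : StartBranch m f r q β α)
    (hs : s ∈ Ico β α) :
    HasDerivAt (defect m f r q) (-(defect m f r q s / s) + kappa f r s / eta r q s / s *
      (elasticity f s - 1 - 2 / eta r q s + defect m f r q s / eta r q s)) s := by
  have hη := h.eta_pos H hs
  have := H.β_pos.trans_le hs.1
  refine (((h.hasDerivAt_eta H hs).sub_const (m : ℝ)).add
    ((h.hasDerivAt_kappa H hs).div (h.hasDerivAt_eta H hs) hη.ne')).congr_deriv ?_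
  field_simp
  ring

theorem tendsto_eta (H : Nonlinearity m f β) (h : StartBranch m f r q β α) :
    Tendsto (eta r q) (𝓝[<] α) (𝓝 0) := by
  have hα : α ≠ 0 := (H.β_pos.trans h.lt).ne'
  have := (h.tendsto_r.mul h.tendsto_q).div (tendsto_nhdsWithin_of_tendsto_nhds tendsto_id) hα
  rwa [mul_zero, zero_div] at this

theorem tendsto_kappa_div_eta (H : Nonlinearity m f β) (h : StartBranch m f r q β α) :
    Tendsto (fun s => kappa f r s / eta r q s) (𝓝[<] α) (𝓝 (m + 2)) := by
  refine h.tendsto_div.congr' ?_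
  filter_upwards [Ico_mem_nhdsLT h.lt] with s hs using (h.kappa_div_eta H hs).symm

/-- At the last zero of the defect `eta < m`, so the bound `K ≤ 1 + 2 / m` makes its derivative
negative there, although the defect is positive beyond. -/
theorem defect_pos (H : Nonlinearity m f β) (h : StartBranch m f r q β α) (hs : s ∈ Ico β α) :
    0 < defect m f r q s := by
  have hm : (0 : ℝ) < m := Nat.cast_pos.2 H.m_pos
  by_contra! hneg
  have hlim : Tendsto (defect m f r q) (𝓝[<] α) (𝓝 (0 - m + (m + 2))) :=
    ((h.tendsto_eta H).sub_const (m : ℝ)).add (h.tendsto_kappa_div_eta H)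
  have hsub : Ico s α ⊆ Ico β α := Ico_subset_Ico_left hs.1
  obtain ⟨t, ht, hzero, hpos⟩ := exists_last_zero hs.2
    (HasDerivAt.continuousOn fun t ht => h.hasDerivAt_defect H (hsub ht)) hneg
    (hlim.eventually (lt_mem_nhds (by linarith)))
  have hd := deriv_nonneg_of_forall_Ioo_ge ht.2 (h.hasDerivAt_defect H (hsub ht))
    fun x hx => hzero.trans_le (hpos x hx).le
  have hη := h.eta_pos H (hsub ht)
  have hκη := div_pos (h.kappa_pos H (hsub ht)) hη
  have ht₀ := H.β_pos.trans_le (hsub ht).1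
  have hηm : eta r q t < m := by linarith [hzero, defect.eq_1 m f r q t]
  have hK : elasticity f t < 1 + 2 / eta r q t := by
    calc elasticity f t ≤ (m + 2) / m := H.elasticity_le (hsub ht).1
      _ = 1 + 2 / m := by field_simp
      _ < 1 + 2 / eta r q t := by gcongr
  rw [hzero] at hd
  simp only [zero_div, neg_zero, zero_add, add_zero] at hd
  linarith [mul_neg_of_pos_of_neg (div_pos hκη ht₀)
    (show elasticity f t - 1 - 2 / eta r q t < 0 by linarith)]

theorem deriv_eta_neg (H : Nonlinearity m f β) (h : StartBranch m f r q β α)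
    (hs : s ∈ Ico β α) : -(defect m f r q s / s) < 0 :=
  neg_neg_of_pos (div_pos (h.defect_pos H hs) (H.β_pos.trans_le hs.1))

theorem strictAntiOn_eta (H : Nonlinearity m f β) (h : StartBranch m f r q β α) :
    StrictAntiOn (eta r q) (Ico β α) := fun x hx y hy hxy =>
  have hsub : Icc x y ⊆ Ico β α := ordConnected_Ico.out hx hy
  lt_of_hasDerivAt_neg hxy (fun _ ht => h.hasDerivAt_eta H (hsub ht))
    fun _ ht => h.deriv_eta_neg H (hsub (Ioo_subset_Icc_self ht))

theorem exists_inverse_eta (H : Nonlinearity m f β) (h : StartBranch m f r q β α)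
    (hs : s ∈ Ioo β α) : ∃ S : ℝ → ℝ, S (eta r q s) = s ∧
      (∀ y ∈ Ioc 0 (eta r q s), S y ∈ Ico s α ∧ eta r q (S y) = y ∧
        HasDerivAt S (-(defect m f r q (S y) / S y))⁻¹ y) ∧
      Tendsto S (𝓝[>] 0) (𝓝[<] α) := by
  have hsub : Ico s α ⊆ Ioo β α := fun t ht => ⟨hs.1.trans_le ht.1, ht.2⟩
  have hsub' : Ico s α ⊆ Ico β α := hsub.trans Ioo_subset_Ico_self
  have hsmem : s ∈ Ico s α := left_mem_Ico.2 hs.2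
  obtain ⟨S, hS⟩ := exists_inverse isOpen_Ioo ordConnected_Ioo
    (fun _ ht => h.hasDerivAt_eta H (Ioo_subset_Ico_self ht))
    (fun _ ht => h.deriv_eta_neg H (Ioo_subset_Ico_self ht))
  have himage : Ioc 0 (eta r q s) ⊆ eta r q '' Ico s α :=
    isPreconnected_Ico.intermediate_value_Ioc hsmem
      (le_principal_iff.2 (Ico_mem_nhdsLT hs.2))
      (HasDerivAt.continuousOn fun t ht => h.hasDerivAt_eta H (hsub' ht)) (h.tendsto_eta H)
  have hS' : ∀ y ∈ Ioc 0 (eta r q s), S y ∈ Ico s α ∧ eta r q (S y) = y ∧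
      HasDerivAt S (-(defect m f r q (S y) / S y))⁻¹ y := by
    intro y hy
    obtain ⟨t, ht, rfl⟩ := himage hy
    obtain ⟨hSt, hd⟩ := hS t (hsub ht)
    rw [hSt]
    exact ⟨ht, rfl, hd⟩
  refine ⟨S, (hS s hs).1, hS', ?_⟩
  refine tendsto_inverse_nhdsGT (I := Ico s α) ?_ ((h.strictAntiOn_eta H).mono hsub')
    (fun t ht => ht.2) (fun d hd => ?_) fun t ht => h.eta_pos H (hsub' ht)
  · filter_upwards [Ioc_mem_nhdsGT (h.eta_pos H (hsub' hsmem))] with y hy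
      using ⟨(hS' y hy).1, (hS' y hy).2.1⟩
  · obtain ⟨c, hc, hcα⟩ := exists_between (max_lt hd hs.2)
    exact ⟨c, ⟨(le_max_right _ _).trans hc.le, hcα⟩, (le_max_left _ _).trans_lt hc⟩

theorem exists_kappaCurve (H : Nonlinearity m f β) (h : StartBranch m f r q β α)
    (hs : s ∈ Ioo β α) : ∃ S : ℝ → ℝ, S (eta r q s) = s ∧
      (∀ y ∈ Ioc 0 (eta r q s), S y ∈ Ico s α ∧ eta r q (S y) = y) ∧
      KappaCurve m (fun y => elasticity f (S y)) (fun y => kappa f r (S y)) (eta r q s) := by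
  obtain ⟨S, hSs, hS, hlim⟩ := h.exists_inverse_eta H hs
  have hmem : ∀ y ∈ Ioc 0 (eta r q s), S y ∈ Ico β α := fun y hy =>
    Ico_subset_Ico_left hs.1.le (hS y hy).1
  have hdefect : ∀ y ∈ Ioc 0 (eta r q s),
      defect m f r q (S y) = y - m + kappa f r (S y) / y := fun y hy => by
    rw [defect, (hS y hy).2.1]
  refine ⟨S, hSs, fun y hy => ⟨(hS y hy).1, (hS y hy).2.1⟩, fun y hy => h.kappa_pos H (hmem y hy),
    fun y hy => hdefect y hy ▸ h.defect_pos H (hmem y hy), fun y hy => ?_, ?_⟩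
  · have hD := h.defect_pos H (hmem y hy)
    have hS₀ := H.β_pos.trans_le (hmem y hy).1
    refine ((h.hasDerivAt_kappa H (hmem y hy)).comp y (hS y hy).2.2).congr_deriv ?_
    rw [← hdefect y hy, (hS y hy).2.1]
    field_simp
    ring
  · refine ((h.tendsto_kappa_div_eta H).comp hlim).congr' ?_
    filter_upwards [Ioc_mem_nhdsGT (h.eta_pos H (Ioo_subset_Ico_self hs))] with y hy
    simp only [Function.comp, (hS y hy).2.1]

theorem kappa_le_kappa (H : Nonlinearity m f β) (h₁ : StartBranch m f r₁ q₁ β α₁)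
    (h₂ : StartBranch m f r₂ q₂ β α₂) (hα : α₁ < α₂) (ha : β ≤ a)
    (hη : ∀ s ∈ Ioo a α₁, eta r₁ q₁ s < eta r₂ q₂ s) (hs : s ∈ Ioo a α₁) {t : ℝ}
    (ht : t ∈ Ioo β α₂) (he : eta r₂ q₂ t = eta r₁ q₁ s) : kappa f r₁ s ≤ kappa f r₂ t := by
  have hs' : s ∈ Ioo β α₁ := Ioo_subset_Ioo_left ha hs
  obtain ⟨S₁, hSs, hS₁, hcurve₁⟩ := h₁.exists_kappaCurve H hs'
  obtain ⟨S₂, hSt, hS₂, hcurve₂⟩ := h₂.exists_kappaCurve H ht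
  rw [he] at hSt hS₂ hcurve₂
  have hmem₁ : ∀ y ∈ Ioc 0 (eta r₁ q₁ s), S₁ y ∈ Ico β α₁ := fun y hy =>
    Ico_subset_Ico_left hs'.1.le (hS₁ y hy).1
  have hmem₂ : ∀ y ∈ Ioc 0 (eta r₁ q₁ s), S₂ y ∈ Ico β α₂ := fun y hy =>
    Ico_subset_Ico_left ht.1.le (hS₂ y hy).1
  have hanti := h₂.strictAntiOn_eta H
  have hS_lt : ∀ y ∈ Ioc 0 (eta r₁ q₁ s), S₁ y < S₂ y := by
    intro y hy
    obtain ⟨hm₁, he₁⟩ := hS₁ y hy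
    refine (hanti.lt_iff_gt (hmem₂ y hy) (Ico_subset_Ico_right hα.le (hmem₁ y hy))).1 ?_
    calc eta r₂ q₂ (S₂ y) = eta r₁ q₁ (S₁ y) := by rw [(hS₂ y hy).2, he₁]
      _ < eta r₂ q₂ (S₁ y) := hη _ ⟨hs.1.trans_le hm₁.1, hm₁.2⟩
  have hle := hcurve₁.le hcurve₂ (h₁.eta_pos H (Ioo_subset_Ico_self hs')) H.m_pos
    (fun y hy => H.antitoneOn_elasticity (hmem₁ y hy).1 (hmem₂ y hy).1 (hS_lt y hy).le)
    (fun x hx y hy hxy => H.antitoneOn_elasticity (hmem₂ y hy).1 (hmem₂ x hx).1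
      ((hanti.le_iff_ge (hmem₂ x hx) (hmem₂ y hy)).1
        (by rwa [(hS₂ x hx).2, (hS₂ y hy).2])))
    (fun y hy => H.elasticity_le (hmem₂ y hy).1)
  rwa [hSs, hSt] at hle

theorem kappa_le_kappa_left (H : Nonlinearity m f β) (h₁ : StartBranch m f r₁ q₁ β α₁)
    (h₂ : StartBranch m f r₂ q₂ β α₂) (hα : α₁ < α₂) (ha : a ∈ Ico β α₁)
    (hη : ∀ s ∈ Ioo a α₁, eta r₁ q₁ s < eta r₂ q₂ s) (heq : eta r₁ q₁ a = eta r₂ q₂ a) :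
    kappa f r₁ a ≤ kappa f r₂ a := by
  by_contra! hlt
  have ha₂ : a ∈ Ico β α₂ := Ico_subset_Ico_right hα.le ha
  obtain ⟨c, hc₂, hc₁⟩ := exists_between hlt
  have hev : ∀ᶠ t in 𝓝[>] a, c < kappa f r₁ t ∧ kappa f r₂ t < c :=
    (((h₁.hasDerivAt_kappa H ha).continuousAt.eventually (lt_mem_nhds hc₁)).and
      ((h₂.hasDerivAt_kappa H ha₂).continuousAt.eventually (gt_mem_nhds hc₂))).filter_mono
        nhdsWithin_le_nhds
  obtain ⟨d, had, hd⟩ := mem_nhdsGT_iff_exists_Ioo_subset.1 hev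
  obtain ⟨t, hat, htd⟩ := exists_between (lt_min had ha.2)
  have htα : t < α₁ := htd.trans_le (min_le_right _ _)
  have ht : t ∈ Ico β α₁ := ⟨ha.1.trans hat.le, htα⟩
  have ht₂ : t ∈ Ico β α₂ := Ico_subset_Ico_right hα.le ht
  have hsub : Icc a t ⊆ Ico β α₁ := ordConnected_Ico.out ha ht
  obtain ⟨s, hs, hst⟩ := intermediate_value_Ioo' hat.le
    (HasDerivAt.continuousOn fun x hx => h₁.hasDerivAt_eta H (hsub hx))
    ⟨hη t ⟨hat, htα⟩, (h₂.strictAntiOn_eta H ha₂ ht₂ hat).trans_eq heq.symm⟩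
  have hle := h₁.kappa_le_kappa H h₂ hα ha.1 hη ⟨hs.1, hs.2.trans htα⟩
    ⟨ha.1.trans_lt hat, ht₂.2⟩ hst.symm
  have htd' : t < d := htd.trans_le (min_le_left _ _)
  exact absurd hle ((hd ⟨hat, htd'⟩).2.trans (hd ⟨hs.1, hs.2.trans htd'⟩).1).not_ge

theorem eventually_q_lt (h₁ : StartBranch m f r₁ q₁ β α₁) (h₂ : StartBranch m f r₂ q₂ β α₂)
    (hα : α₁ < α₂) : ∀ᶠ s in 𝓝[<] α₁, q₁ s < q₂ s := by
  have hα₁ : α₁ ∈ Ico β α₂ := ⟨h₁.lt.le, hα⟩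
  exact h₁.tendsto_q.eventually_lt
    ((h₂.branch.hasDerivAt_q α₁ hα₁).continuousAt.tendsto.mono_left nhdsWithin_le_nhds)
    (h₂.branch.q_pos α₁ hα₁)

theorem eta_lt_eta_iff (hs : 0 < s) :
    eta r₁ q₁ s < eta r₂ q₂ s ↔ r₁ s * q₁ s < r₂ s * q₂ s :=
  div_lt_div_iff_of_pos_right hs

theorem mul_ne_mul (hf : Continuous f) (h₁ : StartBranch m f r₁ q₁ β α₁)
    (h₂ : StartBranch m f r₂ q₂ β α₂) (hα : α₁ < α₂) (ha : a ∈ Ico β α₁)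
    (hy : ∀ s ∈ Ioo a α₁, r₁ s * q₁ s < r₂ s * q₂ s) (hr : r₁ a ≤ r₂ a) :
    r₁ a * q₁ a ≠ r₂ a * q₂ a := by
  intro heq
  have hsub : Ico a α₁ ⊆ Ico β α₁ := Ico_subset_Ico_left ha.1
  have hb₁ := h₁.branch.mono hsub
  have hb₂ := h₂.branch.mono (hsub.trans (Ico_subset_Ico_right hα.le))
  have haa : a ∈ Ico a α₁ := left_mem_Ico.2 ha.2
  have hr_lt := hb₁.r_lt_r hb₂ hy hr
  have hq_lt : ∀ t ∈ Ioo a α₁, q₁ t < q₂ t := fun t ht =>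
    have hst : Ico t α₁ ⊆ Ico a α₁ := Ico_subset_Ico_left ht.1.le
    (hb₁.mono hst).q_lt_q (hb₂.mono hst) (h₁.eventually_q_lt h₂ hα)
      (fun x hx _ _ => hr_lt x ⟨ht.1.trans_le hx.1, hx.2⟩) t (left_mem_Ico.2 ht.2)
  have hq : q₁ a ≤ q₂ a := le_of_forall_Ioo_le ha.2 (hb₁.hasDerivAt_q a haa).continuousAt
    (hb₂.hasDerivAt_q a haa).continuousAt fun t ht => (hq_lt t ht).le
  obtain ⟨hra, hqa⟩ := (mul_eq_mul_iff_eq_and_eq_of_pos hr hq (hb₁.r_pos a haa)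
    (hb₂.q_pos a haa)).1 heq
  obtain ⟨c, hac, hcα⟩ := exists_between ha.2
  have hsc : Icc a c ⊆ Ico a α₁ := Icc_subset_Ico_right hcα
  have := (Branch.eq_of_eq_left hf (hb₁.mono hsc) (hb₂.mono hsc) hra hqa c
    (right_mem_Icc.2 hac.le)).2
  exact (hq_lt c ⟨hac, hcα⟩).ne this

theorem eta_lt_eta (H : Nonlinearity m f β) (h₁ : StartBranch m f r₁ q₁ β α₁)
    (h₂ : StartBranch m f r₂ q₂ β α₂) (hα : α₁ < α₂) (hs : s ∈ Ico β α₁) :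
    eta r₁ q₁ s < eta r₂ q₂ s := by
  by_contra! hle
  have hsub : Ico s α₁ ⊆ Ico β α₁ := Ico_subset_Ico_left hs.1
  have hsub₂ : Ico β α₁ ⊆ Ico β α₂ := Ico_subset_Ico_right hα.le
  have hα₁ : α₁ ∈ Ico β α₂ := ⟨h₁.lt.le, hα⟩
  have hev : ∀ᶠ t in 𝓝[<] α₁, eta r₁ q₁ t < eta r₂ q₂ t :=
    (h₁.tendsto_eta H).eventually_lt
      ((h₂.hasDerivAt_eta H hα₁).continuousAt.tendsto.mono_left nhdsWithin_le_nhds)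
      (h₂.eta_pos H hα₁)
  obtain ⟨a, ha, hzero, hpos⟩ := exists_last_zero hs.2
    (HasDerivAt.continuousOn fun t ht =>
      (h₂.hasDerivAt_eta H (hsub₂ (hsub ht))).sub (h₁.hasDerivAt_eta H (hsub ht)))
    (sub_nonpos.2 hle) (hev.mono fun t => sub_pos.2)
  have haβ : a ∈ Ico β α₁ := hsub ha
  have ha₀ : 0 < a := H.β_pos.trans_le haβ.1
  have hη : ∀ t ∈ Ioo a α₁, eta r₁ q₁ t < eta r₂ q₂ t := fun t ht => sub_pos.1 (hpos t ht)
  have heq : eta r₁ q₁ a = eta r₂ q₂ a := (sub_eq_zero.1 hzero).symm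
  have hr : r₁ a ≤ r₂ a := by
    have hκ := h₁.kappa_le_kappa_left H h₂ hα haβ hη heq
    rw [kappa, kappa, div_le_div_iff_of_pos_right ha₀,
      mul_le_mul_iff_left₀ (H.pos a haβ.1)] at hκ
    exact le_of_sq_le_sq hκ (h₂.branch.r_pos a (hsub₂ haβ)).le
  exact h₁.mul_ne_mul H.continuous h₂ hα haβ
    (fun t ht => (eta_lt_eta_iff (ha₀.trans ht.1)).1 (hη t ht)) hr
    ((div_left_inj' ha₀.ne').1 heq)

theorem mul_lt_mul (H : Nonlinearity m f β) (h₁ : StartBranch m f r₁ q₁ β α₁)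
    (h₂ : StartBranch m f r₂ q₂ β α₂) (hα : α₁ < α₂) (hs : s ∈ Ico β α₁) :
    r₁ s * q₁ s < r₂ s * q₂ s :=
  (eta_lt_eta_iff (H.β_pos.trans_le hs.1)).1 (h₁.eta_lt_eta H h₂ hα hs)

theorem log_eta_add_log_kappa (H : Nonlinearity m f β) (h : StartBranch m f r q β α)
    (hs : s ∈ Ico β α) : Real.log (eta r q s) + m / 2 * Real.log (kappa f r s)
      = Real.log (flux m r q s) + (m / 2 * Real.log (f s) - (1 + m / 2) * Real.log s) := by
  have hr := h.branch.r_pos s hs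
  have hq := h.branch.q_pos s hs
  have hs₀ := H.β_pos.trans_le hs.1
  have hfs := H.pos s hs.1
  unfold eta kappa flux
  rw [Real.log_div (by positivity) hs₀.ne', Real.log_mul hr.ne' hq.ne',
    Real.log_div (by positivity) hs₀.ne', Real.log_mul (by positivity) hfs.ne', Real.log_pow,
    Real.log_mul (by positivity) hq.ne', Real.log_pow]
  push_cast
  ring

theorem antitoneOn_log_eta_add_log_kappa (H : Nonlinearity m f β)
    (h : StartBranch m f r q β α) :
    AntitoneOn (fun s => Real.log (eta r q s) + m / 2 * Real.log (kappa f r s)) (Ico β α) := by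
  have hm : (0 : ℝ) < m := Nat.cast_pos.2 H.m_pos
  intro x hx y hy hxy
  have hsub : Icc x y ⊆ Ico β α := ordConnected_Ico.out hx hy
  refine le_of_hasDerivAt_nonpos hxy (fun t ht =>
    ((h.hasDerivAt_eta H (hsub ht)).log (h.eta_pos H (hsub ht)).ne').add
      (((h.hasDerivAt_kappa H (hsub ht)).log (h.kappa_pos H (hsub ht)).ne').const_mul _))
    fun t ht => ?_
  have ht' := hsub (Ioo_subset_Icc_self ht)
  have ht₀ := H.β_pos.trans_le ht'.1
  have hη := h.eta_pos H ht'
  have hκ := h.kappa_pos H ht'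
  have hK : m * (elasticity f t - 1) ≤ 2 := by
    have := (le_div_iff₀ hm).1 (H.elasticity_le ht'.1)
    linarith
  have hderiv : -(defect m f r q t / t) / eta r q t + m / 2 * (kappa f r t / t *
      (elasticity f t - 1 - 2 / eta r q t) / kappa f r t)
      = -(1 / t * (kappa f r t / eta r q t ^ 2 + (2 - m * (elasticity f t - 1)) / 2)) := by
    unfold defect
    field_simp
    ring
  rw [hderiv, neg_nonpos]
  have : 0 ≤ 2 - m * (elasticity f t - 1) := sub_nonneg.2 hK
  positivity

theorem log_flux_le_log_flux (H : Nonlinearity m f β) (h₁ : StartBranch m f r₁ q₁ β α₁)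
    (h₂ : StartBranch m f r₂ q₂ β α₂) (hα : α₁ < α₂) (hs : s ∈ Ioo β α₁) :
    Real.log (flux m r₁ q₁ s) ≤ Real.log (flux m r₂ q₂ s) := by
  have hs₁ : s ∈ Ico β α₁ := Ioo_subset_Ico_self hs
  have hs₂ : s ∈ Ioo β α₂ := Ioo_subset_Ioo_right hα.le hs
  obtain ⟨S, -, hS, -⟩ := h₂.exists_kappaCurve H hs₂
  obtain ⟨ht, hteta⟩ := hS (eta r₁ q₁ s) ⟨h₁.eta_pos H hs₁, (h₁.eta_lt_eta H h₂ hα hs₁).le⟩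
  generalize S (eta r₁ q₁ s) = t at ht hteta
  have hκ : kappa f r₁ s ≤ kappa f r₂ t := h₁.kappa_le_kappa H h₂ hα le_rfl
    (fun x hx => h₁.eta_lt_eta H h₂ hα (Ioo_subset_Ico_self hx)) hs
    ⟨hs.1.trans_le ht.1, ht.2⟩ hteta
  refine (add_le_add_iff_right (m / 2 * Real.log (f s) - (1 + m / 2) * Real.log s)).1 ?_
  rw [← h₁.log_eta_add_log_kappa H hs₁, ← h₂.log_eta_add_log_kappa H (Ioo_subset_Ico_self hs₂)]
  calc Real.log (eta r₁ q₁ s) + m / 2 * Real.log (kappa f r₁ s)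
      ≤ Real.log (eta r₂ q₂ t) + m / 2 * Real.log (kappa f r₂ t) := by
        rw [hteta]
        gcongr
        exact h₁.kappa_pos H hs₁
    _ ≤ Real.log (eta r₂ q₂ s) + m / 2 * Real.log (kappa f r₂ s) :=
        h₂.antitoneOn_log_eta_add_log_kappa H (Ioo_subset_Ico_self hs₂)
          (Ico_subset_Ico_left hs.1.le ht) ht.1

theorem flux_le_flux (H : Nonlinearity m f β) (h₁ : StartBranch m f r₁ q₁ β α₁)
    (h₂ : StartBranch m f r₂ q₂ β α₂) (hα : α₁ < α₂) :
    flux m r₁ q₁ β ≤ flux m r₂ q₂ β := by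
  have hβ₁ : β ∈ Ico β α₁ := left_mem_Ico.2 h₁.lt
  have hβ₂ : β ∈ Ico β α₂ := left_mem_Ico.2 h₂.lt
  exact le_of_forall_Ioo_le h₁.lt (h₁.branch.hasDerivAt_flux hβ₁).continuousAt
    (h₂.branch.hasDerivAt_flux hβ₂).continuousAt fun t ht =>
      (Real.log_le_log_iff (h₁.branch.flux_pos (Ioo_subset_Ico_self ht))
        (h₂.branch.flux_pos ⟨ht.1.le, ht.2.trans hα⟩)).1 (h₁.log_flux_le_log_flux H h₂ hα ht)

theorem q_lt_q (H : Nonlinearity m f β) (h₁ : StartBranch m f r₁ q₁ β α₁)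
    (h₂ : StartBranch m f r₂ q₂ β α₂) (hα : α₁ < α₂) : q₁ β < q₂ β := by
  have hβ₁ : β ∈ Ico β α₁ := left_mem_Ico.2 h₁.lt
  have hb₂ := h₂.branch.mono (Ico_subset_Ico_right hα.le : Ico β α₁ ⊆ Ico β α₂)
  have hy := h₁.mul_lt_mul H h₂ hα hβ₁
  rcases lt_or_ge (r₁ β) (r₂ β) with hr | hr
  · have hr_lt := h₁.branch.r_lt_r hb₂
      (fun t ht => h₁.mul_lt_mul H h₂ hα (Ioo_subset_Ico_self ht)) hr.le
    refine h₁.branch.q_lt_q hb₂ (h₁.eventually_q_lt h₂ hα) (fun x hx _ _ => ?_) β hβ₁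
    rcases hx.1.eq_or_lt with rfl | hβx
    exacts [hr, hr_lt x ⟨hβx, hx.2⟩]
  · exact lt_of_mul_lt_mul_left
      (hy.trans_le (mul_le_mul_of_nonneg_right hr (hb₂.q_pos β hβ₁).le))
      (h₁.branch.r_pos β hβ₁).le

end StartBranch

/-! ### Comparison below `β` -/

theorem sqrt_energy_div_le {f q₁ q₂ : ℝ → ℝ} {s : ℝ} (hF : Fint f s ≤ 0) (hq₁ : 0 < q₁ s)
    (hlt : q₁ s < q₂ s) : √(energy f q₁ s) / q₁ s ≤ √(energy f q₂ s) / q₂ s := by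
  have hq₂ := hq₁.trans hlt
  have heq : ∀ q : ℝ → ℝ, 0 < q s → √(energy f q s) / q s = √(1 + 2 * Fint f s / q s ^ 2) := by
    intro q hq
    rw [div_eq_iff hq.ne', ← Real.sqrt_sq hq.le, ← Real.sqrt_mul' _ (by positivity),
      Real.sqrt_sq hq.le, energy]
    congr 1
    field_simp
  rw [heq q₁ hq₁, heq q₂ hq₂]
  refine Real.sqrt_le_sqrt (add_le_add_right ?_ 1)
  rw [div_le_div_iff₀ (by positivity) (by positivity)]
  exact mul_le_mul_of_nonpos_left (by gcongr) (by linarith)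

namespace Branch

variable {m : ℕ} {f r₁ q₁ r₂ q₂ : ℝ → ℝ} {β a s : ℝ}

theorem sub_le_mul_sqrt_energy_sub (H : Nonlinearity m f β) (ha : -β ≤ a)
    (h₁ : Branch m f 1 r₁ q₁ (Icc a β)) (h₂ : Branch m f 1 r₂ q₂ (Icc a β))
    (he₁ : ∀ s ∈ Icc a β, 0 < energy f q₁ s) (he₂ : ∀ s ∈ Icc a β, 0 < energy f q₂ s)
    (hs : s ∈ Icc a β) (hq : ∀ t ∈ Ioo s β, q₁ t < q₂ t) :
    r₂ β * q₂ β - r₁ β * q₁ β ≤ r₂ s * √(energy f q₂ s) - r₁ s * √(energy f q₁ s) := by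
  have hsub : Icc s β ⊆ Icc a β := Icc_subset_Icc_left hs.1
  have hβ : β ∈ Icc a β := right_mem_Icc.2 (hs.1.trans hs.2)
  have key := le_of_hasDerivAt_nonpos hs.2
    (fun t ht => (h₂.hasDerivAt_mul_sqrt_energy H.continuous (hsub ht) (he₂ t (hsub ht))).sub
      (h₁.hasDerivAt_mul_sqrt_energy H.continuous (hsub ht) (he₁ t (hsub ht)))) (by
    intro t ht
    have ht' : t ∈ Icc a β := hsub (Ioo_subset_Icc_self ht)
    have hle := sqrt_energy_div_le (H.Fint_nonpos_of_mem_Icc ⟨ha.trans ht'.1, ht'.2⟩)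
      (h₁.q_pos t ht') (hq t ht)
    have hinv : q₂ t / √(energy f q₂ t) ≤ q₁ t / √(energy f q₁ t) := by
      simpa only [inv_div] using inv_anti₀
        (div_pos (Real.sqrt_pos.2 (he₁ t ht')) (h₁.q_pos t ht')) hle
    have := mul_le_mul_of_nonneg_left hinv (by positivity : (0 : ℝ) ≤ m + 1)
    linarith)
  simpa only [Pi.sub_apply, sqrt_energy_eq H.Fint_beta (h₁.q_pos β hβ),
    sqrt_energy_eq H.Fint_beta (h₂.q_pos β hβ)] using key

theorem q_lt_q_of_mem_Icc_beta (H : Nonlinearity m f β) (ha : -β ≤ a)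
    (h₁ : Branch m f 1 r₁ q₁ (Icc a β)) (h₂ : Branch m f 1 r₂ q₂ (Icc a β))
    (he₁ : ∀ s ∈ Icc a β, 0 < energy f q₁ s) (he₂ : ∀ s ∈ Icc a β, 0 < energy f q₂ s)
    (hq : q₁ β < q₂ β) (hy : r₁ β * q₁ β < r₂ β * q₂ β) : ∀ s ∈ Icc a β, q₁ s < q₂ s := by
  intro s hs
  have hsub : Ico a β ⊆ Icc a β := Ico_subset_Icc_self
  have hβ : β ∈ Icc a β := right_mem_Icc.2 (hs.1.trans hs.2)
  rcases hs.2.lt_or_eq with hlt | rfl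
  · refine q_lt_q (h₁.mono hsub) (h₂.mono hsub) ?_ (fun t ht heq hlt => ?_) s ⟨hs.1, hlt⟩
    · exact nhdsWithin_le_nhds ((h₁.hasDerivAt_q β hβ).continuousAt.eventually_lt
        (h₂.hasDerivAt_q β hβ).continuousAt hq)
    · have hW := sub_le_mul_sqrt_energy_sub H ha h₁ h₂ he₁ he₂ (hsub ht) hlt
      have henergy : energy f q₁ t = energy f q₂ t := by rw [energy, energy, heq]
      rw [henergy] at hW
      exact lt_of_mul_lt_mul_right (by linarith) (Real.sqrt_nonneg (energy f q₂ t))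
  · exact hq

theorem deriv_pow_mul_sqrt_energy_le (hF : Fint f s ≤ 0) (hr₁ : 0 < r₁ s) (hr₂ : 0 < r₂ s)
    (hq₁ : 0 < q₁ s) (hq : q₁ s < q₂ s) (he : 0 < energy f q₁ s)
    (hpow : r₂ s ^ (m + 1) * √(energy f q₂ s) ≤ r₁ s ^ (m + 1) * √(energy f q₁ s)) :
    (m + 1) * r₂ s ^ m * (-2 * Fint f s) / (q₂ s * √(energy f q₂ s))
      ≤ (m + 1) * r₁ s ^ m * (-2 * Fint f s) / (q₁ s * √(energy f q₁ s)) := by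
  have := Real.sqrt_pos.2 he
  have hlt : √(energy f q₁ s) < √(energy f q₂ s) :=
    Real.sqrt_lt_sqrt he.le (energy_lt_energy hq₁ hq)
  have hr : r₂ s ≤ r₁ s := by
    by_contra! hr
    refine hpow.not_gt ?_
    gcongr
  have hF' : 0 ≤ -2 * Fint f s := by linarith
  have hq₂ := hq₁.trans hq
  gcongr

theorem flux_neg_beta_le (H : Nonlinearity m f β)
    (h₁ : Branch m f 1 r₁ q₁ (Icc (-β) β)) (h₂ : Branch m f 1 r₂ q₂ (Icc (-β) β))
    (he₁ : ∀ s ∈ Icc (-β) β, 0 < energy f q₁ s) (he₂ : ∀ s ∈ Icc (-β) β, 0 < energy f q₂ s)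
    (hq : ∀ s ∈ Icc (-β) β, q₁ s < q₂ s) (hg : flux m r₁ q₁ β ≤ flux m r₂ q₂ β) :
    flux m r₁ q₁ (-β) ≤ flux m r₂ q₂ (-β) := by
  have hββ : -β ≤ β := by linarith [H.β_pos]
  have hl := left_mem_Icc.2 hββ
  have hr := right_mem_Icc.2 hββ
  have hFn : Fint f (-β) = 0 := by rw [Fint_neg H.odd, H.Fint_beta]
  by_contra! hn
  have key := le_of_hasDerivAt_nonneg_of_pos hββ
    (fun t ht => (h₁.hasDerivAt_pow_mul_sqrt_energy H.continuous ht (he₁ t ht)).sub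
      (h₂.hasDerivAt_pow_mul_sqrt_energy H.continuous ht (he₂ t ht)))
    (fun t ht hpos => by
      have ht' := Ioo_subset_Icc_self ht
      simpa only [one_mul] using sub_nonneg.2 (deriv_pow_mul_sqrt_energy_le
        (H.Fint_nonpos_of_mem_Icc ht') (h₁.r_pos t ht') (h₂.r_pos t ht') (h₁.q_pos t ht')
        (hq t ht') (he₁ t ht') (sub_pos.1 hpos).le))
    (by simpa only [Pi.sub_apply, flux, sqrt_energy_eq hFn (h₁.q_pos _ hl),
      sqrt_energy_eq hFn (h₂.q_pos _ hl)] using sub_pos.2 hn)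
  simp only [Pi.sub_apply, sqrt_energy_eq hFn (h₁.q_pos _ hl), sqrt_energy_eq hFn (h₂.q_pos _ hl),
    sqrt_energy_eq H.Fint_beta (h₁.q_pos _ hr), sqrt_energy_eq H.Fint_beta (h₂.q_pos _ hr)] at key
  unfold flux at hn hg
  linarith

end Branch

/-! ### Turning points -/

/-- The radius `r` and slope `q` of a branch that reaches, at radius `T`, a critical point of the
solution with value `M`. -/
structure TurningLimits (r q : ℝ → ℝ) (M T : ℝ) : Prop where
  T_pos : 0 < T
  tendsto_r : Tendsto r (𝓝[<] M) (𝓝 T)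
  tendsto_q : Tendsto q (𝓝[<] M) (𝓝 0)

namespace TurningLimits

variable {m : ℕ} {f r q : ℝ → ℝ} {M T : ℝ}

theorem tendsto_flux (h : TurningLimits r q M T) :
    Tendsto (flux m r q) (𝓝[<] M) (𝓝 0) :=
  mul_zero (T ^ (m + 1)) ▸ (h.tendsto_r.pow (m + 1)).mul h.tendsto_q

theorem tendsto_pohozaev (hf : Continuous f) (h : TurningLimits r q M T) (hM : f M ≠ 0) (σ : ℝ) :
    Tendsto (pohozaev m f σ r q) (𝓝[<] M) (𝓝 (-(2 * (T ^ (m + 2) * Fint f M)))) := by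
  have hF := (hasDerivAt_Fint hf M).continuousAt
  have hFlim : Tendsto (Fint f) (𝓝[<] M) (𝓝 (Fint f M)) := hF.tendsto.mono_left nhdsWithin_le_nhds
  have hquot : Tendsto (fun s => Fint f s / f s) (𝓝[<] M) (𝓝 (Fint f M / f M)) :=
    (hF.div hf.continuousAt hM).tendsto.mono_left nhdsWithin_le_nhds
  have hlim := ((hquot.mul (h.tendsto_flux (m := m))).const_mul (σ * (2 * (m + 2)))).sub
    ((h.tendsto_r.pow (m + 2)).mul ((h.tendsto_q.pow 2).add (hFlim.const_mul 2)))
  convert hlim using 2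
  · rfl
  · ring

theorem tendsto_deriv_sq (hf : Continuous f) (h : TurningLimits r q M T) (m : ℕ) (σ : ℝ) :
    Tendsto (fun s => σ * (2 * (m + 1) * (q s / r s)) - 2 * f s) (𝓝[<] M) (𝓝 (-(2 * f M))) := by
  have := (((h.tendsto_q.div h.tendsto_r h.T_pos.ne').const_mul (2 * ((m : ℝ) + 1))).const_mul
    σ).sub ((hf.continuousAt.tendsto.mono_left nhdsWithin_le_nhds).const_mul 2)
  simpa only [Pi.div_apply, zero_div, mul_zero, zero_sub] using this

end TurningLimits

namespace Branch

variable {m : ℕ} {f r q r₁ q₁ r₂ q₂ : ℝ → ℝ} {β σ s c M M₁ M₂ T T₁ T₂ : ℝ}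

theorem mul_pohozaev_lt (H : Nonlinearity m f β) (h : Branch m f σ r q (Ico β M)) (hσ : σ ≠ 0)
    (l : TurningLimits r q M T) (hs : s ∈ Ico β M) :
    σ * pohozaev m f σ r q s < σ * -(2 * (T ^ (m + 2) * Fint f M)) := by
  have hsub : Ico s M ⊆ Ico β M := Ico_subset_Ico_left hs.1
  refine lt_of_hasDerivAt_pos_of_tendsto (X := fun t => σ * pohozaev m f σ r q t) hs.2
    (fun t ht => (h.hasDerivAt_pohozaev H.continuous (hsub ht)
      (H.differentiableAt t (hsub ht).1) (H.pos t (hsub ht).1).ne').const_mul σ)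
    (fun t ht => ?_)
    ((l.tendsto_pohozaev H.continuous (H.pos M (hs.1.trans hs.2.le)).ne' σ).const_mul σ)
  have ht' := hsub (Ioo_subset_Ico_self ht)
  simp only [← mul_assoc σ σ]
  exact _root_.mul_pos (mul_self_pos.2 hσ)
    (_root_.mul_pos (H.growth_pos ht'.1) (h.flux_pos ht'))

/-! ### The branch ending at the minimum -/

theorem q_lt_q_of_flux_le (hf : ∀ s ∈ Ico β c, 0 < f s) (h₁ : Branch m f (-1) r₁ q₁ (Ico β c))
    (h₂ : Branch m f (-1) r₂ q₂ (Ico β c)) (hq : q₁ β < q₂ β)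
    (hg : flux m r₁ q₁ β ≤ flux m r₂ q₂ β) : ∀ s ∈ Ico β c, q₁ s < q₂ s := by
  intro s hs
  by_contra! hle
  have hsub : Icc β s ⊆ Ico β c := Icc_subset_Ico_right hs.2
  obtain ⟨x, hx, h0, hpos⟩ := exists_first_zero hs.1
    ((h₂.continuousOn_q.sub h₁.continuousOn_q).mono hsub) (sub_pos.2 hq) (sub_nonpos.2 hle)
  have hx' : x ∈ Ico β c := hsub ⟨hx.1.le, hx.2⟩
  have hβ : β ∈ Ico β c := hsub (left_mem_Icc.2 hs.1)
  have hxs : Icc β x ⊆ Ico β c := Icc_subset_Ico_right hx'.2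
  have hqx : q₁ x = q₂ x := (sub_eq_zero.1 h0).symm
  have hratio := lt_of_hasDerivAt_neg hx.1 (fun t ht => h₁.hasDerivAt_flux_div h₂ (hxs ht))
    fun t ht => h₁.deriv_flux_div_neg h₂ (hxs (Ioo_subset_Icc_self ht))
      (hf t (hxs (Ioo_subset_Icc_self ht))) (sub_pos.1 (hpos t (Ioo_subset_Ico_self ht)))
  have hflux : flux m r₁ q₁ x < flux m r₂ q₂ x :=
    (div_lt_one (h₂.flux_pos hx')).1 (hratio.trans_le ((div_le_one (h₂.flux_pos hβ)).2 hg))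
  have hr : r₁ x < r₂ x := by
    unfold flux at hflux
    rw [hqx] at hflux
    exact lt_of_pow_lt_pow_left₀ _ (h₂.r_pos x hx').le
      (lt_of_mul_lt_mul_right hflux (h₂.q_pos x hx').le)
  have hd := deriv_nonpos_of_forall_Ioo_ge hx.1
    ((h₂.hasDerivAt_q x hx').sub (h₁.hasDerivAt_q x hx'))
    fun t ht => h0.trans_le (hpos t (Ioo_subset_Ico_self ht)).le
  rw [hqx] at hd
  have : ((m : ℝ) + 1) / r₂ x < (m + 1) / r₁ x :=
    div_lt_div_of_pos_left (by positivity) (h₁.r_pos x hx') hr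
  linarith

theorem flux_div_lt_one (hf : ∀ s ∈ Ico β c, 0 < f s) (h₁ : Branch m f (-1) r₁ q₁ (Ico β c))
    (h₂ : Branch m f (-1) r₂ q₂ (Ico β c)) (hq : q₁ β < q₂ β)
    (hg : flux m r₁ q₁ β ≤ flux m r₂ q₂ β) (hs : s ∈ Ioo β c) :
    flux m r₁ q₁ s / flux m r₂ q₂ s < 1 := by
  have hsub : Icc β s ⊆ Ico β c := Icc_subset_Ico_right hs.2
  refine (lt_of_hasDerivAt_neg hs.1 (fun t ht => h₁.hasDerivAt_flux_div h₂ (hsub ht))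
    fun t ht => ?_).trans_le
      ((div_le_one (h₂.flux_pos (hsub (left_mem_Icc.2 hs.1.le)))).2 hg)
  have ht' := hsub (Ioo_subset_Icc_self ht)
  exact h₁.deriv_flux_div_neg h₂ ht' (hf t ht') (h₁.q_lt_q_of_flux_le hf h₂ hq hg t ht')

theorem tendsto_q_div_q (hf : Continuous f) (hpos : ∀ s ∈ Ioc β M, 0 < f s) (hM : β < M)
    (h₁ : Branch m f (-1) r₁ q₁ (Ico β M)) (l₁ : TurningLimits r₁ q₁ M T₁)
    (h₂ : Branch m f (-1) r₂ q₂ (Ico β M)) (l₂ : TurningLimits r₂ q₂ M T₂) :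
    Tendsto (fun s => q₁ s / q₂ s) (𝓝[<] M) (𝓝 1) := by
  have hsub : Ioo β M ⊆ Ico β M := Ioo_subset_Ico_self
  have hfM : -(2 * f M) ≠ 0 := (neg_neg_of_pos (by linarith [hpos M ⟨hM, le_rfl⟩])).ne
  have hsq : Tendsto (fun s => q₁ s ^ 2 / q₂ s ^ 2) (𝓝[<] M) (𝓝 1) := by
    refine HasDerivAt.lhopital_zero_left_on_Ioo hM (fun s hs => h₁.hasDerivAt_sq (hsub hs))
      (fun s hs => h₂.hasDerivAt_sq (hsub hs)) (fun s hs => ?_)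
      (by simpa using l₁.tendsto_q.pow 2) (by simpa using l₂.tendsto_q.pow 2) ?_
    · have := h₂.r_pos s (hsub hs)
      have := h₂.q_pos s (hsub hs)
      have := hpos s ⟨hs.1, hs.2.le⟩
      have : 0 ≤ 2 * ((m : ℝ) + 1) * (q₂ s / r₂ s) := by positivity
      linarith
    · have hdiv := (l₁.tendsto_deriv_sq hf m (-1)).div (l₂.tendsto_deriv_sq hf m (-1)) hfM
      rw [div_self hfM] at hdiv
      exact hdiv
  refine (Real.sqrt_one ▸ hsq.sqrt).congr' ?_
  filter_upwards [Ico_mem_nhdsLT hM] with s hs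
  rw [← div_pow, Real.sqrt_sq (div_pos (h₁.q_pos s hs) (h₂.q_pos s hs)).le]

theorem turning_radius_lt (hf : Continuous f) (hpos : ∀ s ∈ Icc β M, 0 < f s) (hM : β < M)
    (h₁ : Branch m f (-1) r₁ q₁ (Ico β M)) (l₁ : TurningLimits r₁ q₁ M T₁)
    (h₂ : Branch m f (-1) r₂ q₂ (Ico β M)) (l₂ : TurningLimits r₂ q₂ M T₂)
    (hq : q₁ β < q₂ β) (hg : flux m r₁ q₁ β ≤ flux m r₂ q₂ β) : T₁ < T₂ := by
  have hpos' : ∀ s ∈ Ico β M, 0 < f s := fun s hs => hpos s (Ico_subset_Icc_self hs)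
  have hlim : Tendsto (fun s => flux m r₁ q₁ s / flux m r₂ q₂ s) (𝓝[<] M)
      (𝓝 ((T₁ / T₂) ^ (m + 1))) := by
    have := ((l₁.tendsto_r.div l₂.tendsto_r l₂.T_pos.ne').pow (m + 1)).mul
      (tendsto_q_div_q hf (fun s hs => hpos s (Ioc_subset_Icc_self hs)) hM h₁ l₁ h₂ l₂)
    rw [mul_one] at this
    refine this.congr fun s => ?_
    simp only [flux, Pi.div_apply, div_pow, div_mul_div_comm]
  have hlt := lt_of_hasDerivAt_neg_of_tendsto hM (fun t ht => h₁.hasDerivAt_flux_div h₂ ht)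
    (fun t ht => h₁.deriv_flux_div_neg h₂ (Ioo_subset_Ico_self ht)
      (hpos' t (Ioo_subset_Ico_self ht))
      (h₁.q_lt_q_of_flux_le hpos' h₂ hq hg t (Ioo_subset_Ico_self ht))) hlim
  have hone := hlt.trans_le ((div_le_one (h₂.flux_pos (left_mem_Ico.2 hM))).2 hg)
  exact (div_lt_one l₂.T_pos).1
    ((pow_lt_one_iff_of_nonneg (div_pos l₁.T_pos l₂.T_pos).le m.succ_ne_zero).1 hone)

theorem turning_value_le (hpos : ∀ s ∈ Ico β M₁, 0 < f s) (hM₂ : β < M₂)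
    (h₁ : Branch m f (-1) r₁ q₁ (Ico β M₁)) (h₂ : Branch m f (-1) r₂ q₂ (Ico β M₂))
    (l₂ : TurningLimits r₂ q₂ M₂ T₂) (hq : q₁ β < q₂ β)
    (hg : flux m r₁ q₁ β ≤ flux m r₂ q₂ β) : M₁ ≤ M₂ := by
  by_contra! hM
  have hsub : Ico β M₂ ⊆ Ico β M₁ := Ico_subset_Ico_right hM.le
  have hlt := (h₁.mono hsub).q_lt_q_of_flux_le (fun s hs => hpos s (hsub hs)) h₂ hq hg
  have hm : M₂ ∈ Ico β M₁ := ⟨hM₂.le, hM⟩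
  refine (h₁.q_pos M₂ hm).not_ge (le_of_tendsto_of_tendsto
    ((h₁.hasDerivAt_q M₂ hm).continuousAt.tendsto.mono_left nhdsWithin_le_nhds) l₂.tendsto_q ?_)
  filter_upwards [Ico_mem_nhdsLT hM₂] with t ht using (hlt t ht).le

theorem turning_value_ne (hf : Continuous f) (hpos : ∀ s ∈ Icc β M₁, 0 < f s) (hM₁ : β < M₁)
    (h₁ : Branch m f (-1) r₁ q₁ (Ico β M₁)) (l₁ : TurningLimits r₁ q₁ M₁ T₁)
    (h₂ : Branch m f (-1) r₂ q₂ (Ico β M₂)) (l₂ : TurningLimits r₂ q₂ M₂ T₂)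
    (hq : q₁ β < q₂ β) (hg : flux m r₁ q₁ β ≤ flux m r₂ q₂ β) : M₁ ≠ M₂ := by
  rintro rfl
  have hT := turning_radius_lt hf hpos hM₁ h₁ l₁ h₂ l₂ hq hg
  have hlt : ∀ᶠ s in 𝓝[<] M₁, r₁ s / r₂ s < q₁ s / q₂ s :=
    (l₁.tendsto_r.div l₂.tendsto_r l₂.T_pos.ne').eventually_lt (tendsto_q_div_q hf
      (fun s hs => hpos s (Ioc_subset_Icc_self hs)) hM₁ h₁ l₁ h₂ l₂) ((div_lt_one l₂.T_pos).2 hT)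
  obtain ⟨d, hd, hsub⟩ := (mem_nhdsLT_iff_exists_Ioo_subset' hM₁).1 hlt
  obtain ⟨x, hx, hxM⟩ := exists_between (max_lt hM₁ hd)
  obtain ⟨hβx, hdx⟩ := max_lt_iff.1 hx
  have hxs : Ico x M₁ ⊆ Ico β M₁ := Ico_subset_Ico_left hβx.le
  have hsq := lt_of_hasDerivAt_pos_of_tendsto hxM
    (fun y hy => (h₂.hasDerivAt_sq (hxs hy)).sub (h₁.hasDerivAt_sq (hxs hy)))
    (fun y hy => by
      have hy' := hxs (Ioo_subset_Ico_self hy)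
      have hquot : q₂ y / r₂ y < q₁ y / r₁ y := by
        have : r₁ y / r₂ y < q₁ y / q₂ y := hsub ⟨hdx.trans hy.1, hy.2⟩
        rw [div_lt_div_iff₀ (h₂.r_pos y hy') (h₂.q_pos y hy')] at this
        rw [div_lt_div_iff₀ (h₂.r_pos y hy') (h₁.r_pos y hy')]
        linarith
      have := mul_lt_mul_of_pos_left hquot (by positivity : (0 : ℝ) < 2 * (m + 1))
      linarith)
    ((l₂.tendsto_q.pow 2).sub (l₁.tendsto_q.pow 2))
  have hx' := hxs (left_mem_Ico.2 hxM)
  have := pow_lt_pow_left₀ (h₁.q_lt_q_of_flux_le (fun s hs => hpos s (Ico_subset_Icc_self hs)) h₂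
    hq hg x hx') (h₁.q_pos x hx').le two_ne_zero
  simp only [Pi.sub_apply] at hsq
  linarith

theorem turning_value_lt (H : Nonlinearity m f β) (hM₁ : β < M₁) (hM₂ : β < M₂)
    (h₁ : Branch m f (-1) r₁ q₁ (Ico β M₁)) (l₁ : TurningLimits r₁ q₁ M₁ T₁)
    (h₂ : Branch m f (-1) r₂ q₂ (Ico β M₂)) (l₂ : TurningLimits r₂ q₂ M₂ T₂)
    (hq : q₁ β < q₂ β) (hg : flux m r₁ q₁ β ≤ flux m r₂ q₂ β) : M₁ < M₂ :=
  (turning_value_le (fun s hs => H.pos s hs.1) hM₂ h₁ h₂ l₂ hq hg).lt_of_ne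
    (turning_value_ne H.continuous (fun s hs => H.pos s hs.1) hM₁ h₁ l₁ h₂ l₂ hq hg)

theorem pohozaev_le_pohozaev (H : Nonlinearity m f β) (h₁ : Branch m f (-1) r₁ q₁ (Ico β M))
    (h₂ : Branch m f (-1) r₂ q₂ (Ico β M)) (hq : q₁ β < q₂ β)
    (hy : r₁ β * q₁ β ≤ r₂ β * q₂ β) (hg : flux m r₁ q₁ β ≤ flux m r₂ q₂ β) (hs : s ∈ Ico β M) :
    pohozaev m f (-1) r₂ q₂ s ≤ pohozaev m f (-1) r₁ q₁ s := by
  have hsub : Icc β s ⊆ Ico β M := Icc_subset_Ico_right hs.2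
  have hβ : β ∈ Ico β M := hsub (left_mem_Icc.2 hs.1)
  have hdiff := le_of_hasDerivAt_nonpos hs.1
    (fun t ht => (h₂.hasDerivAt_pohozaev H.continuous (hsub ht) (H.differentiableAt t ht.1)
      (H.pos t ht.1).ne').sub (h₁.hasDerivAt_pohozaev H.continuous (hsub ht)
      (H.differentiableAt t ht.1) (H.pos t ht.1).ne')) (by
    intro t ht
    have ht' := hsub (Ioo_subset_Icc_self ht)
    have hflux := (div_lt_one (h₂.flux_pos ht')).1
      (h₁.flux_div_lt_one (fun x hx => H.pos x hx.1) h₂ hq hg ⟨ht.1, ht'.2⟩)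
    have := mul_lt_mul_of_pos_left hflux (H.growth_pos ht.1.le)
    linarith)
  have hstart : pohozaev m f (-1) r₂ q₂ β ≤ pohozaev m f (-1) r₁ q₁ β := by
    rw [pohozaev_of_Fint_eq_zero H.Fint_beta, pohozaev_of_Fint_eq_zero H.Fint_beta]
    exact neg_le_neg (mul_le_mul hg hy (h₁.mul_pos hβ).le (h₂.flux_pos hβ).le)
  simp only [Pi.sub_apply] at hdiff
  linarith

theorem turning_potential_le (H : Nonlinearity m f β) (hM₁ : β < M₁) (hM : M₁ < M₂)
    (h₁ : Branch m f (-1) r₁ q₁ (Ico β M₁)) (l₁ : TurningLimits r₁ q₁ M₁ T₁)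
    (h₂ : Branch m f (-1) r₂ q₂ (Ico β M₂)) (l₂ : TurningLimits r₂ q₂ M₂ T₂)
    (hq : q₁ β < q₂ β) (hy : r₁ β * q₁ β ≤ r₂ β * q₂ β)
    (hg : flux m r₁ q₁ β ≤ flux m r₂ q₂ β) :
    T₁ ^ (m + 2) * Fint f M₁ ≤ T₂ ^ (m + 2) * Fint f M₂ := by
  have h₂' := h₂.mono (Ico_subset_Ico_right hM.le : Ico β M₁ ⊆ Ico β M₂)
  have hM₁' : M₁ ∈ Ico β M₂ := ⟨hM₁.le, hM⟩
  have hfM₁ := (H.pos M₁ hM₁.le).ne'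
  have hle : pohozaev m f (-1) r₂ q₂ M₁ ≤ -(2 * (T₁ ^ (m + 2) * Fint f M₁)) := by
    refine le_of_tendsto_of_tendsto ((h₂.hasDerivAt_pohozaev H.continuous hM₁'
      (H.differentiableAt M₁ hM₁.le) hfM₁).continuousAt.tendsto.mono_left nhdsWithin_le_nhds)
      (l₁.tendsto_pohozaev H.continuous hfM₁ (-1)) ?_
    filter_upwards [Ico_mem_nhdsLT hM₁] with t ht
      using h₁.pohozaev_le_pohozaev H h₂' hq hy hg ht
  have := h₂.mul_pohozaev_lt H (by norm_num) l₂ hM₁'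
  linarith

end Branch

/-! ### The branch leaving the minimum -/

namespace Branch

variable {m : ℕ} {f r₁ q₁ r₂ q₂ : ℝ → ℝ} {β s C M₁ M₂ T₁ T₂ : ℝ}

theorem pohozaev_sub_flux_div_mul_pohozaev (hr : 0 < r₂ s) (hq : 0 < q₂ s) :
    pohozaev m f 1 r₁ q₁ s - flux m r₁ q₁ s / flux m r₂ q₂ s * pohozaev m f 1 r₂ q₂ s
      = r₁ s ^ (m + 1) / q₂ s * (q₁ s * r₂ s * energy f q₂ s - q₂ s * r₁ s * energy f q₁ s) := by
  unfold pohozaev flux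
  field_simp
  ring

theorem flux_div_mul_pohozaev_add_lt (H : Nonlinearity m f β) (hM : M₁ < M₂)
    (h₁ : Branch m f 1 r₁ q₁ (Ico β M₁)) (l₁ : TurningLimits r₁ q₁ M₁ T₁)
    (h₂ : Branch m f 1 r₂ q₂ (Ico β M₂)) (hC : C = 2 * (T₁ ^ (m + 2) * Fint f M₁))
    (hneg : ∀ t ∈ Ico β M₁, pohozaev m f 1 r₂ q₂ t + C < 0) (hs : s ∈ Ico β M₁)
    (hq : ∀ t ∈ Ioo s M₁, q₁ t < q₂ t) :
    flux m r₁ q₁ s / flux m r₂ q₂ s * (pohozaev m f 1 r₂ q₂ s + C)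
      < pohozaev m f 1 r₁ q₁ s + C := by
  have hM₁ : M₁ ∈ Ico β M₂ := ⟨hs.1.trans hs.2.le, hM⟩
  have hsub₁ : Ico s M₁ ⊆ Ico β M₁ := Ico_subset_Ico_left hs.1
  have h₂' := h₂.mono (Ico_subset_Ico_right hM.le : Ico β M₁ ⊆ Ico β M₂)
  have hP : ∀ {r q : ℝ → ℝ} {M : ℝ}, Branch m f 1 r q (Ico β M) → ∀ t ∈ Ico β M,
      HasDerivAt (pohozaev m f 1 r q) (1 * (growth m f t * flux m r q t)) t := fun h t ht =>
    h.hasDerivAt_pohozaev H.continuous ht (H.differentiableAt t ht.1) (H.pos t ht.1).ne'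
  have hlim := ((l₁.tendsto_pohozaev (m := m) H.continuous (H.pos M₁ hM₁.1).ne' 1).add_const C).sub
    (((l₁.tendsto_flux (m := m)).div
      ((h₂.hasDerivAt_flux hM₁).continuousAt.tendsto.mono_left nhdsWithin_le_nhds)
      (h₂.flux_pos hM₁).ne').mul
      (((hP h₂ M₁ hM₁).continuousAt.tendsto.mono_left nhdsWithin_le_nhds).add_const C))
  rw [hC, neg_add_cancel, zero_div, zero_mul, sub_zero, ← hC] at hlim
  refine sub_pos.1 (lt_of_hasDerivAt_neg_of_tendsto (X := fun t => pohozaev m f 1 r₁ q₁ t + C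
    - flux m r₁ q₁ t / flux m r₂ q₂ t * (pohozaev m f 1 r₂ q₂ t + C)) hs.2 (fun t ht =>
    ((hP h₁ t (hsub₁ ht)).add_const C).sub ((h₁.hasDerivAt_flux_div h₂' (hsub₁ ht)).mul
      ((hP h₂' t (hsub₁ ht)).add_const C))) (fun t ht => ?_) hlim)
  have ht' := hsub₁ (Ioo_subset_Ico_self ht)
  have hρ := h₁.deriv_flux_div_neg h₂' ht' (H.pos t ht'.1) (hq t ht)
  have hcancel : flux m r₁ q₁ t / flux m r₂ q₂ t * (1 * (growth m f t * flux m r₂ q₂ t))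
      = 1 * (growth m f t * flux m r₁ q₁ t) := by
    have := (h₂'.flux_pos ht').ne'
    field_simp
  have := mul_pos_of_neg_of_neg hρ (hneg t ht')
  rw [hcancel]
  linarith

theorem flux_lt_flux_of_mul_energy_le (H : Nonlinearity m f β) (hM : M₁ < M₂)
    (h₁ : Branch m f 1 r₁ q₁ (Ico β M₁)) (l₁ : TurningLimits r₁ q₁ M₁ T₁)
    (h₂ : Branch m f 1 r₂ q₂ (Ico β M₂)) (l₂ : TurningLimits r₂ q₂ M₂ T₂)
    (hP : T₁ ^ (m + 2) * Fint f M₁ ≤ T₂ ^ (m + 2) * Fint f M₂) (hs : s ∈ Ico β M₁)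
    (hq : ∀ t ∈ Ioo s M₁, q₁ t < q₂ t)
    (he : q₁ s * r₂ s * energy f q₂ s ≤ q₂ s * r₁ s * energy f q₁ s) :
    flux m r₁ q₁ s < flux m r₂ q₂ s := by
  have hs₂ : s ∈ Ico β M₂ := ⟨hs.1, hs.2.trans hM⟩
  have hr₂ := h₂.r_pos s hs₂
  have hq₂ := h₂.q_pos s hs₂
  have hr₁ := h₁.r_pos s hs
  have hC : 0 < 2 * (T₁ ^ (m + 2) * Fint f M₁) := by
    have := H.Fint_pos (hs.1.trans_lt hs.2)
    have := l₁.T_pos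
    positivity
  have hlt := h₁.flux_div_mul_pohozaev_add_lt H hM l₁ h₂ rfl (fun t ht => by
    have := h₂.mul_pohozaev_lt H one_ne_zero l₂ (s := t) ⟨ht.1, ht.2.trans hM⟩
    linarith) hs hq
  have heq := pohozaev_sub_flux_div_mul_pohozaev (m := m) (f := f) (r₁ := r₁) (q₁ := q₁) hr₂ hq₂
  have hle : r₁ s ^ (m + 1) / q₂ s
      * (q₁ s * r₂ s * energy f q₂ s - q₂ s * r₁ s * energy f q₁ s) ≤ 0 :=
    mul_nonpos_of_nonneg_of_nonpos (by positivity) (sub_nonpos.2 he)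
  refine (div_lt_one (h₂.flux_pos hs₂)).1 (lt_of_mul_lt_mul_right ?_ hC.le)
  linarith

theorem q_lt_q_of_turningLimits (H : Nonlinearity m f β) (hM₁ : β < M₁) (hM : M₁ < M₂)
    (h₁ : Branch m f 1 r₁ q₁ (Ico β M₁)) (l₁ : TurningLimits r₁ q₁ M₁ T₁)
    (h₂ : Branch m f 1 r₂ q₂ (Ico β M₂)) (l₂ : TurningLimits r₂ q₂ M₂ T₂)
    (hP : T₁ ^ (m + 2) * Fint f M₁ ≤ T₂ ^ (m + 2) * Fint f M₂) :
    ∀ s ∈ Ico β M₁, q₁ s < q₂ s := by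
  have h₂' := h₂.mono (Ico_subset_Ico_right hM.le : Ico β M₁ ⊆ Ico β M₂)
  have hM₁' : M₁ ∈ Ico β M₂ := ⟨hM₁.le, hM⟩
  refine h₁.q_lt_q h₂' (l₁.tendsto_q.eventually_lt
    ((h₂.hasDerivAt_q M₁ hM₁').continuousAt.tendsto.mono_left nhdsWithin_le_nhds)
    (h₂.q_pos M₁ hM₁')) fun s hs heq hlt => ?_
  by_contra! hr
  have hq₂ := h₂'.q_pos s hs
  have hr₂ := h₂'.r_pos s hs
  have hF := H.Fint_nonneg hs.1
  have henergy : energy f q₁ s = energy f q₂ s := by rw [energy, energy, heq]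
  have hflux := flux_lt_flux_of_mul_energy_le H hM h₁ l₁ h₂ l₂ hP hs hlt (by
    have : 0 ≤ energy f q₂ s := add_nonneg (sq_nonneg _) (by positivity)
    rw [henergy, heq]
    gcongr)
  unfold flux at hflux
  rw [heq] at hflux
  exact hr.not_gt (lt_of_pow_lt_pow_left₀ _ hr₂.le (lt_of_mul_lt_mul_right hflux hq₂.le))

theorem mul_lt_mul_of_turningLimits (H : Nonlinearity m f β) (hM₁ : β < M₁) (hM : M₁ < M₂)
    (h₁ : Branch m f 1 r₁ q₁ (Ico β M₁)) (l₁ : TurningLimits r₁ q₁ M₁ T₁)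
    (h₂ : Branch m f 1 r₂ q₂ (Ico β M₂)) (l₂ : TurningLimits r₂ q₂ M₂ T₂)
    (hP : T₁ ^ (m + 2) * Fint f M₁ ≤ T₂ ^ (m + 2) * Fint f M₂) :
    r₁ β * q₁ β < r₂ β * q₂ β := by
  have hβ₁ : β ∈ Ico β M₁ := left_mem_Ico.2 hM₁
  have hβ₂ : β ∈ Ico β M₂ := left_mem_Ico.2 (hM₁.trans hM)
  have hr₁ := h₁.r_pos β hβ₁
  have hr₂ := h₂.r_pos β hβ₂
  have hq₁ := h₁.q_pos β hβ₁
  have hq₂ := h₂.q_pos β hβ₂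
  have hq := q_lt_q_of_turningLimits H hM₁ hM h₁ l₁ h₂ l₂ hP
  by_contra! hle
  have hr : r₂ β ≤ r₁ β :=
    le_of_mul_le_mul_right ((mul_le_mul_of_nonneg_left (hq β hβ₁).le hr₂.le).trans hle) hq₁
  refine (flux_lt_flux_of_mul_energy_le H hM h₁ l₁ h₂ l₂ hP hβ₁
    (fun t ht => hq t (Ioo_subset_Ico_self ht)) ?_).not_ge ?_
  · simp only [energy, H.Fint_beta]
    calc q₁ β * r₂ β * (q₂ β ^ 2 + 2 * 0)
        = q₁ β * q₂ β * (r₂ β * q₂ β) := by ring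
      _ ≤ q₁ β * q₂ β * (r₁ β * q₁ β) := by gcongr
      _ = q₂ β * r₁ β * (q₁ β ^ 2 + 2 * 0) := by ring
  · unfold flux
    rw [pow_succ, pow_succ, mul_assoc, mul_assoc]
    gcongr

end Branch

/-! ### Comparison of two profiles -/

/-- The two branches of a solution with one sign change: `(r, q)` decreases from the maximum `α` to
the minimum `-M`, reached at radius `T`, and `(rRet, qRet)`, parametrized by `-u`, returns to
`0`. -/
structure Profile (m : ℕ) (f : ℝ → ℝ) (β α : ℝ) where
  r : ℝ → ℝ
  q : ℝ → ℝ
  rRet : ℝ → ℝ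
  qRet : ℝ → ℝ
  M : ℝ
  T : ℝ
  lt_α : β < α
  lt_M : β < M
  branch : Branch m f 1 r q (Ioo (-M) α)
  energy_pos : ∀ s ∈ Ioo (-M) α, 0 < energy f q s
  tendsto_r : Tendsto r (𝓝[<] α) (𝓝 0)
  tendsto_q : Tendsto q (𝓝[<] α) (𝓝 0)
  tendsto_div : Tendsto (fun s => r s * f s / q s) (𝓝[<] α) (𝓝 (m + 2))
  T_pos : 0 < T
  tendsto_r_neg : Tendsto r (𝓝[>] (-M)) (𝓝 T)
  tendsto_q_neg : Tendsto q (𝓝[>] (-M)) (𝓝 0)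
  branchRet : Branch m f 1 rRet qRet (Ioo 0 M)
  energyRet_pos : ∀ s ∈ Ioo 0 M, 0 < energy f qRet s
  turningRet : TurningLimits rRet qRet M T
  decay : ∀ ε > 0, ∃ s ∈ Ioo 0 β, rRet s ^ 2 * energy f qRet s < ε

namespace Profile

variable {m : ℕ} {f : ℝ → ℝ} {β α α₁ α₂ : ℝ}

theorem startBranch (P : Profile m f β α) (hβ : 0 < β) : StartBranch m f P.r P.q β α where
  branch := P.branch.mono fun s hs => ⟨by linarith [hs.1, P.lt_M], hs.2⟩
  lt := P.lt_α
  tendsto_r := P.tendsto_r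
  tendsto_q := P.tendsto_q
  tendsto_div := P.tendsto_div

theorem Icc_subset_Ioo (P : Profile m f β α) : Icc (-β) β ⊆ Ioo (-P.M) α :=
  fun _ hs => ⟨(neg_lt_neg P.lt_M).trans_le hs.1, hs.2.trans_lt P.lt_α⟩

theorem branch_rising (P : Profile m f β α) (hβ : 0 < β) (hodd : ∀ s, f (-s) = -f s) :
    Branch m f (-1) (fun s => P.r (-s)) (fun s => P.q (-s)) (Ico β P.M) := by
  have hmem : ∀ s ∈ Ico β P.M, -s ∈ Ioo (-P.M) α := fun s hs =>
    ⟨neg_lt_neg hs.2, by linarith [hs.1, P.lt_α]⟩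
  refine ⟨fun s hs => P.branch.r_pos _ (hmem s hs), fun s hs => P.branch.q_pos _ (hmem s hs),
    fun s hs => ?_, fun s hs => ?_⟩
  · refine ((P.branch.hasDerivAt_r _ (hmem s hs)).comp s (hasDerivAt_neg s)).congr_deriv ?_
    ring
  · refine ((P.branch.hasDerivAt_q _ (hmem s hs)).comp s (hasDerivAt_neg s)).congr_deriv ?_
    rw [hodd]
    ring

theorem turningLimits_rising (P : Profile m f β α) :
    TurningLimits (fun s => P.r (-s)) (fun s => P.q (-s)) P.M P.T where
  T_pos := P.T_pos
  tendsto_r := P.tendsto_r_neg.comp tendsto_neg_nhdsLT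
  tendsto_q := P.tendsto_q_neg.comp tendsto_neg_nhdsLT

theorem mul_sqrt_energyRet_lt (P : Profile m f β α) {δ : ℝ} (hδ : 0 < δ) :
    ∃ s ∈ Ioo 0 β, P.rRet s * √(energy f P.qRet s) < δ := by
  obtain ⟨s, hs, hlt⟩ := P.decay (δ ^ 2) (by positivity)
  have he := P.energyRet_pos s ⟨hs.1, hs.2.trans P.lt_M⟩
  refine ⟨s, hs, lt_of_pow_lt_pow_left₀ 2 hδ.le ?_⟩
  rwa [mul_pow, Real.sq_sqrt he.le]

theorem q_lt_q_of_mem_Icc (P₁ : Profile m f β α₁) (P₂ : Profile m f β α₂)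
    (H : Nonlinearity m f β) (hα : α₁ < α₂) :
    ∀ s ∈ Icc (-β) β, P₁.q s < P₂.q s := by
  have hs₁ := P₁.startBranch H.β_pos
  have hs₂ := P₂.startBranch H.β_pos
  exact Branch.q_lt_q_of_mem_Icc_beta H le_rfl (P₁.branch.mono P₁.Icc_subset_Ioo)
    (P₂.branch.mono P₂.Icc_subset_Ioo) (fun s hs => P₁.energy_pos s (P₁.Icc_subset_Ioo hs))
    (fun s hs => P₂.energy_pos s (P₂.Icc_subset_Ioo hs)) (hs₁.q_lt_q H hs₂ hα)
    (hs₁.mul_lt_mul H hs₂ hα (left_mem_Ico.2 P₁.lt_α))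

theorem mul_lt_mul_neg_beta (P₁ : Profile m f β α₁) (P₂ : Profile m f β α₂)
    (H : Nonlinearity m f β) (hα : α₁ < α₂) :
    P₁.r (-β) * P₁.q (-β) < P₂.r (-β) * P₂.q (-β) := by
  have hββ : -β ≤ β := by linarith [H.β_pos]
  have hmem := left_mem_Icc.2 hββ
  have hFn : Fint f (-β) = 0 := by rw [Fint_neg H.odd, H.Fint_beta]
  have hle := Branch.sub_le_mul_sqrt_energy_sub H le_rfl (P₁.branch.mono P₁.Icc_subset_Ioo)
    (P₂.branch.mono P₂.Icc_subset_Ioo) (fun s hs => P₁.energy_pos s (P₁.Icc_subset_Ioo hs))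
    (fun s hs => P₂.energy_pos s (P₂.Icc_subset_Ioo hs)) hmem
    fun t ht => q_lt_q_of_mem_Icc P₁ P₂ H hα t (Ioo_subset_Icc_self ht)
  rw [sqrt_energy_eq hFn (P₁.branch.q_pos _ (P₁.Icc_subset_Ioo hmem)),
    sqrt_energy_eq hFn (P₂.branch.q_pos _ (P₂.Icc_subset_Ioo hmem))] at hle
  linarith [(P₁.startBranch H.β_pos).mul_lt_mul H (P₂.startBranch H.β_pos) hα
    (left_mem_Ico.2 P₁.lt_α)]

theorem flux_le_flux_neg_beta (P₁ : Profile m f β α₁) (P₂ : Profile m f β α₂)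
    (H : Nonlinearity m f β) (hα : α₁ < α₂) :
    flux m P₁.r P₁.q (-β) ≤ flux m P₂.r P₂.q (-β) :=
  Branch.flux_neg_beta_le H (P₁.branch.mono P₁.Icc_subset_Ioo) (P₂.branch.mono P₂.Icc_subset_Ioo)
    (fun s hs => P₁.energy_pos s (P₁.Icc_subset_Ioo hs))
    (fun s hs => P₂.energy_pos s (P₂.Icc_subset_Ioo hs)) (q_lt_q_of_mem_Icc P₁ P₂ H hα)
    ((P₁.startBranch H.β_pos).flux_le_flux H (P₂.startBranch H.β_pos) hα)

theorem M_lt_M_and_turning_potential_le (P₁ : Profile m f β α₁) (P₂ : Profile m f β α₂)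
    (H : Nonlinearity m f β) (hα : α₁ < α₂) :
    P₁.M < P₂.M ∧ P₁.T ^ (m + 2) * Fint f P₁.M ≤ P₂.T ^ (m + 2) * Fint f P₂.M := by
  have hβ := left_mem_Icc.2 (show -β ≤ β by linarith [H.β_pos])
  have hq := q_lt_q_of_mem_Icc P₁ P₂ H hα _ hβ
  have hg := flux_le_flux_neg_beta P₁ P₂ H hα
  have h₁ := P₁.branch_rising H.β_pos H.odd
  have h₂ := P₂.branch_rising H.β_pos H.odd
  have hM := Branch.turning_value_lt H P₁.lt_M P₂.lt_M h₁ P₁.turningLimits_rising h₂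
    P₂.turningLimits_rising hq hg
  exact ⟨hM, Branch.turning_potential_le H P₁.lt_M hM h₁ P₁.turningLimits_rising h₂
    P₂.turningLimits_rising hq (mul_lt_mul_neg_beta P₁ P₂ H hα).le hg⟩

theorem sub_le_mul_sqrt_energyRet_sub (P₁ : Profile m f β α₁) (P₂ : Profile m f β α₂)
    (H : Nonlinearity m f β) (hq : P₁.qRet β < P₂.qRet β)
    (hy : P₁.rRet β * P₁.qRet β < P₂.rRet β * P₂.qRet β) {s : ℝ} (hs : s ∈ Ioo 0 β) :
    P₂.rRet β * P₂.qRet β - P₁.rRet β * P₁.qRet β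
      ≤ P₂.rRet s * √(energy f P₂.qRet s) - P₁.rRet s * √(energy f P₁.qRet s) := by
  have hsub : ∀ {M}, β < M → Icc s β ⊆ Ioo 0 M := fun hM t ht =>
    ⟨hs.1.trans_le ht.1, ht.2.trans_lt hM⟩
  have h₁ := P₁.branchRet.mono (hsub P₁.lt_M)
  have h₂ := P₂.branchRet.mono (hsub P₂.lt_M)
  have he₁ := fun t ht => P₁.energyRet_pos t (hsub P₁.lt_M ht)
  have he₂ := fun t ht => P₂.energyRet_pos t (hsub P₂.lt_M ht)
  have hsβ : -β ≤ s := by linarith [hs.1, hs.2]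
  exact Branch.sub_le_mul_sqrt_energy_sub H hsβ h₁ h₂ he₁ he₂ (left_mem_Icc.2 hs.2.le) fun t ht =>
    Branch.q_lt_q_of_mem_Icc_beta H hsβ h₁ h₂ he₁ he₂ hq hy t (Ioo_subset_Icc_self ht)

/-- Past the minimum, `r √(u'² + 2F(u))` of the second profile exceeds that of the first by a fixed
amount, so it cannot decay. -/
theorem not_lt (P₁ : Profile m f β α₁) (P₂ : Profile m f β α₂) (H : Nonlinearity m f β) :
    ¬ α₁ < α₂ := by
  intro hα
  obtain ⟨hM, hP⟩ := M_lt_M_and_turning_potential_le P₁ P₂ H hα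
  have hsub : ∀ M, Ico β M ⊆ Ioo 0 M := fun M s hs => ⟨H.β_pos.trans_le hs.1, hs.2⟩
  have h₁ := P₁.branchRet.mono (hsub _)
  have h₂ := P₂.branchRet.mono (hsub _)
  have hq := Branch.q_lt_q_of_turningLimits H P₁.lt_M hM h₁ P₁.turningRet h₂ P₂.turningRet hP
  have hy := Branch.mul_lt_mul_of_turningLimits H P₁.lt_M hM h₁ P₁.turningRet h₂ P₂.turningRet hP
  obtain ⟨s, hs, hlt⟩ := P₂.mul_sqrt_energyRet_lt (sub_pos.2 hy)
  have hle := sub_le_mul_sqrt_energyRet_sub P₁ P₂ H (hq β (left_mem_Ico.2 P₁.lt_M)) hy hs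
  have := P₁.branchRet.r_pos s ⟨hs.1, hs.2.trans P₁.lt_M⟩
  have : 0 ≤ P₁.rRet s * √(energy f P₁.qRet s) := by positivity
  linarith

end Profile

/-! ### Decaying solutions -/

/-- A decaying solution of the radial equation in dimension `m + 2`. -/
structure DecaySol (m : ℕ) (f u : ℝ → ℝ) : Prop where
  continuousOn : ContinuousOn u (Ici 0)
  hasDerivAt : ∀ r, 0 < r → HasDerivAt u (deriv u r) r
  hasDerivAt_deriv : ∀ r, 0 < r →
    HasDerivAt (deriv u) (-((m + 1) / r * deriv u r) - f (u r)) r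
  tendsto : Tendsto u atTop (𝓝 0)

/-- The energy `u'² + 2 F(u)` as a function of the radius. -/
noncomputable def totalEnergy (f u : ℝ → ℝ) (r : ℝ) : ℝ := deriv u r ^ 2 + 2 * Fint f (u r)

theorem DecaySol.of_boundState {m : ℕ} {f u : ℝ → ℝ} (h : BoundState (m + 2) f u) :
    DecaySol m f u := by
  obtain ⟨hc, hd, he, -, hl⟩ := h
  refine ⟨hc, fun r hr => (hd r hr).1.hasDerivAt, fun r hr => ?_, hl⟩
  refine (hd r hr).2.hasDerivAt.congr_deriv ?_
  have := he r hr
  push_cast at this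
  rw [show ((m : ℝ) + 2 - 1) = m + 1 by ring] at this
  linarith

namespace DecaySol

variable {m : ℕ} {f u : ℝ → ℝ} {β B r s x : ℝ}

theorem neg (hodd : ∀ s, f (-s) = -f s) (h : DecaySol m f u) : DecaySol m f (fun r => -u r) := by
  refine ⟨h.continuousOn.neg, fun r hr => ?_, fun r hr => ?_, by simpa using h.tendsto.neg⟩
  · rw [deriv.fun_neg]
    exact (h.hasDerivAt r hr).neg
  · rw [deriv.fun_neg']
    refine (h.hasDerivAt_deriv r hr).neg.congr_deriv ?_
    rw [hodd]
    ring

theorem continuousAt (h : DecaySol m f u) (hr : 0 < r) : ContinuousAt u r :=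
  (h.hasDerivAt r hr).continuousAt

theorem continuousAt_deriv (h : DecaySol m f u) (hr : 0 < r) : ContinuousAt (deriv u) r :=
  (h.hasDerivAt_deriv r hr).continuousAt

theorem hasDerivAt_flux (h : DecaySol m f u) (hr : 0 < r) :
    HasDerivAt (fun r => r ^ (m + 1) * deriv u r) (-(r ^ (m + 1) * f (u r))) r := by
  refine (((hasDerivAt_id r).pow (m + 1)).mul (h.hasDerivAt_deriv r hr)).congr_deriv ?_
  simp only [Nat.add_sub_cancel, Pi.pow_apply, id]
  push_cast
  field_simp
  ring

theorem tendsto_zero (h : DecaySol m f u) : Tendsto u (𝓝[>] 0) (𝓝 (u 0)) :=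
  (h.continuousOn 0 self_mem_Ici).mono_left (nhdsWithin_mono _ Ioi_subset_Ici_self)

/-! ### The solution near the center -/

theorem flux_sub_pow_le (h : DecaySol m f u) (hx : 0 < x) (hxr : x ≤ r)
    (hB : ∀ t ∈ Ioo x r, -B ≤ f (u t)) :
    r ^ (m + 1) * deriv u r - B / (m + 2) * r ^ (m + 2)
      ≤ x ^ (m + 1) * deriv u x - B / (m + 2) * x ^ (m + 2) := by
  refine le_of_hasDerivAt_nonpos hxr (fun t ht => (h.hasDerivAt_flux (hx.trans_le ht.1)).sub
    ((hasDerivAt_pow (m + 2) t).const_mul (B / (m + 2)))) fun t ht => ?_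
  have ht0 := hx.trans ht.1
  have hpow : B / ((m : ℝ) + 2) * (((m + 2 : ℕ) : ℝ) * t ^ (m + 2 - 1)) = B * t ^ (m + 1) := by
    rw [show m + 2 - 1 = m + 1 from rfl]
    push_cast
    field_simp
  have : t ^ (m + 1) * -B ≤ t ^ (m + 1) * f (u t) := by
    have := hB t ht
    gcongr
  rw [hpow]
  linarith

theorem exists_flux_le (hf : Continuous f) (h : DecaySol m f u) :
    ∃ B, ∀ r ∈ Ioo (0 : ℝ) 1, r ^ (m + 1) * deriv u r ≤ B * r ^ (m + 2) := by
  obtain ⟨B, hB⟩ := (isCompact_Icc (a := (0 : ℝ)) (b := 1)).exists_bound_of_continuousOn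
    (hf.comp_continuousOn (h.continuousOn.mono Icc_subset_Ici_self))
  have hB0 : 0 ≤ B := (norm_nonneg _).trans (hB 0 ⟨le_rfl, zero_le_one⟩)
  refine ⟨B / (m + 2), fun r hr => sub_nonpos.1 ?_⟩
  set c := r ^ (m + 1) * deriv u r - B / (m + 2) * r ^ (m + 2)
  have hflux : ∀ x ∈ Ioo 0 r, c ≤ x ^ (m + 1) * deriv u x := by
    intro x hx
    have hx0 := hx.1
    refine (h.flux_sub_pow_le hx0 hx.2.le fun t ht => ?_).trans (sub_le_self _ (by positivity))
    exact (abs_le.1 (hB t ⟨(hx0.trans ht.1).le, (ht.2.trans hr.2).le⟩)).1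
  by_contra! hc0
  refine hc0.not_ge (nonpos_of_le_mul_deriv hr.1 (fun x hx => h.hasDerivAt x hx.1)
    (fun x hx => ?_) h.tendsto_zero)
  have hx0 := hx.1
  have hd : 0 < deriv u x :=
    (pos_iff_pos_of_mul_pos (hc0.trans_le (hflux x hx))).1 (by positivity)
  refine (hflux x hx).trans ?_
  gcongr
  exact pow_le_of_le_one hx0.le (hx.2.trans hr.2).le (by omega)

theorem tendsto_flux_zero (hf : Continuous f) (hodd : ∀ s, f (-s) = -f s) (h : DecaySol m f u) :
    Tendsto (fun r => r ^ (m + 1) * deriv u r) (𝓝[>] 0) (𝓝 0) := by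
  obtain ⟨B, hB⟩ := h.exists_flux_le hf
  obtain ⟨B', hB'⟩ := (h.neg hodd).exists_flux_le hf
  rw [deriv.fun_neg'] at hB'
  have hpow : Tendsto (fun r : ℝ => r ^ (m + 2)) (𝓝[>] 0) (𝓝 0) := by
    simpa using ((continuous_pow (M := ℝ) (m + 2)).tendsto 0).mono_left nhdsWithin_le_nhds
  refine tendsto_of_tendsto_of_tendsto_of_le_of_le' (g := fun r => -B' * r ^ (m + 2))
    (h := fun r => B * r ^ (m + 2)) ?_ ?_ ?_ ?_
  · simpa using hpow.const_mul (-B')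
  · simpa using hpow.const_mul B
  · filter_upwards [Ioo_mem_nhdsGT one_pos] with r hr
    linarith [hB' r hr]
  · filter_upwards [Ioo_mem_nhdsGT one_pos] with r hr using hB r hr

theorem tendsto_deriv_div (hf : Continuous f) (hodd : ∀ s, f (-s) = -f s) (h : DecaySol m f u) :
    Tendsto (fun r => deriv u r / r) (𝓝[>] 0) (𝓝 (-(f (u 0) / (m + 2)))) := by
  have hpow : Tendsto (fun r : ℝ => r ^ (m + 2)) (𝓝[>] 0) (𝓝 0) := by
    simpa using ((continuous_pow (M := ℝ) (m + 2)).tendsto 0).mono_left nhdsWithin_le_nhds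
  have hfu : Tendsto (fun r => f (u r)) (𝓝[>] 0) (𝓝 (f (u 0))) :=
    (hf.tendsto _).comp h.tendsto_zero
  have hquot : Tendsto (fun r => r ^ (m + 1) * deriv u r / r ^ (m + 2)) (𝓝[>] 0)
      (𝓝 (-(f (u 0) / (m + 2)))) := by
    refine HasDerivAt.lhopital_zero_right_on_Ioo one_pos (fun r hr => h.hasDerivAt_flux hr.1)
      (fun r _ => hasDerivAt_pow (m + 2) r) (fun r hr => ?_) (h.tendsto_flux_zero hf hodd) hpow ?_
    · have := hr.1
      simp only [show m + 2 - 1 = m + 1 from rfl]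
      positivity
    · refine (hfu.div_const ((m : ℝ) + 2)).neg.congr' ?_
      filter_upwards [Ioo_mem_nhdsGT one_pos] with r hr
      have := hr.1
      simp only [show m + 2 - 1 = m + 1 from rfl]
      push_cast
      field_simp
  refine hquot.congr' ?_
  filter_upwards [self_mem_nhdsWithin] with r hr
  have : 0 < r := hr
  field_simp
  ring

theorem tendsto_deriv_zero (hf : Continuous f) (hodd : ∀ s, f (-s) = -f s) (h : DecaySol m f u) :
    Tendsto (deriv u) (𝓝[>] 0) (𝓝 0) := by
  have hid : Tendsto (fun r : ℝ => r) (𝓝[>] 0) (𝓝 0) := tendsto_id.mono_left nhdsWithin_le_nhds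
  have hmul := (h.tendsto_deriv_div hf hodd).mul hid
  rw [mul_zero] at hmul
  refine hmul.congr' ?_
  filter_upwards [self_mem_nhdsWithin] with r hr
  exact div_mul_cancel₀ _ (ne_of_gt hr)

/-! ### The energy of a solution -/

theorem hasDerivAt_totalEnergy (hf : Continuous f) (h : DecaySol m f u) (hr : 0 < r) :
    HasDerivAt (totalEnergy f u) (-(2 * (m + 1) / r * deriv u r ^ 2)) r := by
  refine (((h.hasDerivAt_deriv r hr).pow 2).add
    ((((hasDerivAt_Fint hf (u r)).comp r (h.hasDerivAt r hr))).const_mul 2)).congr_deriv ?_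
  field_simp
  ring

theorem totalEnergy_le_totalEnergy (hf : Continuous f) (h : DecaySol m f u) (hr : 0 < r)
    (hrs : r ≤ s) : totalEnergy f u s ≤ totalEnergy f u r := by
  refine le_of_hasDerivAt_nonpos hrs
    (fun t ht => h.hasDerivAt_totalEnergy hf (hr.trans_le ht.1)) (fun t ht => ?_)
  have : 0 < t := hr.trans ht.1
  exact neg_nonpos.2 (by positivity)

theorem totalEnergy_nonneg (hf : Continuous f) (h : DecaySol m f u) (hr : 0 < r) :
    0 ≤ totalEnergy f u r := by
  have hF : Tendsto (fun s => 2 * Fint f (u s)) atTop (𝓝 (2 * Fint f 0)) :=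
    ((hasDerivAt_Fint hf 0).continuousAt.tendsto.comp h.tendsto).const_mul 2
  rw [Fint_zero, mul_zero] at hF
  refine le_of_tendsto hF ?_
  filter_upwards [eventually_ge_atTop r] with s hs
  exact (le_add_of_nonneg_left (sq_nonneg _)).trans (h.totalEnergy_le_totalEnergy hf hr hs)

theorem eq_zero_of_totalEnergy_eq_zero (hf : Continuous f) (h : DecaySol m f u) (hr : 0 < r)
    (he : totalEnergy f u r = 0) (hs : r ≤ s) : u s = 0 := by
  have hE : ∀ t, r ≤ t → totalEnergy f u t = 0 := fun t ht =>
    le_antisymm (he ▸ h.totalEnergy_le_totalEnergy hf hr ht)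
      (h.totalEnergy_nonneg hf (hr.trans_le ht))
  have hd : ∀ t, r < t → deriv u t = 0 := by
    intro t ht
    have ht0 := hr.trans ht
    have hE' : HasDerivAt (totalEnergy f u) 0 t := by
      refine (hasDerivAt_const t (0 : ℝ)).congr_of_eventuallyEq ?_
      filter_upwards [lt_mem_nhds ht] with x hx using hE x hx.le
    have hzero := hE'.unique (h.hasDerivAt_totalEnergy hf ht0)
    have hne : 2 * ((m : ℝ) + 1) / t ≠ 0 := by positivity
    simpa [hne] using hzero.symm
  have hconst : ∀ t, s ≤ t → u t = u s := by
    intro t ht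
    have hX : ∀ x ∈ Icc s t, HasDerivAt u (deriv u x) x := fun x hx =>
      h.hasDerivAt x (hr.trans_le (hs.trans hx.1))
    exact le_antisymm
      (le_of_hasDerivAt_nonpos ht hX fun x hx => (hd x (hs.trans_lt hx.1)).le)
      (le_of_hasDerivAt_nonneg ht hX fun x hx => (hd x (hs.trans_lt hx.1)).ge)
  refine tendsto_nhds_unique (tendsto_const_nhds.congr' ?_) h.tendsto
  filter_upwards [eventually_ge_atTop s] with t ht using (hconst t ht).symm

theorem totalEnergy_pos (hf : Continuous f) (h : DecaySol m f u) (hr : 0 < r) (hrs : r ≤ s)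
    (hne : u s ≠ 0) : 0 < totalEnergy f u r :=
  (h.totalEnergy_nonneg hf hr).lt_of_ne fun he =>
    hne (h.eq_zero_of_totalEnergy_eq_zero hf hr he.symm hrs)

theorem beta_lt_initial (H : Nonlinearity m f β) (h : DecaySol m f u) (h0 : 0 < u 0) :
    β < u 0 := by
  by_contra! hle
  have hF := H.Fint_nonpos_of_mem_Icc ⟨by linarith [H.β_pos], hle⟩
  have hlim : Tendsto (totalEnergy f u) (𝓝[>] 0) (𝓝 (2 * Fint f (u 0))) := by
    have := ((h.tendsto_deriv_zero H.continuous H.odd).pow 2).add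
      (((hasDerivAt_Fint H.continuous (u 0)).continuousAt.tendsto.comp h.tendsto_zero).const_mul 2)
    rw [zero_pow two_ne_zero, zero_add] at this
    exact this
  have hzero : ∀ r, 0 < r → u r = 0 := by
    intro r hr
    by_contra hne
    have hle : totalEnergy f u r ≤ 2 * Fint f (u 0) := by
      refine ge_of_tendsto hlim ?_
      filter_upwards [Ioo_mem_nhdsGT hr] with s hs
      exact h.totalEnergy_le_totalEnergy H.continuous hs.1 hs.2.le
    linarith [h.totalEnergy_pos H.continuous hr le_rfl hne]
  refine h0.ne' (tendsto_nhds_unique h.tendsto_zero (tendsto_const_nhds.congr' ?_))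
  filter_upwards [self_mem_nhdsWithin] with r hr using (hzero r hr).symm

theorem beta_lt_abs_of_deriv_eq_zero (H : Nonlinearity m f β) (h : DecaySol m f u) (hr : 0 < r)
    (hd : deriv u r = 0) (hne : u r ≠ 0) : β < |u r| := by
  by_contra! hle
  have hE := h.totalEnergy_pos H.continuous hr le_rfl hne
  rw [totalEnergy, hd] at hE
  linarith [H.Fint_nonpos_of_mem_Icc (abs_le.1 hle)]

theorem pow_mul_totalEnergy_le (hf : Continuous f) (h : DecaySol m f u) (hr : 0 < r)
    (hrs : r ≤ s) (hF : ∀ t ∈ Ioo r s, Fint f (u t) ≤ 0) :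
    s ^ (2 * m + 2) * totalEnergy f u s ≤ r ^ (2 * m + 2) * totalEnergy f u r := by
  refine le_of_hasDerivAt_nonpos hrs (fun t ht => (hasDerivAt_pow (2 * m + 2) t).mul
    (h.hasDerivAt_totalEnergy hf (hr.trans_le ht.1))) fun t ht => ?_
  have ht0 := hr.trans ht.1
  have hderiv : ((2 * m + 2 : ℕ) : ℝ) * t ^ (2 * m + 2 - 1) * totalEnergy f u t
      + t ^ (2 * m + 2) * -(2 * ((m : ℝ) + 1) / t * deriv u t ^ 2)
      = 4 * (m + 1) * t ^ (2 * m + 1) * Fint f (u t) := by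
    unfold totalEnergy
    rw [show 2 * m + 2 - 1 = 2 * m + 1 from rfl]
    push_cast
    field_simp
    ring
  rw [hderiv]
  exact mul_nonpos_of_nonneg_of_nonpos (by positivity) (hF t ht)

/-- `r^{2(n-1)} (u'² + 2F)` is eventually decreasing, and `2(n-1) > 2`. -/
theorem tendsto_sq_mul_totalEnergy (H : Nonlinearity m f β) (h : DecaySol m f u) :
    Tendsto (fun r => r ^ 2 * totalEnergy f u r) atTop (𝓝 0) := by
  obtain ⟨R', hR'⟩ := eventually_atTop.1
    (h.tendsto.eventually (Icc_mem_nhds (neg_lt_zero.2 H.β_pos) H.β_pos))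
  set R := max R' 1
  have hR1 : 1 ≤ R := le_max_right _ _
  set K := R ^ (2 * m + 2) * totalEnergy f u R
  have hle : ∀ r, R ≤ r → r ^ (2 * m + 2) * totalEnergy f u r ≤ K := fun r hr =>
    h.pow_mul_totalEnergy_le H.continuous (zero_lt_one.trans_le hR1) hr fun t ht =>
      H.Fint_nonpos_of_mem_Icc (hR' t ((le_max_left _ _).trans ht.1.le))
  have hlim : Tendsto (fun r : ℝ => K / r) atTop (𝓝 0) := tendsto_const_nhds.div_atTop tendsto_id
  have hE : ∀ r, R ≤ r → 0 ≤ totalEnergy f u r := fun r hr =>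
    h.totalEnergy_nonneg H.continuous (by linarith)
  refine tendsto_of_tendsto_of_tendsto_of_le_of_le' tendsto_const_nhds hlim ?_ ?_
  · filter_upwards [eventually_ge_atTop R] with r hr
    have := hE r hr
    positivity
  · filter_upwards [eventually_ge_atTop R] with r hr
    have hr1 : 1 ≤ r := hR1.trans hr
    rw [le_div_iff₀ (by linarith)]
    calc r ^ 2 * totalEnergy f u r * r = r ^ 3 * totalEnergy f u r := by ring
      _ ≤ r ^ (2 * m + 2) * totalEnergy f u r :=
        mul_le_mul_of_nonneg_right
          (pow_le_pow_right₀ hr1 (by have := H.m_pos; omega)) (hE r hr)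
      _ ≤ K := hle r hr

end DecaySol

/-! ### Monotone arcs of a decaying solution -/

/-- On the interval `I` with left endpoint `a`, the solution `v` decreases to its limit `0`, and it
vanishes beyond `I`. This covers both positive decay on `(a, ∞)` and solutions of compact
support. -/
structure TerminalArc (f v : ℝ → ℝ) (a : ℝ) (I : Set ℝ) : Prop where
  isOpen : IsOpen I
  lt : ∀ r ∈ I, a < r
  Ioo_subset : ∀ r ∈ I, Ioo a r ⊆ I
  deriv_neg : ∀ r ∈ I, deriv v r < 0
  pos : ∀ r ∈ I, 0 < v r
  zero : ∀ r, a < r → r ∉ I → v r = 0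
  decay : ∀ ε > 0, ∃ r ∈ I, v r < ε ∧ r ^ 2 * totalEnergy f v r < ε

theorem TerminalArc.ordConnected {f v : ℝ → ℝ} {a : ℝ} {I : Set ℝ} (ht : TerminalArc f v a I) :
    I.OrdConnected :=
  ordConnected_iff.2 fun x hx y hy _ _ hz => hz.2.eq_or_lt.elim (fun h => h ▸ hy) fun h =>
    ht.Ioo_subset y hy ⟨(ht.lt x hx).trans_le hz.1, h⟩

theorem exists_first_zero_of_eventually_neg {g : ℝ → ℝ} {a c : ℝ} (hg : ContinuousOn g (Ioi a))
    (hneg : ∀ᶠ r in 𝓝[>] a, g r < 0) (hac : a < c) (hc : 0 ≤ g c) :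
    ∃ T, a < T ∧ g T = 0 ∧ ∀ r ∈ Ioo a T, g r < 0 := by
  obtain ⟨d, hd, hdneg⟩ := mem_nhdsGT_iff_exists_Ioo_subset.1 hneg
  obtain ⟨e, hae, he⟩ := exists_between (lt_min hd hac)
  obtain ⟨hed, hec⟩ := lt_min_iff.1 he
  obtain ⟨T, hT, hT0, hTneg⟩ := exists_first_zero (h := fun r => -g r) hec.le
    (hg.neg.mono fun s hs => hae.trans_le hs.1) (neg_pos.2 (hdneg ⟨hae, hed⟩)) (neg_nonpos.2 hc)
  refine ⟨T, hae.trans hT.1, neg_eq_zero.1 hT0, fun r hr => ?_⟩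
  rcases lt_or_ge r e with hre | her
  · exact hdneg ⟨hr.1, hre.trans hed⟩
  · exact neg_pos.1 (hTneg r ⟨her, hr.2⟩)

theorem eventually_neg_nhdsGT_of_deriv_neg {g : ℝ → ℝ} {a : ℝ} (h0 : g a = 0)
    (hd : deriv g a < 0) : ∀ᶠ r in 𝓝[>] a, g r < 0 := by
  filter_upwards [nhdsWithin_le_nhds (eventually_nhdsWithin_sign_eq_of_deriv_neg hd h0),
    self_mem_nhdsWithin] with r hr har
  rwa [sign_neg (sub_neg.2 har), sign_eq_neg_one_iff] at hr

theorem signChange_neg {v : ℝ → ℝ} {z : ℝ} (h : SignChange v z) :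
    SignChange (fun r => -v r) z := by
  refine ⟨neg_eq_zero.2 h.1, fun ε hε => ?_⟩
  obtain ⟨⟨x, hx, hvx⟩, y, hy, hvy⟩ := h.2 ε hε
  exact ⟨⟨y, hy, neg_pos.2 hvy⟩, x, hx, neg_neg_of_pos hvx⟩

namespace DecaySol

variable {m : ℕ} {f u v : ℝ → ℝ} {β a b r T : ℝ} {I : Set ℝ}

theorem strictAntiOn_Icc (h : DecaySol m f v) (ha : 0 ≤ a)
    (hneg : ∀ r ∈ Ioo a b, deriv v r < 0) : StrictAntiOn v (Icc a b) := by
  refine strictAntiOn_of_deriv_neg (convex_Icc a b)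
    (h.continuousOn.mono fun s hs => ha.trans hs.1) ?_
  rwa [interior_Icc]

theorem pos_of_forall_deriv_neg (h : DecaySol m f v) (ha : 0 ≤ a)
    (hneg : ∀ r, a < r → deriv v r < 0) (hr : a < r) : 0 < v r := by
  have hanti : ∀ s t, r ≤ s → s < t → v t < v s := fun s t hs hst =>
    h.strictAntiOn_Icc (ha.trans (hr.le.trans hs))
      (fun x hx => hneg x ((hr.trans_le hs).trans hx.1)) ⟨le_rfl, hst.le⟩ ⟨hst.le, le_rfl⟩ hst
  refine (le_of_tendsto h.tendsto ?_).trans_lt (hanti r (r + 1) le_rfl (lt_add_one r))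
  filter_upwards [eventually_gt_atTop (r + 1)] with s hs
  exact (hanti (r + 1) s (lt_add_one r).le hs).le

theorem terminalArc_Ioi (H : Nonlinearity m f β) (h : DecaySol m f v) (ha : 0 ≤ a)
    (hneg : ∀ r, a < r → deriv v r < 0) : TerminalArc f v a (Ioi a) := by
  refine ⟨isOpen_Ioi, fun r hr => hr, fun r _ t ht => ht.1, hneg,
    fun r hr => h.pos_of_forall_deriv_neg ha hneg hr, fun r hr hn => absurd hr hn, fun ε hε => ?_⟩
  obtain ⟨r, hv, hE, hr⟩ := ((h.tendsto.eventually_lt_const hε).and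
    (((h.tendsto_sq_mul_totalEnergy H).eventually_lt_const hε).and (eventually_gt_atTop a))).exists
  exact ⟨r, hr, hv, hE⟩

theorem terminalArc_Ioo (hf : Continuous f) (h : DecaySol m f v) (ha : 0 ≤ a) (haT : a < T)
    (hneg : ∀ r ∈ Ioo a T, deriv v r < 0) (hd : deriv v T = 0) (hv : v T = 0) :
    TerminalArc f v a (Ioo a T) := by
  have hT : 0 < T := ha.trans_lt haT
  have hE : totalEnergy f v T = 0 := by simp [totalEnergy, hd, hv, Fint_zero]
  refine ⟨isOpen_Ioo, fun r hr => hr.1, fun r hr => Ioo_subset_Ioo_right hr.2.le, hneg,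
    fun r hr => hv ▸ h.strictAntiOn_Icc ha hneg ⟨hr.1.le, hr.2.le⟩ ⟨haT.le, le_rfl⟩ hr.2,
    fun r hr hrI => h.eq_zero_of_totalEnergy_eq_zero hf hT hE
      (not_lt.1 fun hlt => hrI ⟨hr, hlt⟩), fun ε hε => ?_⟩
  have hvlim : ∀ᶠ r in 𝓝[<] T, v r < ε :=
    nhdsWithin_le_nhds ((h.continuousAt hT).eventually_lt_const (hv.trans_lt hε))
  have hElim : ∀ᶠ r in 𝓝[<] T, r ^ 2 * totalEnergy f v r < ε :=
    nhdsWithin_le_nhds (((continuousAt_id.pow 2).mul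
      (h.hasDerivAt_totalEnergy hf hT).continuousAt).eventually_lt_const (by simpa [hE]))
  obtain ⟨r, hvr, hEr, hr⟩ := (hvlim.and (hElim.and (Ioo_mem_nhdsLT haT))).exists
  exact ⟨r, hr, hvr, hEr⟩

theorem lt_neg_of_deriv_neg_left (H : Nonlinearity m f β) (h : DecaySol m f v) (ha : 0 ≤ a)
    (haT : a < T) (hneg : ∀ r ∈ Ioo a T, deriv v r < 0) (hd : deriv v T = 0) (hv : v T ≠ 0) :
    v T < -β := by
  have hT : 0 < T := ha.trans_lt haT
  by_contra! hle
  have hβ : β < v T := (lt_abs.1 (h.beta_lt_abs_of_deriv_eq_zero H hT hd hv)).resolve_right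
    fun hlt => by linarith
  have hdd := deriv_nonpos_of_forall_Ioo_ge haT (h.hasDerivAt_deriv T hT).neg
    (fun s hs => by simpa [hd] using (hneg s hs).le)
  rw [hd] at hdd
  linarith [H.pos _ hβ.le]

theorem terminalArc_or_exists_critical (H : Nonlinearity m f β) (h : DecaySol m f v) (ha : 0 ≤ a)
    (hneg : ∀ᶠ r in 𝓝[>] a, deriv v r < 0) :
    (∃ I, TerminalArc f v a I) ∨
      ∃ T, a < T ∧ (∀ r ∈ Ioo a T, deriv v r < 0) ∧ deriv v T = 0 ∧ v T < -β := by
  by_cases! hall : ∀ r, a < r → deriv v r < 0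
  · exact .inl ⟨_, h.terminalArc_Ioi H ha hall⟩
  obtain ⟨c, hac, hc⟩ := hall
  obtain ⟨T, haT, hd, hnegT⟩ := exists_first_zero_of_eventually_neg
    (fun s hs => (h.continuousAt_deriv (ha.trans_lt hs)).continuousWithinAt) hneg hac hc
  by_cases hv : v T = 0
  · exact .inl ⟨_, h.terminalArc_Ioo H.continuous ha haT hnegT hd hv⟩
  · exact .inr ⟨T, haT, hnegT, hd, h.lt_neg_of_deriv_neg_left H ha haT hnegT hd hv⟩

theorem exists_branch (h : DecaySol m f v) (hI : IsOpen I) (hIc : I.OrdConnected)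
    (hpos : ∀ r ∈ I, 0 < r) (hneg : ∀ r ∈ I, deriv v r < 0) :
    ∃ S, Branch m f 1 S (fun y => -deriv v (S y)) (v '' I) ∧ ∀ r ∈ I, S (v r) = r := by
  obtain ⟨S, hS⟩ := exists_inverse hI hIc (fun r hr => h.hasDerivAt r (hpos r hr)) hneg
  refine ⟨S, ⟨forall_mem_image.2 fun r hr => ?_, forall_mem_image.2 fun r hr => ?_,
    forall_mem_image.2 fun r hr => ?_, forall_mem_image.2 fun r hr => ?_⟩, fun r hr => (hS r hr).1⟩
  all_goals
    obtain ⟨hSr, hdS⟩ := hS r hr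
  · exact hSr.symm ▸ hpos r hr
  · simpa only [hSr, neg_pos] using hneg r hr
  · refine hdS.congr_deriv ?_
    rw [hSr, neg_div_neg_eq, one_div]
  · have hr0 : r ≠ 0 := (hpos r hr).ne'
    have hd : deriv v r ≠ 0 := (hneg r hr).ne
    refine (HasDerivAt.comp (v r) (hSr.symm ▸ h.hasDerivAt_deriv r (hpos r hr)) hdS).neg.congr_deriv
      ?_
    rw [hSr]
    field_simp
    ring

theorem energy_eq_totalEnergy {S : ℝ → ℝ} (hS : S (v r) = r) :
    energy f (fun y => -deriv v (S y)) (v r) = totalEnergy f v r := by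
  rw [energy, totalEnergy, hS, neg_sq]

theorem tendsto_mul_div_deriv (hf : Continuous f) (hodd : ∀ s, f (-s) = -f s) (h : DecaySol m f u)
    (h0 : f (u 0) ≠ 0) :
    Tendsto (fun r => r * f (u r) / -deriv u r) (𝓝[>] 0) (𝓝 (m + 2)) := by
  have hlim := ((hf.tendsto _).comp h.tendsto_zero).div (h.tendsto_deriv_div hf hodd).neg
    (by rw [neg_neg]; positivity)
  rw [neg_neg, div_div_cancel₀ h0] at hlim
  refine hlim.congr fun r => ?_
  rw [Pi.div_apply, Function.comp_apply, ← neg_div, div_div_eq_mul_div, mul_comm]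

theorem Ioo_subset_image (h : DecaySol m f v) (ha : 0 ≤ a) (hab : a < b) :
    Ioo (v b) (v a) ⊆ v '' Ioo a b :=
  intermediate_value_Ioo' hab.le (h.continuousOn.mono fun _ hs => ha.trans hs.1)

theorem tendsto_inverse_left (h : DecaySol m f v) {S : ℝ → ℝ} (ha : 0 ≤ a) (hab : a < b)
    (hneg : ∀ r ∈ Ioo a b, deriv v r < 0) (hS : ∀ r ∈ Ioo a b, S (v r) = r) :
    Tendsto S (𝓝[<] (v a)) (𝓝[>] a) := by
  have hanti := h.strictAntiOn_Icc ha hneg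
  refine tendsto_inverse_nhdsLT (I := Ioo a b) ?_ (hanti.mono Ioo_subset_Icc_self)
    (fun r hr => hr.1) (fun d hd => ?_)
    fun c hc => hanti ⟨le_rfl, hab.le⟩ (Ioo_subset_Icc_self hc) hc.1
  · filter_upwards [Ioo_mem_nhdsLT (hanti ⟨le_rfl, hab.le⟩ ⟨hab.le, le_rfl⟩ hab)] with y hy
    obtain ⟨r, hr, rfl⟩ := h.Ioo_subset_image ha hab hy
    rw [hS r hr]
    exact ⟨hr, rfl⟩
  · obtain ⟨c, hac, hc⟩ := exists_between (lt_min hd hab)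
    exact ⟨c, ⟨hac, (lt_min_iff.1 hc).2⟩, (lt_min_iff.1 hc).1⟩

theorem tendsto_inverse_right (h : DecaySol m f v) {S : ℝ → ℝ} (ha : 0 ≤ a) (hab : a < b)
    (hneg : ∀ r ∈ Ioo a b, deriv v r < 0) (hS : ∀ r ∈ Ioo a b, S (v r) = r) :
    Tendsto S (𝓝[>] (v b)) (𝓝[<] b) := by
  have hanti := h.strictAntiOn_Icc ha hneg
  refine tendsto_inverse_nhdsGT (I := Ioo a b) ?_ (hanti.mono Ioo_subset_Icc_self)
    (fun r hr => hr.2) (fun d hd => ?_)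
    fun c hc => hanti (Ioo_subset_Icc_self hc) ⟨hab.le, le_rfl⟩ hc.2
  · filter_upwards [Ioo_mem_nhdsGT (hanti ⟨le_rfl, hab.le⟩ ⟨hab.le, le_rfl⟩ hab)] with y hy
    obtain ⟨r, hr, rfl⟩ := h.Ioo_subset_image ha hab hy
    rw [hS r hr]
    exact ⟨hr, rfl⟩
  · obtain ⟨c, hc, hcb⟩ := exists_between (max_lt hd hab)
    exact ⟨c, ⟨(max_lt_iff.1 hc).2, hcb⟩, (max_lt_iff.1 hc).1⟩

theorem exists_descent (H : Nonlinearity m f β) (h : DecaySol m f u) (hT : 0 < T)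
    (hu0 : 0 < u 0) (huT : u T ≠ 0) (hneg : ∀ r ∈ Ioo 0 T, deriv u r < 0) :
    ∃ S, Branch m f 1 S (fun y => -deriv u (S y)) (Ioo (u T) (u 0)) ∧
      (∀ s ∈ Ioo (u T) (u 0), 0 < energy f (fun y => -deriv u (S y)) s) ∧
      Tendsto S (𝓝[<] (u 0)) (𝓝[>] 0) ∧
      Tendsto (fun s => S s * f s / -deriv u (S s)) (𝓝[<] (u 0)) (𝓝 (m + 2)) ∧
      Tendsto S (𝓝[>] (u T)) (𝓝[<] T) := by
  obtain ⟨S, hS, hSu⟩ := h.exists_branch isOpen_Ioo ordConnected_Ioo (fun r hr => hr.1) hneg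
  have himage := h.Ioo_subset_image le_rfl hT
  have hlim := h.tendsto_inverse_left le_rfl hT hneg hSu
  have hlt : u T < u 0 := h.strictAntiOn_Icc le_rfl hneg ⟨le_rfl, hT.le⟩ ⟨hT.le, le_rfl⟩ hT
  refine ⟨S, hS.mono himage, fun s hs => ?_, hlim, ?_, h.tendsto_inverse_right le_rfl hT hneg hSu⟩
  · obtain ⟨r, hr, rfl⟩ := himage hs
    rw [energy_eq_totalEnergy (hSu r hr)]
    exact h.totalEnergy_pos H.continuous hr.1 hr.2.le huT
  · have hf := (H.pos _ (h.beta_lt_initial H hu0).le).ne'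
    refine ((h.tendsto_mul_div_deriv H.continuous H.odd hf).comp hlim).congr' ?_
    filter_upwards [Ioo_mem_nhdsLT hlt] with s hs
    obtain ⟨r, hr, rfl⟩ := himage hs
    rw [Function.comp_apply, hSu r hr]

theorem exists_return (hf : Continuous f) (h : DecaySol m f v) (hT : 0 < T)
    (ht : TerminalArc f v T I) :
    ∃ S, Branch m f 1 S (fun y => -deriv v (S y)) (Ioo 0 (v T)) ∧
      (∀ s ∈ Ioo 0 (v T), 0 < energy f (fun y => -deriv v (S y)) s) ∧
      Tendsto S (𝓝[<] (v T)) (𝓝[>] T) ∧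
      ∀ ε > 0, ∃ s ∈ Ioo 0 ε, S s ^ 2 * energy f (fun y => -deriv v (S y)) s < ε := by
  obtain ⟨S, hS, hSv⟩ := h.exists_branch ht.isOpen ht.ordConnected
    (fun r hr => hT.trans (ht.lt r hr)) ht.deriv_neg
  have himage : Ioo 0 (v T) ⊆ v '' I := fun y hy => by
    obtain ⟨r, hr, hry, -⟩ := ht.decay y hy.1
    exact image_mono (ht.Ioo_subset r hr) (h.Ioo_subset_image hT.le (ht.lt r hr) ⟨hry, hy.2⟩)
  refine ⟨S, hS.mono himage, fun s hs => ?_, ?_, fun ε hε => ?_⟩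
  · obtain ⟨r, hr, rfl⟩ := himage hs
    rw [energy_eq_totalEnergy (hSv r hr)]
    exact h.totalEnergy_pos hf (hT.trans (ht.lt r hr)) le_rfl hs.1.ne'
  · obtain ⟨r, hr, -⟩ := ht.decay 1 one_pos
    have hsub := ht.Ioo_subset r hr
    exact h.tendsto_inverse_left hT.le (ht.lt r hr) (fun t ht' => ht.deriv_neg t (hsub ht'))
      fun t ht' => hSv t (hsub ht')
  · obtain ⟨r, hr, hvr, hE⟩ := ht.decay ε hε
    refine ⟨v r, ⟨ht.pos r hr, hvr⟩, ?_⟩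
    rwa [energy_eq_totalEnergy (hSv r hr), hSv r hr]

theorem exists_profile_of_terminalArc (H : Nonlinearity m f β) (h : DecaySol m f u)
    (hu0 : 0 < u 0) (hT : 0 < T) (huT : u T < -β) (hneg : ∀ r ∈ Ioo 0 T, deriv u r < 0)
    (hd : deriv u T = 0) (ht : TerminalArc f (fun r => -u r) T I) :
    Nonempty (Profile m f β (u 0)) := by
  have hv := h.neg H.odd
  obtain ⟨S, hS, hE, hlim, hdiv, hlimT⟩ :=
    h.exists_descent H hT hu0 (by linarith [H.β_pos]) hneg
  obtain ⟨R, hR, hER, hlimR, hdecay⟩ := hv.exists_return H.continuous hT ht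
  refine ⟨⟨S, _, R, _, -u T, T, h.beta_lt_initial H hu0, lt_neg_of_lt_neg huT,
    by rwa [neg_neg], by rwa [neg_neg], hlim.mono_right nhdsWithin_le_nhds, ?_, hdiv, hT,
    ?_, ?_, hR, hER, ⟨hT, hlimR.mono_right nhdsWithin_le_nhds, ?_⟩, fun ε hε => ?_⟩⟩
  · simpa using ((h.tendsto_deriv_zero H.continuous H.odd).comp hlim).neg
  · rw [neg_neg]
    exact hlimT.mono_right nhdsWithin_le_nhds
  · rw [neg_neg]
    simpa [hd] using
      ((h.continuousAt_deriv hT).tendsto.comp (hlimT.mono_right nhdsWithin_le_nhds)).neg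
  · simpa [hd, Function.comp_def] using
      (h.continuousAt_deriv hT).tendsto.comp (hlimR.mono_right nhdsWithin_le_nhds)
  · obtain ⟨s, hs, hsE⟩ := hdecay (min ε β) (lt_min hε H.β_pos)
    exact ⟨s, ⟨hs.1, hs.2.trans_le (min_le_right _ _)⟩, hsE.trans_le (min_le_left _ _)⟩

theorem signChange_of_deriv_neg (h : DecaySol m f v) {z : ℝ} (ha : 0 ≤ a) (hz : z ∈ Ioo a b)
    (hz0 : v z = 0) (hneg : ∀ r ∈ Ioo a b, deriv v r < 0) : SignChange v z := by
  have hanti := h.strictAntiOn_Icc ha hneg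
  have hzI := Ioo_subset_Icc_self hz
  refine ⟨hz0, fun ε hε => ⟨?_, ?_⟩⟩
  · obtain ⟨x, hx, hxz⟩ := exists_between (max_lt (sub_lt_self z hε) hz.1)
    obtain ⟨hεx, hax⟩ := max_lt_iff.1 hx
    exact ⟨x, ⟨⟨hεx, hxz.trans (lt_add_of_pos_right z hε)⟩, ha.trans_lt hax⟩,
      hz0 ▸ hanti ⟨hax.le, (hxz.trans hz.2).le⟩ hzI hxz⟩
  · obtain ⟨x, hzx, hx⟩ := exists_between (lt_min (lt_add_of_pos_right z hε) hz.2)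
    obtain ⟨hxε, hxb⟩ := lt_min_iff.1 hx
    exact ⟨x, ⟨⟨(sub_lt_self z hε).trans hzx, hxε⟩, (ha.trans_lt hz.1).trans hzx⟩,
      hz0 ▸ hanti hzI ⟨(hz.1.trans hzx).le, hxb.le⟩ hzx⟩

theorem exists_signChange (h : DecaySol m f v) (ha : 0 ≤ a) (hab : a < b) (hva : 0 < v a)
    (hvb : v b < 0) (hneg : ∀ r ∈ Ioo a b, deriv v r < 0) :
    ∃ z ∈ Ioo a b, SignChange v z := by
  obtain ⟨z, hz, hz0⟩ := h.Ioo_subset_image ha hab ⟨hvb, hva⟩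
  exact ⟨z, hz, h.signChange_of_deriv_neg ha hz hz0 hneg⟩

theorem eventually_deriv_neg_of_initial_pos (H : Nonlinearity m f β) (h : DecaySol m f u)
    (hu0 : 0 < u 0) : ∀ᶠ r in 𝓝[>] 0, deriv u r < 0 := by
  have hf := H.pos _ (h.beta_lt_initial H hu0).le
  have hlim := (h.tendsto_deriv_div H.continuous H.odd).eventually_lt_const
    (neg_neg_of_pos (by positivity : 0 < f (u 0) / ((m : ℝ) + 2)))
  filter_upwards [hlim, self_mem_nhdsWithin] with r hr hr0
  simpa using (div_lt_iff₀ hr0).1 hr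

theorem eventually_deriv_neg_of_deriv_eq_zero (H : Nonlinearity m f β) (h : DecaySol m f v)
    (hT : 0 < T) (hd : deriv v T = 0) (hvT : β < v T) : ∀ᶠ r in 𝓝[>] T, deriv v r < 0 := by
  refine eventually_neg_nhdsGT_of_deriv_neg hd ?_
  rw [(h.hasDerivAt_deriv T hT).deriv, hd]
  linarith [H.pos (v T) hvT.le]

theorem exists_profile (H : Nonlinearity m f β) (h : DecaySol m f u) (hu0 : 0 < u 0)
    (hc : ExactSignChanges u 1) : Nonempty (Profile m f β (u 0)) := by
  have hβ := H.β_pos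
  have hv := h.neg H.odd
  obtain ⟨z, hz⟩ := ncard_eq_one.1 hc.2
  have hzmem : 0 < z ∧ SignChange u z := hz.superset rfl
  have huniq : ∀ x, 0 < x → SignChange u x → x = z := fun x hx hs => hz.subset ⟨hx, hs⟩
  rcases h.terminalArc_or_exists_critical H le_rfl (h.eventually_deriv_neg_of_initial_pos H hu0)
    with ⟨I, hI⟩ | ⟨T, hT, hneg, hd, huT⟩
  · obtain ⟨x, ⟨-, hx⟩, hxneg⟩ := (hzmem.2.2 1 one_pos).2
    by_cases hxI : x ∈ I
    · exact absurd (hI.pos x hxI) hxneg.not_gt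
    · exact absurd (hI.zero x hx hxI) hxneg.ne
  have hvneg := hv.eventually_deriv_neg_of_deriv_eq_zero H hT (by rw [deriv.fun_neg, hd, neg_zero])
    (lt_neg_of_lt_neg huT)
  rcases hv.terminalArc_or_exists_critical H hT.le hvneg with
    ⟨I, hI⟩ | ⟨T', hT', hneg', -, huT'⟩
  · exact h.exists_profile_of_terminalArc H hu0 hT huT hneg hd hI
  obtain ⟨z₁, hz₁, hs₁⟩ := h.exists_signChange le_rfl hT hu0 (by linarith) hneg
  obtain ⟨z₂, hz₂, hs₂⟩ := hv.exists_signChange hT.le hT' (by linarith) (by linarith) hneg'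
  have h₁ := huniq z₁ hz₁.1 hs₁
  have h₂ := huniq z₂ (hT.trans hz₂.1) (by simpa using signChange_neg hs₂)
  linarith [hz₁.2, hz₂.1]

end DecaySol

/-! ### Uniqueness for the initial value problem -/

theorem two_mul_mul_sub_le {w p g q K : ℝ} (hq : 0 ≤ q) (hK : 0 ≤ K) (hg : |g| ≤ K * |w|) :
    2 * w * p + 2 * p * (-(q * p) - g) ≤ (1 + K) * (w ^ 2 + p ^ 2) := by
  have hpg : -(p * g) ≤ K * (|p| * |w|) := calc
    -(p * g) ≤ |p * g| := neg_le_abs _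
    _ = |p| * |g| := abs_mul _ _
    _ ≤ |p| * (K * |w|) := by gcongr
    _ = K * (|p| * |w|) := by ring
  have hpw : 2 * (|p| * |w|) ≤ w ^ 2 + p ^ 2 := by
    have := two_mul_le_add_sq |p| |w|
    rw [sq_abs, sq_abs] at this
    linarith
  have hqp : 0 ≤ q * p ^ 2 := by positivity
  linarith [two_mul_le_add_sq w p, mul_le_mul_of_nonneg_left hpw hK]

theorem eventually_deriv_eq_nhdsGT {u v : ℝ → ℝ} {a : ℝ} (h : ∀ᶠ s in 𝓝[>] a, u s = v s) :
    ∀ᶠ s in 𝓝[>] a, deriv u s = deriv v s := by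
  obtain ⟨b, hab, hb⟩ := mem_nhdsGT_iff_exists_Ioo_subset.1 h
  filter_upwards [Ioo_mem_nhdsGT hab] with s hs
  exact EventuallyEq.deriv_eq (mem_of_superset (Ioo_mem_nhds hs.1 hs.2) hb)

theorem abs_deriv_sq_sub_le {f u v : ℝ → ℝ} {x L : ℝ} (hL : 0 ≤ L)
    (hF : |Fint f (u x) - Fint f (v x)| ≤ L * |u x - v x|) :
    |deriv u x ^ 2 - deriv v x ^ 2|
      ≤ (1 + 2 * L) * ‖(u x - v x, totalEnergy f u x - totalEnergy f v x)‖ := by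
  set X := (u x - v x, totalEnergy f u x - totalEnergy f v x)
  have hw : |u x - v x| ≤ ‖X‖ := norm_fst_le X
  have hE : |totalEnergy f u x - totalEnergy f v x| ≤ ‖X‖ := norm_snd_le X
  calc |deriv u x ^ 2 - deriv v x ^ 2|
      = |totalEnergy f u x - totalEnergy f v x - 2 * (Fint f (u x) - Fint f (v x))| := by
        unfold totalEnergy
        ring_nf
    _ ≤ |totalEnergy f u x - totalEnergy f v x| + 2 * |Fint f (u x) - Fint f (v x)| := by
        refine (abs_sub _ _).trans_eq ?_
        rw [abs_mul, abs_two]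
    _ ≤ ‖X‖ + 2 * (L * ‖X‖) := by grw [hF, hE, hw]
    _ = (1 + 2 * L) * ‖X‖ := by ring

theorem exists_abs_Fint_sub_le {f : ℝ → ℝ} (hf : Continuous f) (c : ℝ) :
    ∃ L, 0 ≤ L ∧ ∃ t ∈ 𝓝 c, ∀ x ∈ t, ∀ y ∈ t, |Fint f x - Fint f y| ≤ L * |x - y| := by
  obtain ⟨L, t, ht, hL⟩ := (hasStrictDerivAt_of_hasDerivAt_of_continuousAt
    (Eventually.of_forall (hasDerivAt_Fint hf))
    hf.continuousAt).hasStrictFDerivAt.exists_lipschitzOnWith (x := c)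
  exact ⟨L, L.2, t, ht, fun x hx y hy => by simpa [Real.dist_eq] using hL.dist_le_mul x hx y hy⟩

namespace DecaySol

variable {m : ℕ} {f u v : ℝ → ℝ} {β a c d R x δ L : ℝ}

theorem eventuallyEq_of_beta_lt (H : Nonlinearity m f β) (hu : DecaySol m f u)
    (hv : DecaySol m f v) (ha : 0 ≤ a) (hc : β < c)
    (huc : Tendsto u (𝓝[>] a) (𝓝 c)) (hvc : Tendsto v (𝓝[>] a) (𝓝 c))
    (hud : Tendsto (deriv u) (𝓝[>] a) (𝓝 d)) (hvd : Tendsto (deriv v) (𝓝[>] a) (𝓝 d)) :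
    ∀ᶠ s in 𝓝[>] a, u s = v s := by
  obtain ⟨K, hK⟩ := H.exists_lipschitzOnWith (c + 1)
  have hmem : Icc β (c + 1) ∈ 𝓝 c := Icc_mem_nhds hc (lt_add_one c)
  obtain ⟨b, hab, hb⟩ := mem_nhdsGT_iff_exists_Ioo_subset.1
    ((huc.eventually hmem).and (hvc.eventually hmem))
  set N : ℝ → ℝ := fun x => (u x - v x) ^ 2 + (deriv u x - deriv v x) ^ 2
  have hN : ∀ x ∈ Ioo a b, HasDerivAt N (2 * (u x - v x) * (deriv u x - deriv v x)
      + 2 * (deriv u x - deriv v x)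
        * (-((m + 1) / x * (deriv u x - deriv v x)) - (f (u x) - f (v x)))) x := by
    intro x hx
    have hx0 := ha.trans_lt hx.1
    refine ((((hu.hasDerivAt x hx0).sub (hv.hasDerivAt x hx0)).pow 2).add
      (((hu.hasDerivAt_deriv x hx0).sub (hv.hasDerivAt_deriv x hx0)).pow 2)).congr_deriv ?_
    simp only [Pi.sub_apply]
    push_cast
    ring
  have hle : ∀ x ∈ Ioo a b, 2 * (u x - v x) * (deriv u x - deriv v x)
      + 2 * (deriv u x - deriv v x)
        * (-((m + 1) / x * (deriv u x - deriv v x)) - (f (u x) - f (v x))) ≤ (1 + K) * N x := by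
    intro x hx
    have hx0 := ha.trans_lt hx.1
    exact two_mul_mul_sub_le (by positivity) K.2
      (by simpa [Real.dist_eq] using hK.dist_le_mul _ (hb hx).1 _ (hb hx).2)
  have hlim : Tendsto N (𝓝[>] a) (𝓝 0) := by
    simpa using ((huc.sub hvc).pow 2).add ((hud.sub hvd).pow 2)
  filter_upwards [Ioo_mem_nhdsGT hab] with s hs
  have hzero := eq_zero_of_deriv_le_mul hN hle (fun x _ => by positivity) hlim s hs
  have hsq := (add_eq_zero_iff_of_nonneg (sq_nonneg _) (sq_nonneg _)).1 hzero
  exact sub_eq_zero.1 (pow_eq_zero_iff two_ne_zero |>.1 hsq.1)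

theorem eventuallyEq_of_beta_lt_abs (H : Nonlinearity m f β) (hu : DecaySol m f u)
    (hv : DecaySol m f v) (ha : 0 ≤ a) (hc : β < |c|)
    (huc : Tendsto u (𝓝[>] a) (𝓝 c)) (hvc : Tendsto v (𝓝[>] a) (𝓝 c))
    (hud : Tendsto (deriv u) (𝓝[>] a) (𝓝 d)) (hvd : Tendsto (deriv v) (𝓝[>] a) (𝓝 d)) :
    ∀ᶠ s in 𝓝[>] a, u s = v s := by
  rcases lt_abs.1 hc with hc | hc
  · exact hu.eventuallyEq_of_beta_lt H hv ha hc huc hvc hud hvd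
  · have := (hu.neg H.odd).eventuallyEq_of_beta_lt (d := -d) H (hv.neg H.odd) ha hc huc.neg hvc.neg
      (by rw [deriv.fun_neg']; exact hud.neg) (by rw [deriv.fun_neg']; exact hvd.neg)
    exact this.mono fun s hs => neg_injective hs

theorem norm_deriv_le (ha : 0 < a) (hax : a ≤ x) (hδ : 0 < δ) (hL : 0 ≤ L)
    (hF : |Fint f (u x) - Fint f (v x)| ≤ L * |u x - v x|)
    (hsum : δ ≤ |deriv u x + deriv v x|) :
    ‖(deriv u x - deriv v x, -(2 * ((m : ℝ) + 1) / x * deriv u x ^ 2)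
        - -(2 * ((m : ℝ) + 1) / x * deriv v x ^ 2))‖
      ≤ max (1 / δ) (2 * (m + 1) / a) * (1 + 2 * L)
        * ‖(u x - v x, totalEnergy f u x - totalEnergy f v x)‖ := by
  rw [mul_assoc]
  set p := deriv u x ^ 2 - deriv v x ^ 2
  have hp := abs_deriv_sq_sub_le hL hF
  refine le_trans ?_ (mul_le_mul_of_nonneg_left hp (le_max_of_le_left (by positivity)))
  refine max_le ?_ ?_
  · have hmul : |deriv u x - deriv v x| * δ ≤ |p| := calc
      |deriv u x - deriv v x| * δ ≤ |deriv u x - deriv v x| * |deriv u x + deriv v x| := by gcongr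
      _ = |p| := by rw [← abs_mul, mul_comm, ← sq_sub_sq]
    calc |deriv u x - deriv v x| ≤ |p| / δ := (le_div_iff₀ hδ).2 hmul
      _ = 1 / δ * |p| := by ring
      _ ≤ max (1 / δ) (2 * (m + 1) / a) * |p| := by gcongr; exact le_max_left _ _
  · have hx := ha.trans_le hax
    calc |-(2 * ((m : ℝ) + 1) / x * deriv u x ^ 2) - -(2 * ((m : ℝ) + 1) / x * deriv v x ^ 2)|
        = |-(2 * ((m : ℝ) + 1) / x) * p| := by congr 1; ring
      _ = 2 * (m + 1) / x * |p| := by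
        rw [abs_mul, abs_neg, abs_of_nonneg (by positivity)]
      _ ≤ 2 * (m + 1) / a * |p| := by gcongr
      _ ≤ max (1 / δ) (2 * (m + 1) / a) * |p| := by gcongr; exact le_max_right _ _

/-- Near a noncritical point the pair `(u, u' ^ 2 + 2 F(u))` solves a system whose right-hand side
is locally Lipschitz although `f` need not be. -/
theorem eventuallyEq_of_deriv_ne_zero (hf : Continuous f) (hu : DecaySol m f u)
    (hv : DecaySol m f v) (ha : 0 < a) (h0 : u a = v a) (h1 : deriv u a = deriv v a)
    (hd : deriv u a ≠ 0) : ∀ᶠ s in 𝓝[>] a, u s = v s := by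
  obtain ⟨L, hL0, t, ht, hL⟩ := exists_abs_Fint_sub_le hf (u a)
  have hlt : |deriv u a| < |deriv u a + deriv v a| := by
    rw [← h1, ← two_mul, abs_mul, abs_two]
    linarith [abs_pos.2 hd]
  have hnear : ∀ᶠ x in 𝓝[≥] a,
      (u x ∈ t ∧ v x ∈ t) ∧ |deriv u a| ≤ |deriv u x + deriv v x| :=
    nhdsWithin_le_nhds <| (((hu.continuousAt ha).eventually ht).and
      ((hv.continuousAt ha).eventually (h0 ▸ ht))).and
      ((((hu.continuousAt_deriv ha).add (hv.continuousAt_deriv ha)).abs.eventually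
        (lt_mem_nhds hlt)).mono fun _ => le_of_lt)
  obtain ⟨b, hab, hb⟩ := mem_nhdsGE_iff_exists_Icc_subset.1 hnear
  set X : ℝ → ℝ × ℝ := fun x => (u x - v x, totalEnergy f u x - totalEnergy f v x)
  have hX : ∀ x, a ≤ x → HasDerivAt X (deriv u x - deriv v x,
      -(2 * ((m : ℝ) + 1) / x * deriv u x ^ 2) - -(2 * ((m : ℝ) + 1) / x * deriv v x ^ 2)) x :=
    fun x hx => have hx0 := ha.trans_le hx
      ((hu.hasDerivAt x hx0).sub (hv.hasDerivAt x hx0)).prodMk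
        ((hu.hasDerivAt_totalEnergy hf hx0).sub (hv.hasDerivAt_totalEnergy hf hx0))
  have hXa : X a = 0 := by simp [X, totalEnergy, h0, h1]
  have hzero := eq_zero_of_abs_deriv_le_mul_abs_self_of_eq_zero_right (f := X) (b := b)
    (fun x hx => (hX x hx.1).continuousAt.continuousWithinAt)
    (fun x hx => (hX x hx.1).hasDerivWithinAt) hXa fun x hx =>
      have hbx := hb (Ico_subset_Icc_self hx)
      norm_deriv_le ha hx.1 (abs_pos.2 hd) hL0 (hL _ hbx.1.1 _ hbx.1.2) hbx.2
  filter_upwards [Ioo_mem_nhdsGT hab] with s hs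
  exact sub_eq_zero.1 (congr_arg Prod.fst (hzero s (Ioo_subset_Icc_self hs)))

theorem eventuallyEq_of_eq (H : Nonlinearity m f β) (hu : DecaySol m f u) (hv : DecaySol m f v)
    (ha : 0 < a) (h0 : u a = v a) (h1 : deriv u a = deriv v a) :
    ∀ᶠ s in 𝓝[>] a, u s = v s := by
  by_cases hd : deriv u a = 0
  · by_cases hc : u a = 0
    · have hEu : totalEnergy f u a = 0 := by simp [totalEnergy, hd, hc, Fint_zero]
      have hEv : totalEnergy f v a = 0 := by simp [totalEnergy, ← h1, hd, ← h0, hc, Fint_zero]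
      filter_upwards [self_mem_nhdsWithin] with s hs
      rw [hu.eq_zero_of_totalEnergy_eq_zero H.continuous ha hEu (le_of_lt hs),
        hv.eq_zero_of_totalEnergy_eq_zero H.continuous ha hEv (le_of_lt hs)]
    · exact hu.eventuallyEq_of_beta_lt_abs H hv ha.le (hu.beta_lt_abs_of_deriv_eq_zero H ha hd hc)
        ((hu.continuousAt ha).mono_left nhdsWithin_le_nhds)
        (h0 ▸ (hv.continuousAt ha).mono_left nhdsWithin_le_nhds)
        ((hu.continuousAt_deriv ha).mono_left nhdsWithin_le_nhds)
        (h1 ▸ (hv.continuousAt_deriv ha).mono_left nhdsWithin_le_nhds)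
  · exact hu.eventuallyEq_of_deriv_ne_zero H.continuous hv ha h0 h1 hd

theorem eqOn_Icc_of_eq (H : Nonlinearity m f β) (hu : DecaySol m f u) (hv : DecaySol m f v)
    (ha : 0 < a) (h0 : u a = v a) (h1 : deriv u a = deriv v a) : EqOn u v (Icc a R) := by
  set S : Set ℝ := {r | (u r, deriv u r) = (v r, deriv v r)}
  have hcont : ∀ {w}, DecaySol m f w → ContinuousOn (fun r => (w r, deriv w r)) (Icc a R) :=
    fun hw r hr => have hr0 := ha.trans_le hr.1
      ((hw.continuousAt hr0).prodMk (hw.continuousAt_deriv hr0)).continuousWithinAt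
  have hclosed : IsClosed (S ∩ Icc a R) := by
    rw [inter_comm]
    exact isClosed_Icc.isClosed_eq (hcont hu) (hcont hv)
  have hS : Icc a R ⊆ S := by
    refine hclosed.Icc_subset_of_forall_mem_nhdsWithin (Prod.ext h0 h1) fun x hx => ?_
    obtain ⟨hx0, hx1⟩ := Prod.mk.inj hx.1
    have heq := hu.eventuallyEq_of_eq H hv (ha.trans_le hx.2.1) hx0 hx1
    filter_upwards [heq, eventually_deriv_eq_nhdsGT heq] with s h0 h1 using Prod.ext h0 h1
  exact fun r hr => congr_arg Prod.fst (hS hr)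

theorem eqOn_of_initial_eq (H : Nonlinearity m f β) (hu : DecaySol m f u) (hv : DecaySol m f v)
    (hpos : 0 < u 0) (h0 : u 0 = v 0) : EqOn u v (Ici 0) := by
  have heq := hu.eventuallyEq_of_beta_lt H hv le_rfl (hu.beta_lt_initial H hpos) hu.tendsto_zero
    (h0 ▸ hv.tendsto_zero) (hu.tendsto_deriv_zero H.continuous H.odd)
    (hv.tendsto_deriv_zero H.continuous H.odd)
  intro r hr
  rcases (mem_Ici.1 hr).eq_or_lt with rfl | hr
  · exact h0
  obtain ⟨a, ⟨hav, had⟩, ha, har⟩ :=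
    ((heq.and (eventually_deriv_eq_nhdsGT heq)).and (Ioo_mem_nhdsGT hr)).exists
  exact hu.eqOn_Icc_of_eq H hv ha hav had ⟨har.le, le_rfl⟩

end DecaySol

end RadialODE

theorem uniqueness_second_bound_state'_general {m : ℕ} {f u₁ u₂ : ℝ → ℝ} {β : ℝ}
    (H : RadialODE.Nonlinearity m f β) (hs₁ : RadialODE.DecaySol m f u₁)
    (hs₂ : RadialODE.DecaySol m f u₂) (hp₁ : 0 < u₁ 0) (hp₂ : 0 < u₂ 0)
    (hc₁ : ExactSignChanges u₁ 1) (hc₂ : ExactSignChanges u₂ 1) :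
    u₁ 0 = u₂ 0 ∧ EqOn u₁ u₂ (Ici 0) := by
  obtain ⟨P₁⟩ := hs₁.exists_profile H hp₁ hc₁
  obtain ⟨P₂⟩ := hs₂.exists_profile H hp₂ hc₂
  have h0 : u₁ 0 = u₂ 0 :=
    le_antisymm (not_lt.1 (P₂.not_lt P₁ H)) (not_lt.1 (P₁.not_lt P₂ H))
  exact ⟨h0, hs₁.eqOn_of_initial_eq H hs₂ hp₁ h0⟩

/-- **Theorem 1.2 (second part).** For `n > 2`, under (f1), (f2), (f5), (f6), problem (P)
has at most one solution with `u 0 > 0` having exactly one sign change in `(0,∞)`. -/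
theorem uniqueness_second_bound_state'
    (n : ℕ) (hn : 2 < n)
    (f : ℝ → ℝ) (b β : ℝ) (hf : Continuous f)
    (h1 : Hf1 f b β) (h2 : Hf2 f) (h5 : Hf5 f β) (h6 : Hf6 n f β)
    (u₁ u₂ : ℝ → ℝ) (hs₁ : BoundState n f u₁) (hs₂ : BoundState n f u₂)
    (hp₁ : 0 < u₁ 0) (hp₂ : 0 < u₂ 0)
    (hc₁ : ExactSignChanges u₁ 1) (hc₂ : ExactSignChanges u₂ 1) :
    u₁ 0 = u₂ 0 ∧ EqOn u₁ u₂ (Ici 0) := by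
  obtain ⟨m, rfl⟩ := Nat.exists_eq_add_of_le' hn.le
  exact uniqueness_second_bound_state'_general
    (RadialODE.Nonlinearity.of_hypotheses (by omega) hf h1 h2 h5 h6)
    (RadialODE.DecaySol.of_boundState hs₁) (RadialODE.DecaySol.of_boundState hs₂) hp₁ hp₂ hc₁ hc₂
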